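/- arXiv:1307.7672 — 10 statements merged into one kernel-verified Lean document; each statement's English description precedes it below -/
import Mathlib

section
/- Let A be a finite-dimensional solvable (left) Leibniz algebra over an algebraically closed field of characteristic zero, and let M be a nonzero finite-dimensional irreducible A-module. Then dim(M) = 1. -/
/-- Span of all brackets `[u, v]` with `u ∈ p`, `v ∈ q`. -/
def bracketSpan {K A : Type*} [Field K] [AddCommGroup A] [Module K A]
    (br : A →ₗ[K] A →ₗ[K] A) (p q : Submodule K A) : Submodule K A :=
  Submodule.span K {x | ∃ a ∈ p, ∃ b ∈ q, br a b = x}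

/-- Derived series: `derSeries br 0 = A` and
`derSeries br (n+1) = [derSeries br n, derSeries br n]`; so `derSeries br n = A^(n+1)`.
The algebra is solvable iff some term vanishes. -/
def derSeries {K A : Type*} [Field K] [AddCommGroup A] [Module K A]
    (br : A →ₗ[K] A →ₗ[K] A) : ℕ → Submodule K A
  | 0 => ⊤
  | n + 1 => bracketSpan br (derSeries br n) (derSeries br n)

/-- Lower central series: `lcs br 0 = A` and `lcs br (n+1) = [A, lcs br n]`;
so `lcs br n = A^(n+1)`.  The algebra is nilpotent iff some term vanishes. -/
def lcs {K A : Type*} [Field K] [AddCommGroup A] [Module K A]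
    (br : A →ₗ[K] A →ₗ[K] A) : ℕ → Submodule K A
  | 0 => ⊤
  | n + 1 => bracketSpan br ⊤ (lcs br n)

/-- a nonzero irreducible module over a finite-dimensional solvable
(left) Leibniz algebra over an algebraically closed field of characteristic zero
is one-dimensional. -/
theorem solvable_leibniz_irreducible_module_dim_one
    {K A M : Type*} [Field K] [IsAlgClosed K] [CharZero K]
    [AddCommGroup A] [Module K A] [FiniteDimensional K A]
    [AddCommGroup M] [Module K M] [FiniteDimensional K M] [Nontrivial M]
    (br : A →ₗ[K] A →ₗ[K] A)
    (leibniz : ∀ a b c : A, br a (br b c) = br (br a b) c + br b (br a c))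
    (hsolv : ∃ m : ℕ, derSeries br m = ⊥)
    (T S : A →ₗ[K] Module.End K M)
    (hTT : ∀ (a b : A) (m : M), T a (T b m) = T (br a b) m + T b (T a m))
    (hTS : ∀ (a b : A) (m : M), T a (S b m) = S b (T a m) + S (br a b) m)
    (hST : ∀ (a b : A) (m : M), S (br a b) m = S b (S a m) + T a (S b m))
    (hirr : ∀ N : Submodule K M,
      (∀ (a : A), ∀ m ∈ N, T a m ∈ N ∧ S a m ∈ N) → N = ⊥ ∨ N = ⊤)
 :
    Module.finrank K M = 1 := by
  classical
  letI : LieRing (Module.End K M) := LieRing.ofAssociativeRing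
  have hN : ∀ N : Submodule K M, (∀ (a : A), ∀ m ∈ N, T a m ∈ N) → N = ⊥ ∨ N = ⊤ := by
    let N₀ : Submodule K M := ⨅ b, LinearMap.ker (S b)
    have hmem : ∀ m, m ∈ N₀ ↔ ∀ b, S b m = 0 := by
      intro m; simp [N₀, Submodule.mem_iInf]
    have h0 := hirr N₀ (by
      intro a m hm
      rw [hmem] at hm
      constructor
      · rw [hmem]
        intro b
        have h := hTS a b m
        rw [hm b, hm (br a b), map_zero, add_zero] at h
        exact h.symm
      · rw [hm a]; exact N₀.zero_mem)
    have hS : (∀ a m, S a m = 0) ∨ (∀ a m, S a m = - T a m) := by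
      rcases h0 with h0 | h0
      · right
        intro a m
        have : S a m + T a m ∈ N₀ := by
          rw [hmem]
          intro b
          have h1 := hTS a b m
          have h2 := hST a b m
          rw [map_add]
          rw [h2] at h1
          have h3 : T a (S b m) + 0 = T a (S b m) + (S b (S a m) + S b (T a m)) := by
            rw [add_zero]; nth_rewrite 1 [h1]; abel
          exact (add_left_cancel h3).symm
        rw [h0, Submodule.mem_bot] at this
        exact eq_neg_of_add_eq_zero_left this
      · left
        intro a m
        have : m ∈ N₀ := by rw [h0]; trivial
        exact (hmem m).1 this a
    intro N h
    apply hirr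
    intro a m hm
    refine ⟨h a m hm, ?_⟩
    rcases hS with hS | hS
    · rw [hS]; exact N.zero_mem
    · rw [hS]; exact N.neg_mem (h a m hm)
  have hbr : ∀ a b, ⁅T a, T b⁆ = T (br a b) := by
    intro a b
    ext m
    rw [Ring.lie_def]
    simp only [LinearMap.sub_apply, Module.End.mul_apply]
    rw [hTT a b m]; abel
  let L : LieSubalgebra K (Module.End K M) :=
    { LinearMap.range T with
      lie_mem' := by
        rintro _ _ ⟨a, rfl⟩ ⟨b, rfl⟩
        exact ⟨br a b, (hbr a b).symm⟩ }
  have hder : ∀ n, ∀ x ∈ LieAlgebra.derivedSeries K L n,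
      (x : Module.End K M) ∈ (derSeries br n).map T := by
    intro n
    induction n with
    | zero =>
      rintro ⟨_, a, rfl⟩ -
      exact ⟨a, trivial, rfl⟩
    | succ n ih =>
      intro x hx
      rw [LieAlgebra.derivedSeries_def, LieAlgebra.derivedSeriesOfIdeal_succ,
        ← LieSubmodule.mem_toSubmodule, LieSubmodule.lieIdeal_oper_eq_linear_span'] at hx
      induction hx using Submodule.span_induction with
      | mem x hx =>
        obtain ⟨y, hy, z, hz, rfl⟩ := hx
        obtain ⟨a, ha, hya⟩ := ih y hy
        obtain ⟨b, hb, hzb⟩ := ih z hz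
        refine ⟨br a b, Submodule.subset_span ⟨a, ha, b, hb, rfl⟩, ?_⟩
        rw [LieSubalgebra.coe_bracket, ← hya, ← hzb, hbr]
      | zero => exact Submodule.zero_mem _
      | add x y _ _ hx hy => exact Submodule.add_mem _ hx hy
      | smul c x _ hx => exact Submodule.smul_mem _ c hx
  have hsol : LieAlgebra.IsSolvable L := by
    obtain ⟨m, hm⟩ := hsolv
    refine (LieAlgebra.isSolvable_iff K L).2 ⟨m, ?_⟩
    rw [LieSubmodule.eq_bot_iff]
    intro x hx
    have := hder m x hx
    rw [hm, Submodule.map_bot, Submodule.mem_bot] at this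
    exact Subtype.ext this
  obtain ⟨χ, hχ⟩ := LieModule.exists_nontrivial_weightSpace_of_isSolvable K L M
  obtain ⟨⟨v, hv⟩, hv0⟩ := exists_ne (0 : LieModule.weightSpace M χ)
  rw [LieModule.mem_weightSpace] at hv
  have hv0 : v ≠ 0 := fun h => hv0 (Subtype.ext h)
  have hT : ∀ a, ∃ c : K, T a v = c • v := fun a => ⟨_, hv ⟨T a, a, rfl⟩⟩
  have := hN (K ∙ v) (by
    intro a m hm
    obtain ⟨d, rfl⟩ := Submodule.mem_span_singleton.1 hm
    obtain ⟨c, hc⟩ := hT a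
    rw [map_smul, hc]
    exact Submodule.smul_mem _ _ (Submodule.smul_mem _ _ (Submodule.mem_span_singleton_self v)))
  rcases this with h | h
  · exact absurd (Submodule.span_singleton_eq_bot.1 h) hv0
  · rw [← finrank_top K M, ← h]
    exact finrank_span_singleton hv0
end

section
/- Let A be an n-dimensional solvable (left) Leibniz algebra over an algebraically closed field of characteristic zero. Then there is a chain of ideals 0 = I_0 ⊆ I_1 ⊆ I_2 ⊆ ... ⊆ I_n = A of A such that dim(I_i) = i for i = 1, 2, ..., n. -/
attribute [local instance] LieRing.ofAssociativeRing

/-- Image of the left multiplications, as a Lie subalgebra of `End A`. -/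
def leftMulLie {K A : Type*} [Field K] [AddCommGroup A] [Module K A]
    (br : A →ₗ[K] A →ₗ[K] A)
    (leibniz : ∀ a b c : A, br a (br b c) = br (br a b) c + br b (br a c)) :
    LieSubalgebra K (Module.End K A) :=
  { LinearMap.range br with
    lie_mem' := by
      rintro _ _ ⟨a, rfl⟩ ⟨b, rfl⟩
      refine ⟨br a b, ?_⟩
      ext c
      have := leibniz a b c
      simp only [Ring.lie_def, LinearMap.sub_apply, Module.End.mul_apply, this]
      abel }

theorem mem_leftMulLie {K A : Type*} [Field K] [AddCommGroup A] [Module K A]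
    (br : A →ₗ[K] A →ₗ[K] A)
    (leibniz : ∀ a b c : A, br a (br b c) = br (br a b) c + br b (br a c))
    (f : Module.End K A) : f ∈ leftMulLie br leibniz ↔ ∃ a, br a = f := Iff.rfl

theorem leftMulLie_derived {K A : Type*} [Field K] [AddCommGroup A] [Module K A]
    (br : A →ₗ[K] A →ₗ[K] A)
    (leibniz : ∀ a b c : A, br a (br b c) = br (br a b) c + br b (br a c)) (n : ℕ) :
    ∀ x ∈ LieAlgebra.derivedSeries K (leftMulLie br leibniz) n,
      ∃ a ∈ derSeries br n, br a = (x : Module.End K A) := by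
  induction n with
  | zero =>
    rintro ⟨_, a, rfl⟩ -
    exact ⟨a, Submodule.mem_top, rfl⟩
  | succ n ih =>
    intro x hx
    rw [LieAlgebra.derivedSeries_def, LieAlgebra.derivedSeriesOfIdeal_succ,
      ← LieAlgebra.derivedSeries_def, ← LieSubmodule.mem_toSubmodule,
      LieSubmodule.lieIdeal_oper_eq_linear_span'] at hx
    induction hx using Submodule.span_induction with
    | mem x h =>
      obtain ⟨y, hy, z, hz, rfl⟩ := h
      obtain ⟨a, ha, hay⟩ := ih y hy
      obtain ⟨b, hb, hbz⟩ := ih z hz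
      refine ⟨br a b, Submodule.subset_span ⟨a, ha, b, hb, rfl⟩, ?_⟩
      ext c
      have := leibniz a b c
      rw [LieSubalgebra.coe_bracket, ← hay, ← hbz]
      simp only [Ring.lie_def, LinearMap.sub_apply, Module.End.mul_apply, this]
      abel
    | zero => exact ⟨0, zero_mem _, by simp⟩
    | add x y _ _ h1 h2 =>
      obtain ⟨a, ha, hay⟩ := h1
      obtain ⟨b, hb, hbz⟩ := h2
      exact ⟨a + b, add_mem ha hb, by simp [hay, hbz]⟩
    | smul c x _ h =>
      obtain ⟨a, ha, hay⟩ := h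
      exact ⟨c • a, Submodule.smul_mem _ _ ha, by simp [hay]⟩

/-- A left-stable submodule as a Lie submodule. -/
def toLieSub {K A : Type*} [Field K] [AddCommGroup A] [Module K A]
    (br : A →ₗ[K] A →ₗ[K] A)
    (leibniz : ∀ a b c : A, br a (br b c) = br (br a b) c + br b (br a c))
    (W : Submodule K A) (hW : ∀ a, ∀ x ∈ W, br a x ∈ W) :
    LieSubmodule K (leftMulLie br leibniz) A :=
  { W with
    lie_mem := by
      rintro ⟨_, a, rfl⟩ x hx
      exact hW a x hx }

theorem exists_left_eigen {K A : Type*} [Field K] [IsAlgClosed K] [CharZero K]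
    [AddCommGroup A] [Module K A] [FiniteDimensional K A]
    (br : A →ₗ[K] A →ₗ[K] A)
    (leibniz : ∀ a b c : A, br a (br b c) = br (br a b) c + br b (br a c))
    (hsolv : ∃ m : ℕ, derSeries br m = ⊥)
    (W U : Submodule K A) (hW : ∀ a, ∀ x ∈ W, br a x ∈ W)
    (hU : ∀ a, ∀ x ∈ U, br a x ∈ U) (hUW : ¬ U ≤ W) :
    ∃ v ∈ U, v ∉ W ∧ ∀ a, ∃ c : K, br a v - c • v ∈ W := by
  have hs : LieAlgebra.IsSolvable (leftMulLie br leibniz) := by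
    obtain ⟨m, hm⟩ := hsolv
    refine (LieAlgebra.isSolvable_iff K _).2 ⟨m, ?_⟩
    rw [LieSubmodule.eq_bot_iff]
    intro x hx
    obtain ⟨a, ha, hax⟩ := leftMulLie_derived br leibniz m x hx
    rw [hm, Submodule.mem_bot] at ha
    subst ha
    ext1
    simp [← hax]
  let W' := toLieSub br leibniz W hW
  let U' := toLieSub br leibniz U hU
  let V := U'.map (LieSubmodule.Quotient.mk' W')
  have hmk : ∀ x : A, LieSubmodule.Quotient.mk' W' x = 0 ↔ x ∈ W := fun x =>
    LieSubmodule.Quotient.mk_eq_zero'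
  obtain ⟨u, huU, huW⟩ := Set.not_subset.1 hUW
  have hV : Nontrivial V := by
    refine nontrivial_of_ne
      (⟨LieSubmodule.Quotient.mk' W' u, LieSubmodule.mem_map_of_mem huU⟩ : V) 0 ?_
    intro h
    exact huW ((hmk u).1 (congrArg Subtype.val h))
  obtain ⟨χ, hχ⟩ :=
    LieModule.exists_nontrivial_weightSpace_of_isSolvable K (leftMulLie br leibniz) V
  obtain ⟨⟨⟨w, hwV⟩, hw⟩, hw0⟩ := exists_ne (0 : LieModule.weightSpace V χ)
  obtain ⟨v, hvU, rfl⟩ := (LieSubmodule.mem_map _).1 hwV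
  refine ⟨v, hvU, ?_, fun a => ⟨χ ⟨br a, a, rfl⟩, ?_⟩⟩
  · intro hv
    apply hw0
    ext
    exact (hmk v).2 hv
  · rw [LieModule.mem_weightSpace] at hw
    have := congrArg Subtype.val (hw ⟨br a, a, rfl⟩)
    rw [← hmk, map_sub, map_smul, sub_eq_zero]
    exact this

theorem exists_ideal_step {K A : Type*} [Field K] [IsAlgClosed K] [CharZero K]
    [AddCommGroup A] [Module K A] [FiniteDimensional K A]
    (br : A →ₗ[K] A →ₗ[K] A)
    (leibniz : ∀ a b c : A, br a (br b c) = br (br a b) c + br b (br a c))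
    (hsolv : ∃ m : ℕ, derSeries br m = ⊥)
    (W : Submodule K A) (hW : ∀ a, ∀ x ∈ W, br a x ∈ W ∧ br x a ∈ W) (hne : W ≠ ⊤) :
    ∃ W' : Submodule K A, W ≤ W' ∧ (∀ a, ∀ x ∈ W', br a x ∈ W' ∧ br x a ∈ W') ∧
      Module.finrank K W' = Module.finrank K W + 1 := by
  have key : ∃ v, v ∉ W ∧ (∀ a, ∃ c : K, br a v - c • v ∈ W) ∧
      (∀ a, ∃ c : K, br v a - c • v ∈ W) := by
    by_cases hk : LinearMap.ker br ≤ W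
    · obtain ⟨v, -, hv, h⟩ := exists_left_eigen br leibniz hsolv W ⊤ (fun a x hx => (hW a x hx).1)
        (fun _ _ _ => Submodule.mem_top) (by simpa using hne)
      refine ⟨v, hv, h, fun a => ?_⟩
      obtain ⟨c, hc⟩ := h a
      refine ⟨-c, ?_⟩
      have h1 : br a v + br v a ∈ W := by
        apply hk
        rw [LinearMap.mem_ker]
        ext d
        have h1 := leibniz a v d
        have h2 := leibniz v a d
        rw [h2, ← add_assoc, right_eq_add] at h1
        simpa using h1
      have := W.sub_mem h1 hc
      convert this using 1
      module
    · obtain ⟨v, hvk, hv, h⟩ := exists_left_eigen br leibniz hsolv W (LinearMap.ker br)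
        (fun a x hx => (hW a x hx).1)
        (fun a x hx => by
          rw [LinearMap.mem_ker] at hx ⊢
          ext d
          have := leibniz a x d
          simpa [hx] using this.symm) hk
      refine ⟨v, hv, h, fun a => ⟨0, ?_⟩⟩
      rw [LinearMap.mem_ker] at hvk
      simp [hvk]
  obtain ⟨v, hv, hl, hr⟩ := key
  have hmem : ∀ y : A, (∃ c : K, y - c • v ∈ W) → y ∈ W ⊔ K ∙ v := by
    rintro y ⟨c, hc⟩
    have := Submodule.add_mem_sup hc (Submodule.smul_mem _ c (Submodule.mem_span_singleton_self v))
    simpa using this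
  refine ⟨W ⊔ K ∙ v, le_sup_left, fun a x hx => ?_, ?_⟩
  · obtain ⟨w, hw, z, hz, rfl⟩ := Submodule.mem_sup.1 hx
    obtain ⟨c, rfl⟩ := Submodule.mem_span_singleton.1 hz
    simp only [map_add, map_smul, LinearMap.add_apply, LinearMap.smul_apply]
    exact ⟨add_mem (le_sup_left (a := W) (hW a w hw).1) (Submodule.smul_mem _ _ (hmem _ (hl a))),
      add_mem (le_sup_left (a := W) (hW a w hw).2) (Submodule.smul_mem _ _ (hmem _ (hr a)))⟩
  · have h0 : v ≠ 0 := fun h => hv (h ▸ W.zero_mem)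
    have hd : W ⊓ K ∙ v = ⊥ := ((Submodule.disjoint_span_singleton' h0).2 hv).eq_bot
    have := Submodule.finrank_sup_add_finrank_inf_eq W (K ∙ v)
    rw [hd, finrank_bot, finrank_span_singleton h0] at this
    simpa using this

/-- an `n`-dimensional solvable (left) Leibniz algebra over an
algebraically closed field of characteristic zero has a chain of ideals
`0 = I_0 ⊆ I_1 ⊆ ⋯ ⊆ I_n = A` with `dim (I i) = i`. -/
theorem solvable_leibniz_chain_of_ideals
    {K A : Type*} [Field K] [IsAlgClosed K] [CharZero K]
    [AddCommGroup A] [Module K A] [FiniteDimensional K A]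
    (br : A →ₗ[K] A →ₗ[K] A)
    (leibniz : ∀ a b c : A, br a (br b c) = br (br a b) c + br b (br a c))
    (hsolv : ∃ m : ℕ, derSeries br m = ⊥) :
    ∃ I : ℕ → Submodule K A,
      I 0 = ⊥ ∧ I (Module.finrank K A) = ⊤ ∧
      (∀ i : ℕ, i < Module.finrank K A → I i ≤ I (i + 1)) ∧
      (∀ i : ℕ, i ≤ Module.finrank K A →
        (∀ a : A, ∀ x ∈ I i, br a x ∈ I i ∧ br x a ∈ I i) ∧
          Module.finrank K (I i) = i) := by
  classical
  have hstep : ∀ W : Submodule K A, ∃ W' : Submodule K A,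
      (∀ a, ∀ x ∈ W, br a x ∈ W ∧ br x a ∈ W) → W ≠ ⊤ →
      W ≤ W' ∧ (∀ a, ∀ x ∈ W', br a x ∈ W' ∧ br x a ∈ W') ∧
      Module.finrank K W' = Module.finrank K W + 1 := by
    intro W
    by_cases h : (∀ a, ∀ x ∈ W, br a x ∈ W ∧ br x a ∈ W) ∧ W ≠ ⊤
    · obtain ⟨W', hW'⟩ := exists_ideal_step br leibniz hsolv W h.1 h.2
      exact ⟨W', fun _ _ => hW'⟩
    · exact ⟨W, fun h1 h2 => absurd ⟨h1, h2⟩ h⟩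
  choose f hf using hstep
  let I : ℕ → Submodule K A := fun i => f^[i] ⊥
  have hsucc : ∀ i, I (i + 1) = f (I i) := fun i => Function.iterate_succ_apply' f i ⊥
  have hne : ∀ i, i < Module.finrank K A → Module.finrank K (I i) = i → I i ≠ ⊤ := by
    intro i hi h1 h2
    rw [h2, finrank_top] at h1
    omega
  have hI : ∀ i : ℕ, i ≤ Module.finrank K A →
        (∀ a : A, ∀ x ∈ I i, br a x ∈ I i ∧ br x a ∈ I i) ∧
          Module.finrank K (I i) = i := by
    intro i
    induction i with
    | zero =>
      intro _
      refine ⟨fun a x hx => ?_, finrank_bot K A⟩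
      have hx0 : x = 0 := hx
      simp [hx0]
    | succ i ih =>
      intro hi
      obtain ⟨h1, h2⟩ := ih (by omega)
      obtain ⟨-, h4, h5⟩ := hf (I i) h1 (hne i (by omega) h2)
      rw [hsucc]
      exact ⟨h4, by rw [h5, h2]⟩
  refine ⟨I, rfl, Submodule.eq_top_of_finrank_eq (hI _ le_rfl).2, fun i hi => ?_, hI⟩
  obtain ⟨h1, h2⟩ := hI i hi.le
  rw [hsucc]
  exact (hf (I i) h1 (hne i hi h2)).1
end

section
/- Let A be a finite-dimensional (left) Leibniz algebra over an algebraically closed field of characteristic zero. Then A is solvable if and only if tr(L_a ∘ L_b) = 0 for all a ∈ [A,A] and all b ∈ A. -/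
section Helpers

open LieAlgebra LieModule

/-- For a solvable Lie algebra, `x y` acts nilpotently when `x` is in the derived algebra. -/
theorem leibCC_nilp {K L : Type*} [Field K] [IsAlgClosed K] [CharZero K]
    [LieRing L] [LieAlgebra K L] [IsSolvable L] (n : ℕ) :
    ∀ (M : Type*) [AddCommGroup M] [Module K M] [FiniteDimensional K M]
      [LieRingModule L M] [LieModule K L M], Module.finrank K M = n →
      ∀ x ∈ derivedSeries K L 1, ∀ y : L, ∃ k : ℕ,
        ∀ m : M, ((fun m : M => ⁅x, ⁅y, m⁆⁆)^[k]) m = 0 := by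
  induction n using Nat.strong_induction_on with
  | _ n ih =>
  intro M _ _ _ _ _ hn x hx y
  rcases subsingleton_or_nontrivial M with hM | hM
  · exact ⟨0, fun m => Subsingleton.elim _ _⟩
  obtain ⟨χ, hχ⟩ := exists_nontrivial_weightSpace_of_isSolvable K L M
  set N : LieSubmodule K L M := weightSpace M χ with hN
  have hχx : χ x = 0 := by
    obtain ⟨v, hv⟩ := exists_ne (0 : N)
    have hv0 : (v : M) ≠ 0 := by simpa using hv
    have hvw := (mem_weightSpace (χ := χ) (m := (v : M))).1 v.2
    have hx' : x ∈ (derivedSeries K L 1).toSubmodule := hx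
    have key : (derivedSeries K L 1).toSubmodule ≤ LinearMap.ker χ := by
      rw [derivedSeries_def, derivedSeriesOfIdeal_succ, derivedSeriesOfIdeal_zero,
        LieSubmodule.lieIdeal_oper_eq_linear_span', Submodule.span_le]
      rintro _ ⟨a, -, b, -, rfl⟩
      have h1 : ⁅⁅a, b⁆, (v : M)⁆ = 0 := by
        rw [lie_lie, hvw b, hvw a, lie_smul, lie_smul, hvw a, hvw b, smul_comm, sub_self]
      rw [hvw] at h1
      simpa [hv0] using h1
    exact key hx'
  have hlt : Module.finrank K (M ⧸ N) < n := by
    have h1 := Submodule.finrank_quotient_add_finrank N.toSubmodule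
    have h2 : 0 < Module.finrank K N := Module.finrank_pos
    have h1' : Module.finrank K (M ⧸ N) + Module.finrank K N = Module.finrank K M := h1
    omega
  obtain ⟨k, hk⟩ := ih _ hlt (M ⧸ N) rfl x hx y
  refine ⟨k + 1, fun m => ?_⟩
  have hmk : ∀ (j : ℕ) (m : M), (LieSubmodule.Quotient.mk
      (((fun m : M => ⁅x, ⁅y, m⁆⁆)^[j]) m) : M ⧸ N)
      = ((fun m : M ⧸ N => ⁅x, ⁅y, m⁆⁆)^[j]) (LieSubmodule.Quotient.mk m) := by
    intro j
    induction j with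
    | zero => intro m; rfl
    | succ j ihj =>
      intro m
      rw [Function.iterate_succ_apply', Function.iterate_succ_apply', ← ihj]
      rfl
  have hmem : ((fun m : M => ⁅x, ⁅y, m⁆⁆)^[k]) m ∈ N := by
    have h0 := hmk k m
    rw [hk] at h0
    exact (LieSubmodule.Quotient.mk_eq_zero N).1 h0
  rw [Function.iterate_succ_apply']
  have hw := (mem_weightSpace χ _).1 hmem
  show ⁅x, ⁅y, _⁆⁆ = 0
  rw [hw y, lie_smul, hw x, hχx, zero_smul, smul_zero]

/-- The abstract version: `L` is a Lie algebra with a surjection from the Leibniz algebra. -/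
theorem leibCC_aux {K A L : Type*} [Field K] [IsAlgClosed K] [CharZero K]
    [AddCommGroup A] [Module K A] [FiniteDimensional K A]
    [LieRing L] [LieAlgebra K L] [LieRingModule L A] [LieModule K L A]
    (br : A →ₗ[K] A →ₗ[K] A) (f : A →ₗ[K] L) (hf : Function.Surjective f)
    (hbr : ∀ a b, f (br a b) = ⁅f a, f b⁆) (hact : ∀ a x : A, ⁅f a, x⁆ = br a x) :
    (∃ m : ℕ, derSeries br m = ⊥) ↔
      ∀ a ∈ bracketSpan br (⊤ : Submodule K A) ⊤, ∀ b : A,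
        LinearMap.trace K A (br a ∘ₗ br b) = 0 := by
  have hder : ∀ n, (derivedSeries K L n).toSubmodule = (derSeries br n).map f := by
    intro n
    induction n with
    | zero =>
      simp [derivedSeries_def, derSeries, LinearMap.range_eq_top.2 hf]
    | succ n ihn =>
      have ihn' : ∀ z, z ∈ derivedSeries K L n ↔ z ∈ (derSeries br n).map f := fun z => by
        rw [← ihn]; rfl
      rw [derivedSeries_def] at ihn' ⊢
      rw [derivedSeriesOfIdeal_succ, LieSubmodule.lieIdeal_oper_eq_linear_span']
      rw [derSeries, bracketSpan, Submodule.map_span]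
      congr 1
      ext z
      constructor
      · rintro ⟨a, ha, b, hb, rfl⟩
        obtain ⟨a, ha', rfl⟩ := (ihn' _).1 ha
        obtain ⟨b, hb', rfl⟩ := (ihn' _).1 hb
        exact ⟨br a b, ⟨a, ha', b, hb', rfl⟩, hbr a b⟩
      · rintro ⟨_, ⟨a, ha, b, hb, rfl⟩, rfl⟩
        exact ⟨f a, (ihn' _).2 ⟨a, ha, rfl⟩, f b, (ihn' _).2 ⟨b, hb, rfl⟩, (hbr a b).symm⟩
  have hder1 : ∀ a ∈ bracketSpan br (⊤ : Submodule K A) ⊤, f a ∈ derivedSeries K L 1 := by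
    intro a ha
    have : f a ∈ (derivedSeries K L 1).toSubmodule := by
      rw [hder 1]; exact ⟨a, ha, rfl⟩
    exact this
  constructor
  · rintro ⟨m, hm⟩ a ha b
    have hsol : IsSolvable L := by
      refine IsSolvable.mk (R := K) (k := m) ?_
      have := hder m
      rw [hm, Submodule.map_bot] at this
      simpa using this
    obtain ⟨k, hk⟩ := leibCC_nilp (K := K) (L := L) _ A rfl (f a) (hder1 a ha) (f b)
    have hnil : IsNilpotent (br a ∘ₗ br b) := by
      refine ⟨k, LinearMap.ext fun x => ?_⟩
      rw [Module.End.pow_apply, LinearMap.zero_apply, ← hk x]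
      congr 2
      funext z
      simp [hact]
    exact (LinearMap.isNilpotent_trace_of_isNilpotent hnil).eq_zero
  · intro h
    set D : LieIdeal K L := derivedSeries K L 1 with hD
    have hEx : ∀ x ∈ D, ∃ a ∈ bracketSpan br (⊤ : Submodule K A) ⊤, f a = x := by
      intro x hx
      have hx' : x ∈ (derivedSeries K L 1).toSubmodule := hx
      rw [hder 1] at hx'
      exact hx'
    have tf : traceForm K D A = 0 := by
      ext ⟨x, hx⟩ ⟨y, hy⟩
      obtain ⟨a, ha, rfl⟩ := hEx x hx
      obtain ⟨b, hb, rfl⟩ := hEx y hy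
      rw [traceForm_apply_apply]
      have h2 := h a ha b
      have e : ∀ (c : A) (hc : f c ∈ D), toEnd K D A ⟨f c, hc⟩ = br c := by
        intro c hc
        ext z
        exact hact c z
      rw [e, e, h2]
      rfl
    have hnil : LieModule.IsNilpotent (derivedSeries K D 1) A :=
      isNilpotent_derivedSeries_of_traceForm_eq_zero tf
    obtain ⟨k, hk⟩ := (isNilpotent_iff K (derivedSeries K D 1) A).1 hnil
    have hD2 : ∀ a ∈ derSeries br 2, ∃ d : derivedSeries K D 1, ((d : D) : L) = f a := by
      intro a ha
      rw [derSeries, bracketSpan] at ha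
      induction ha using Submodule.span_induction with
      | mem x hx =>
        obtain ⟨a, ha, b, hb, rfl⟩ := hx
        refine ⟨⟨⁅(⟨f a, hder1 a ha⟩ : D), (⟨f b, hder1 b hb⟩ : D)⁆, ?_⟩, (hbr a b).symm⟩
        exact LieSubmodule.lie_mem_lie (LieSubmodule.mem_top _) (LieSubmodule.mem_top _)
      | zero => exact ⟨0, by simp⟩
      | add x y _ _ hx hy =>
        obtain ⟨d, hd⟩ := hx
        obtain ⟨e, he⟩ := hy
        exact ⟨d + e, by simp [hd, he]⟩
      | smul c x _ hx =>
        obtain ⟨d, hd⟩ := hx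
        exact ⟨c • d, by simp [hd]⟩
    have hanti : ∀ n, derSeries br (n + 1) ≤ derSeries br n := by
      intro n
      induction n with
      | zero => exact le_top
      | succ n ihn =>
        rw [derSeries, derSeries, bracketSpan, bracketSpan]
        apply Submodule.span_mono
        rintro _ ⟨a, ha, b, hb, rfl⟩
        exact ⟨a, ihn ha, b, ihn hb, rfl⟩
    have hle2 : ∀ j, derSeries br (j + 2) ≤ derSeries br 2 := by
      intro j
      induction j with
      | zero => exact le_rfl
      | succ j ihj => exact (hanti (j + 2)).trans ihj
    have hfin : ∀ j, derSeries br (j + 2) ≤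
        (lowerCentralSeries K (derivedSeries K D 1) A j).toSubmodule := by
      intro j
      induction j with
      | zero => simp
      | succ j ihj =>
        rw [show j + 1 + 2 = (j + 2) + 1 by ring, derSeries, bracketSpan, Submodule.span_le]
        rintro _ ⟨a, ha, b, hb, rfl⟩
        obtain ⟨d, hd⟩ := hD2 a (hle2 j ha)
        have : br a b = ⁅d, b⁆ := by
          rw [← hact, ← hd]; rfl
        rw [this, LieModule.lowerCentralSeries_succ]
        exact LieSubmodule.lie_mem_lie (LieSubmodule.mem_top _) (ihj hb)
    refine ⟨k + 2, ?_⟩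
    have := hfin k
    rw [hk] at this
    simpa using this

end Helpers

/-- Cartan's criterion: a finite-dimensional (left) Leibniz algebra
over an algebraically closed field of characteristic zero is solvable iff
`tr(L_a ∘ L_b) = 0` for all `a ∈ [A, A]` and all `b ∈ A`. -/
theorem leibniz_cartan_criterion
    {K A : Type*} [Field K] [IsAlgClosed K] [CharZero K]
    [AddCommGroup A] [Module K A] [FiniteDimensional K A]
    (br : A →ₗ[K] A →ₗ[K] A)
    (leibniz : ∀ a b c : A, br a (br b c) = br (br a b) c + br b (br a c)) :
    (∃ m : ℕ, derSeries br m = ⊥) ↔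
      ∀ a ∈ bracketSpan br (⊤ : Submodule K A) ⊤, ∀ b : A,
        LinearMap.trace K A (br a ∘ₗ br b) = 0 := by
  let : LieRing (Module.End K A) := LieRing.ofAssociativeRing
  let : LieAlgebra K (Module.End K A) := LieAlgebra.ofAssociativeAlgebra
  have hcomm : ∀ a b, br (br a b) = ⁅(br a : Module.End K A), (br b : Module.End K A)⁆ := by
    intro a b
    rw [LieRing.of_associative_ring_bracket]
    ext c
    have := leibniz a b c
    simp [this]
  let L : LieSubalgebra K (Module.End K A) :=
    { LinearMap.range br with
      lie_mem' := by
        rintro _ _ ⟨a, rfl⟩ ⟨b, rfl⟩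
        exact ⟨br a b, hcomm a b⟩ }
  let f : A →ₗ[K] L :=
    { toFun := fun a => ⟨br a, a, rfl⟩
      map_add' := fun a b => Subtype.ext (map_add br a b)
      map_smul' := fun c a => Subtype.ext (map_smul br c a) }
  refine leibCC_aux (L := L) br f ?_ ?_ ?_
  · rintro ⟨_, a, rfl⟩
    exact ⟨a, rfl⟩
  · intro a b
    exact Subtype.ext (hcomm a b)
  · intro a x
    rfl
end

section
/- Let A be a finite-dimensional (left) Leibniz algebra over an algebraically closed field of characteristic zero and let R = rad(A) be its solvable radical (the unique maximal solvable ideal of A). Then there exists a subalgebra S of A which is a semisimple Lie algebra (the bracket restricted to S is antisymmetric and S is semisimple as a Lie algebra) such that A = S ⊕ R as a direct sum of vector spaces. -/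
/-- Derived series of a subspace `I` (computed inside the ambient algebra):
`derSeriesIn br I 0 = I`, `derSeriesIn br I (n+1) = [derSeriesIn br I n, derSeriesIn br I n]`.
A subalgebra/ideal `I` is solvable iff some term vanishes. -/
def derSeriesIn {K A : Type*} [Field K] [AddCommGroup A] [Module K A]
    (br : A →ₗ[K] A →ₗ[K] A) (I : Submodule K A) : ℕ → Submodule K A
  | 0 => I
  | n + 1 => bracketSpan br (derSeriesIn br I n) (derSeriesIn br I n)


/-- Casimir endomorphism. -/
theorem levi_casimir {K L V : Type*} [Field K] [CharZero K] [LieRing L] [LieAlgebra K L]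
    [FiniteDimensional K L] [LieAlgebra.IsKilling K L]
    [AddCommGroup V] [Module K V] [FiniteDimensional K V] [LieRingModule L V] [LieModule K L V]
    (h : LieModule.traceForm K L V ≠ 0) :
    ∃ Ω : Module.End K V, (∀ x : L, ∀ v : V, Ω ⁅x, v⁆ = ⁅x, Ω v⁆) ∧
      (∀ l : V →ₗ[K] K, (∀ (x : L) (v : V), l ⁅x, v⁆ = 0) → ∀ v, l (Ω v) = 0) ∧
      ¬ IsNilpotent Ω := by
  classical
  set τ := LieModule.traceForm K L V with hτ
  let I : LieIdeal K L :=
    { LinearMap.ker τ with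
      lie_mem := by
        intro x m hm
        have hm' : τ m = 0 := hm
        change τ ⁅x, m⁆ = 0
        ext y
        have := LieModule.traceForm_apply_lie_apply K L V m x y
        rw [← hτ] at this
        rw [← lie_skew, map_neg, LinearMap.neg_apply, this, hm']; simp }
  have hI : ∀ x, x ∈ I ↔ τ x = 0 := fun x => Iff.rfl
  set J := LieIdeal.killingCompl K L I with hJ
  have hIJ : IsCompl I J := LieIdeal.isCompl_killingCompl I
  have hsym : ∀ x y, τ x y = τ y x := LieModule.traceForm_comm K L V
  have hinv : ∀ x y z, τ ⁅x, y⁆ z = τ x ⁅y, z⁆ := LieModule.traceForm_apply_lie_apply K L V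
  let B : LinearMap.BilinForm K J := τ.domRestrict₁₂ J.toSubmodule J.toSubmodule
  have hBapp : ∀ x y : J, B x y = τ x y := fun x y => rfl
  have hB : B.Nondegenerate := by
    have key : ∀ x : J, (∀ y : J, B x y = 0) → x = 0 := by
      intro x hx
      have h1 : (x : L) ∈ I := by
        rw [hI]
        ext y
        have hy : y ∈ I ⊔ J := by rw [hIJ.sup_eq_top]; trivial
        obtain ⟨a, ha, b, hb, rfl⟩ := (LieSubmodule.mem_sup I J y).1 hy
        have h2 : τ x a = 0 := by rw [hsym, (hI a).1 ha]; rfl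
        have h3 : τ x b = 0 := hx ⟨b, hb⟩
        simp [h2, h3]
      have h4 : (x : L) ∈ I ⊓ J := ⟨h1, x.2⟩
      rw [hIJ.inf_eq_bot] at h4
      exact Subtype.ext ((LieSubmodule.mem_bot _).1 h4)
    refine ⟨key, fun y hy => key y fun z => ?_⟩
    rw [hBapp, hsym]; exact hy z
  let b := Module.finBasis K J
  let b' := B.dualBasis hB b
  have hbb' : ∀ i j, τ (b' i) (b j) = if j = i then 1 else 0 := fun i j =>
    LinearMap.BilinForm.apply_dualBasis_left hB b i j
  have exp1 : ∀ y : J, (y : L) = ∑ j, τ (b' j) y • (b j : L) := by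
    intro y
    have : y = ∑ j, τ (b' j) y • b j := by
      conv_lhs => rw [← b.sum_repr y]
      refine Finset.sum_congr rfl fun j _ => ?_
      congr 1
      rw [← hBapp]
      conv_rhs => rw [← b.sum_repr y]
      simp only [map_sum, map_smul, smul_eq_mul]
      simp only [hBapp, hbb']
      simp
    conv_lhs => rw [this]
    simp
  have exp2 : ∀ y : J, (y : L) = ∑ j, τ (b j) y • (b' j : L) := by
    intro y
    have : y = ∑ j, τ (b j) y • b' j := by
      conv_lhs => rw [← b'.sum_repr y]
      refine Finset.sum_congr rfl fun j _ => ?_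
      congr 1
      rw [← hBapp]
      conv_rhs => rw [← b'.sum_repr y]
      simp only [map_sum, map_smul, smul_eq_mul]
      simp only [hBapp, hsym (b j), hbb']
      simp
    conv_lhs => rw [this]
    simp
  let ρ := LieModule.toEnd K L V
  refine ⟨∑ i, ρ (b i) * ρ (b' i), ?_, ?_, ?_⟩
  · intro x v
    have e1 : ∀ i, ⁅x, (b i : L)⁆ = ∑ j, τ (b' j) ⁅x, (b i : L)⁆ • (b j : L) := fun i =>
      exp1 ⟨⁅x, (b i : L)⁆, J.lie_mem (b i).2⟩
    have e2 : ∀ i, ⁅x, (b' i : L)⁆ = ∑ j, τ (b j) ⁅x, (b' i : L)⁆ • (b' j : L) := fun i =>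
      exp2 ⟨⁅x, (b' i : L)⁆, J.lie_mem (b' i).2⟩
    have e3 : ∀ i j, τ (b j) ⁅x, (b' i : L)⁆ = - τ (b' i) ⁅x, (b j : L)⁆ := by
      intro i j
      rw [← hinv, hsym, ← lie_skew, map_neg]
    have lhs : ∀ i, ⁅x, ⁅(b i : L), ⁅(b' i : L), v⁆⁆⁆ =
        ⁅⁅x, (b i : L)⁆, ⁅(b' i : L), v⁆⁆ + ⁅(b i : L), ⁅⁅x, (b' i : L)⁆, v⁆⁆
          + ⁅(b i : L), ⁅(b' i : L), ⁅x, v⁆⁆⁆ := by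
      intro i
      rw [leibniz_lie x (b i : L), leibniz_lie x (b' i : L) v, lie_add, add_assoc]
    have key : ∑ i, ⁅⁅x, (b i : L)⁆, ⁅(b' i : L), v⁆⁆ +
        ∑ i, ⁅(b i : L), ⁅⁅x, (b' i : L)⁆, v⁆⁆ = 0 := by
      have k1 : ∑ i, ⁅⁅x, (b i : L)⁆, ⁅(b' i : L), v⁆⁆ =
          ∑ i, ∑ j, τ (b' j) ⁅x, (b i : L)⁆ • ⁅(b j : L), ⁅(b' i : L), v⁆⁆ := by
        refine Finset.sum_congr rfl fun i _ => ?_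
        conv_lhs => rw [e1 i]
        simp only [sum_lie, smul_lie]
      have k2 : ∑ i, ⁅(b i : L), ⁅⁅x, (b' i : L)⁆, v⁆⁆ =
          ∑ i, ∑ j, - (τ (b' i) ⁅x, (b j : L)⁆ • ⁅(b i : L), ⁅(b' j : L), v⁆⁆) := by
        refine Finset.sum_congr rfl fun i _ => ?_
        conv_lhs => rw [e2 i]
        simp only [sum_lie, smul_lie, lie_sum, lie_smul, e3, neg_smul, neg_lie, lie_neg]
      rw [k1, k2, Finset.sum_comm]
      simp
    have hΩ : ∀ w, (∑ i, ρ (b i) * ρ (b' i)) w = ∑ i, ⁅(b i : L), ⁅(b' i : L), w⁆⁆ := by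
      intro w; simp [ρ, LinearMap.sum_apply]
    rw [hΩ, hΩ, lie_sum]
    simp only [lhs, Finset.sum_add_distrib]
    rw [key, zero_add]
  · intro l hl v
    simp [ρ, LinearMap.sum_apply, hl]
  · intro hnil
    have h0 := (LinearMap.isNilpotent_trace_of_isNilpotent hnil).eq_zero
    rw [map_sum] at h0
    have : ∀ i, LinearMap.trace K V (ρ (b i) * ρ (b' i)) = 1 := by
      intro i
      have : LinearMap.trace K V (ρ (b i) * ρ (b' i)) = τ (b i) (b' i) := rfl
      rw [this, hsym, hbb']; simp
    simp only [this] at h0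
    have hfr : Module.finrank K J = 0 := by simpa using h0
    have hJ0 : J = ⊥ := by
      rw [← LieSubmodule.toSubmodule_eq_bot]
      exact Submodule.finrank_eq_zero.1 hfr
    have hI1 : I = ⊤ := by
      have := hIJ.sup_eq_top
      rwa [hJ0, sup_bot_eq] at this
    apply h
    refine LinearMap.ext fun x => ?_
    exact (hI x).1 (hI1 ▸ LieSubmodule.mem_top x)

theorem levi_perfect {K L : Type*} [Field K] [CharZero K] [LieRing L] [LieAlgebra K L]
    [FiniteDimensional K L] [LieAlgebra.IsKilling K L] : ⁅(⊤ : LieIdeal K L), (⊤ : LieIdeal K L)⁆ = ⊤ := by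
  set D : LieIdeal K L := ⁅(⊤ : LieIdeal K L), (⊤ : LieIdeal K L)⁆
  have hc := LieIdeal.isCompl_killingCompl D
  have : LieIdeal.killingCompl K L D = ⊥ := by
    rw [LieSubmodule.eq_bot_iff]
    intro x hx
    have hz : ∀ y : L, ⁅x, y⁆ = 0 := by
      intro y
      have : (LieIdeal.killingCompl K L D) ⊓ D = ⊥ := hc.symm.inf_eq_bot
      have hm : ⁅x, y⁆ ∈ (LieIdeal.killingCompl K L D) ⊓ D :=
        ⟨lie_mem_left K L _ x y hx, LieSubmodule.lie_mem_lie (LieSubmodule.mem_top x) (LieSubmodule.mem_top y)⟩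
      rw [this] at hm
      simpa using hm
    have h1 : x ∈ LinearMap.ker (killingForm K L) := by
      rw [LinearMap.mem_ker]
      ext y
      have : LieAlgebra.ad K L x = 0 := by ext y; simpa using hz y
      rw [killingForm_apply_apply, this]; simp
    rw [LieAlgebra.IsKilling.ker_killingForm_eq_bot] at h1
    simpa using h1
  have h2 := hc.sup_eq_top
  rwa [this, sup_bot_eq] at h2

theorem levi_trivial_of_nilpotent {K L V : Type*} [Field K] [CharZero K] [LieRing L] [LieAlgebra K L]
    [FiniteDimensional K L] [LieAlgebra.IsKilling K L]
    [AddCommGroup V] [Module K V] [FiniteDimensional K V] [LieRingModule L V] [LieModule K L V]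
    (h : LieModule.traceForm K L V = 0) (x : L) (v : V) : ⁅x, v⁆ = 0 := by
  have hn := LieModule.isNilpotent_derivedSeries_of_traceForm_eq_zero h
  have hD : LieAlgebra.derivedSeries K L 1 = ⊤ := by
    simpa [LieAlgebra.derivedSeries_def] using levi_perfect (K := K) (L := L)
  have hn2 : LieModule.IsNilpotent L V := by
    rw [LieModule.isNilpotent_iff_forall' (R := K)] at hn ⊢
    intro x
    exact hn ⟨x, hD ▸ LieSubmodule.mem_top x⟩
  obtain ⟨k, hk⟩ := (LieModule.isNilpotent_iff K L V).1 hn2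
  have step : ∀ k, LieModule.lowerCentralSeries K L V 1 ≤ LieModule.lowerCentralSeries K L V (k+1) := by
    intro k
    induction k with
    | zero => exact le_rfl
    | succ k ih =>
      have e : LieModule.lowerCentralSeries K L V 1 = ⁅(⊤ : LieIdeal K L), (⊤ : LieSubmodule K L V)⁆ := by
        simp
      have e2 : LieModule.lowerCentralSeries K L V (k+1+1) = ⁅(⊤ : LieIdeal K L), LieModule.lowerCentralSeries K L V (k+1)⁆ := by
        simp only [LieModule.lowerCentralSeries_succ]
      conv_lhs => rw [e, ← levi_perfect]
      rw [LieSubmodule.lieIdeal_oper_eq_span, LieSubmodule.lieSpan_le]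
      rintro _ ⟨⟨y, hy⟩, ⟨m, hm⟩, rfl⟩
      change ⁅y, m⁆ ∈ LieModule.lowerCentralSeries K L V (k+1+1)
      have hy' : y ∈ Submodule.span K {z | ∃ x ∈ (⊤ : LieIdeal K L), ∃ n ∈ (⊤ : LieIdeal K L), ⁅x, n⁆ = z} := by
        rw [← LieSubmodule.lieIdeal_oper_eq_linear_span']; exact hy
      induction hy' using Submodule.span_induction with
      | mem z hz =>
        obtain ⟨p, -, q, -, rfl⟩ := hz
        have hh : ∀ a : L, ∀ w : V, ⁅a, w⁆ ∈ LieModule.lowerCentralSeries K L V (k+1) := fun a w => 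
          ih (e ▸ LieSubmodule.lie_mem_lie (LieSubmodule.mem_top a) (LieSubmodule.mem_top w))
        rw [lie_lie, e2]
        exact sub_mem (LieSubmodule.lie_mem_lie (LieSubmodule.mem_top _) (hh _ _))
          (LieSubmodule.lie_mem_lie (LieSubmodule.mem_top _) (hh _ _))
      | zero => simp
      | add a b _ _ ha hb => 
        rw [add_lie]
        exact add_mem (ha (by rw [levi_perfect]; trivial)) (hb (by rw [levi_perfect]; trivial))
      | smul c a _ ha => 
        rw [smul_lie]
        exact Submodule.smul_mem _ _ (ha (by rw [levi_perfect]; trivial))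
  have h1 : ⁅x, v⁆ ∈ LieModule.lowerCentralSeries K L V 1 := by
    simpa using LieSubmodule.lie_mem_lie (LieSubmodule.mem_top x) (LieSubmodule.mem_top v)
  have h2 := step k h1
  have h3 := LieModule.antitone_lowerCentralSeries K L V (Nat.le_succ k) h2
  rw [hk] at h3
  simpa using h3

theorem levi_weyl {K L : Type*} [Field K] [CharZero K] [LieRing L] [LieAlgebra K L]
    [FiniteDimensional K L] [LieAlgebra.IsKilling K L] (n : ℕ) :
    ∀ {V : Type*} [AddCommGroup V] [Module K V] [FiniteDimensional K V] [LieRingModule L V]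
      [LieModule K L V] (l : V →ₗ[K] K) (_ : Module.finrank K V = n)
      (_ : ∀ (x : L) (v : V), l ⁅x, v⁆ = 0) (_ : l ≠ 0),
      ∃ v : V, l v ≠ 0 ∧ ∀ x : L, ⁅x, v⁆ = 0 := by
  induction n using Nat.strong_induction_on with
  | _ n ih =>
  intro V _ _ _ _ _ l hn hl hl0
  by_cases h : LieModule.traceForm K L V = 0
  · obtain ⟨v, hv⟩ : ∃ v, l v ≠ 0 := by
      by_contra! hc
      exact hl0 (LinearMap.ext hc)
    exact ⟨v, hv, fun x => levi_trivial_of_nilpotent h x v⟩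
  · obtain ⟨Ω, hΩ, hΩl, hΩn⟩ := levi_casimir h
    have hcomp := LinearMap.isCompl_iSup_ker_pow_iInf_range_pow Ω
    obtain ⟨m, hm⟩ : ∃ m : ℕ, IsCompl (LinearMap.ker (Ω ^ (m+1))) (LinearMap.range (Ω ^ (m+1))) := by
      have h1 := Filter.eventually_atTop.1 (LinearMap.eventually_isCompl_ker_pow_range_pow Ω)
      obtain ⟨a, ha⟩ := h1
      exact ⟨a, ha _ (Nat.le_succ a)⟩
    have hpow : ∀ k : ℕ, ∀ x : L, ∀ v : V, (Ω ^ k) ⁅x, v⁆ = ⁅x, (Ω ^ k) v⁆ := by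
      intro k
      induction k with
      | zero => simp
      | succ k ihk => intro x v; simp [pow_succ', ihk, hΩ]
    let W : LieSubmodule K L V :=
      { LinearMap.ker (Ω ^ (m+1)) with
        lie_mem := by
          intro x v hv
          have hv' : (Ω ^ (m+1)) v = 0 := hv
          change (Ω ^ (m+1)) ⁅x, v⁆ = 0
          rw [hpow, hv', lie_zero] }
    have hWm : ∀ v, v ∈ W ↔ (Ω ^ (m+1)) v = 0 := fun v => Iff.rfl
    have hlt : Module.finrank K W < n := by
      rw [← hn]
      apply Submodule.finrank_lt
      intro htop
      apply hΩn
      refine ⟨m+1, ?_⟩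
      exact LinearMap.ker_eq_top.1 htop
    have hlW : l.comp W.toSubmodule.subtype ≠ 0 := by
      intro h0
      apply hl0
      ext v
      have hv : v ∈ LinearMap.ker (Ω ^ (m+1)) ⊔ LinearMap.range (Ω ^ (m+1)) := by
        rw [hm.sup_eq_top]; trivial
      obtain ⟨a, ha, b, ⟨c, rfl⟩, rfl⟩ := Submodule.mem_sup.1 hv
      have h1 : l a = 0 := LinearMap.congr_fun h0 ⟨a, ha⟩
      rw [map_add, h1, pow_succ', Module.End.mul_apply, hΩl l hl]
      simp
    obtain ⟨v, hv, hv2⟩ := ih _ hlt (V := W) (l.comp W.toSubmodule.subtype) rfl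
      (fun x v => hl x v) hlW
    exact ⟨v, hv, fun x => by simpa using congrArg Subtype.val (hv2 x)⟩

theorem levi_core {K L A : Type*} [Field K] [CharZero K] [LieRing L] [LieAlgebra K L]
    [FiniteDimensional K L] [LieAlgebra.IsKilling K L]
    [AddCommGroup A] [Module K A] [FiniteDimensional K A]
    (br : A →ₗ[K] A →ₗ[K] A)
    (leibniz : ∀ a b c : A, br a (br b c) = br (br a b) c + br b (br a c))
    (π : A →ₗ[K] L) (hπ : Function.Surjective π)
    (hom : ∀ a b, π (br a b) = ⁅π a, π b⁆)
    (hab : ∀ r s, π r = 0 → π s = 0 → br r s = 0)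
    (hZ : (∀ r, π r = 0 → (∀ a, br r a = 0) → r = 0) ∨ (∀ r, π r = 0 → ∀ a, br r a = 0)) :
    ∃ S : Submodule K A, (∀ x ∈ S, ∀ y ∈ S, br x y ∈ S) ∧ IsCompl S (LinearMap.ker π) := by
  by_cases hR : ∀ r, π r = 0 → r = 0
  · refine ⟨⊤, fun _ _ _ _ => trivial, ?_⟩
    rw [LinearMap.ker_eq_bot'.2 hR]
    exact isCompl_top_bot
  push Not at hR
  obtain ⟨r0, hr0, hr0'⟩ := hR
  obtain ⟨f, hf⟩ : ∃ f : A →ₗ[K] K, f r0 = 1 := by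
    obtain ⟨f, h1⟩ : ∃ f : Module.Dual K A, f r0 ≠ 0 := by
      by_contra! hc
      exact hr0' ((Module.forall_dual_apply_eq_zero_iff K r0).1 hc)
    exact ⟨(f r0)⁻¹ • f, by simp [h1]⟩
  -- the adjoint action on `End A`
  let T : A →ₗ[K] Module.End K (Module.End K A) :=
    LinearMap.mk₂ K (fun a φ => br a * φ - φ * br a)
      (by intros; simp [add_mul, mul_add]; abel) (by intros; simp [smul_sub])
      (by intros; simp [add_mul, mul_add]; abel) (by intros; simp [smul_sub])
  have hT : ∀ a φ b, T a φ b = br a (φ b) - φ (br a b) := fun a φ b => rfl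
  have hTlie : ∀ a b φ, T (br a b) φ = T a (T b φ) - T b (T a φ) := by
    intro a b φ
    ext c
    simp only [hT, LinearMap.sub_apply, map_sub]
    have e1 := leibniz a b (φ c)
    have e2 := leibniz a b c
    rw [e1, e2]
    simp only [map_add]
    abel
  let lam : Module.End K A →ₗ[K] K := f ∘ₗ LinearMap.applyₗ r0
  have hlam : ∀ φ, lam φ = f (φ r0) := fun φ => rfl
  let Q : Submodule K (Module.End K A) :=
    { carrier := {φ | (∀ a, π (φ a) = 0) ∧ ∀ r, π r = 0 → φ r = lam φ • r}
      add_mem' := by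
        rintro φ ψ ⟨h1, h2⟩ ⟨h3, h4⟩
        refine ⟨fun a => by simp [h1, h3], fun r hr => ?_⟩
        rw [LinearMap.add_apply, h2 r hr, h4 r hr, map_add, add_smul]
      zero_mem' := ⟨by simp, by simp⟩
      smul_mem' := by
        rintro c φ ⟨h1, h2⟩
        refine ⟨fun a => by simp [h1], fun r hr => ?_⟩
        rw [LinearMap.smul_apply, h2 r hr, map_smul, smul_eq_mul, mul_smul] }
  have hQ : ∀ φ, φ ∈ Q ↔ (∀ a, π (φ a) = 0) ∧ ∀ r, π r = 0 → φ r = lam φ • r := fun _ => Iff.rfl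
  let P : Submodule K (Module.End K A) := (LinearMap.ker π).map br
  have hP : ∀ φ, φ ∈ P ↔ ∃ r, π r = 0 ∧ br r = φ := fun _ => Iff.rfl
  have lamP : ∀ φ ∈ P, lam φ = 0 := by
    intro φ hφ
    obtain ⟨r, hr, rfl⟩ := (hP φ).1 hφ
    rw [hlam, hab r r0 hr hr0, map_zero]
  have lamT : ∀ a, ∀ φ ∈ Q, lam (T a φ) = 0 := by
    intro a φ hφ
    have h1 : π (br a r0) = 0 := by rw [hom, hr0, lie_zero]
    rw [hlam, hT, hφ.2 r0 hr0, hφ.2 _ h1, map_smul, sub_self, map_zero]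
  have TQ : ∀ a, ∀ φ ∈ Q, T a φ ∈ Q := by
    intro a φ hφ
    refine ⟨fun b => ?_, fun r hr => ?_⟩
    · rw [hT, map_sub, hom, hφ.1, hφ.1, lie_zero, sub_zero]
    · have h1 : π (br a r) = 0 := by rw [hom, hr, lie_zero]
      rw [lamT a φ hφ, hT, hφ.2 r hr, hφ.2 _ h1, map_smul, sub_self, zero_smul]
  have TP : ∀ a, ∀ φ ∈ P, T a φ ∈ P := by
    intro a φ hφ
    obtain ⟨r, hr, rfl⟩ := (hP φ).1 hφ
    refine (hP _).2 ⟨br a r, by rw [hom, hr, lie_zero], ?_⟩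
    ext b
    rw [hT, leibniz]; abel
  have TR : ∀ r, π r = 0 → ∀ φ ∈ Q, T r φ = - (lam φ • br r) := by
    intro r hr φ hφ
    ext b
    have h1 : π (br r b) = 0 := by rw [hom, hr, zero_lie]
    rw [hT, hab r _ hr (hφ.1 b), hφ.2 _ h1]
    simp
  have TRP : ∀ r, π r = 0 → ∀ φ ∈ Q, T r φ ∈ P := by
    intro r hr φ hφ
    rw [TR r hr φ hφ]
    exact neg_mem (P.smul_mem _ ⟨r, hr, rfl⟩)
  -- the key element
  obtain ⟨φ, hφQ, hφ1, hφP⟩ : ∃ φ ∈ Q, lam φ = 1 ∧ ∀ a, T a φ ∈ P := by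
    obtain ⟨s, hs⟩ := LinearMap.exists_rightInverse_of_surjective π (LinearMap.range_eq_top.2 hπ)
    have hs' : ∀ x, π (s x) = x := fun x => LinearMap.congr_fun hs x
    let P' : Submodule K Q := P.comap Q.subtype
    let V := Q ⧸ P'
    let ρ0 : L → Module.End K V := fun x =>
      P'.mapQ P' ((T (s x)).restrict (TQ (s x))) (fun φ hφ => TP (s x) φ hφ)
    have hρ0 : ∀ x (φ : Q), ρ0 x (P'.mkQ φ) = P'.mkQ ⟨T (s x) φ, TQ _ _ φ.2⟩ := fun x φ => rfl
    let ρ : L →ₗ[K] Module.End K V :=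
      { toFun := ρ0
        map_add' := by
          intro x y
          refine Submodule.linearMap_qext _ (LinearMap.ext fun φ => ?_)
          simp only [LinearMap.comp_apply, LinearMap.add_apply, hρ0, ← map_add]
          congr 1
          ext1
          simp
        map_smul' := by
          intro c y
          refine Submodule.linearMap_qext _ (LinearMap.ext fun φ => ?_)
          simp only [LinearMap.comp_apply, LinearMap.smul_apply, hρ0, ← map_smul]
          congr 1
          ext1
          simp }
    have hρlie : ∀ x y v, ρ0 ⁅x, y⁆ v = ρ0 x (ρ0 y v) - ρ0 y (ρ0 x v) := by
      intro x y v
      obtain ⟨φ, rfl⟩ := P'.mkQ_surjective v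
      simp only [hρ0, ← map_sub]
      rw [Submodule.mkQ_apply, Submodule.mkQ_apply, Submodule.Quotient.eq]
      change T (s ⁅x, y⁆) φ - (T (s x) (T (s y) φ) - T (s y) (T (s x) φ)) ∈ P
      rw [← hTlie, ← LinearMap.sub_apply, ← map_sub]
      refine TRP _ ?_ φ φ.2
      rw [map_sub, hom, hs', hs', hs', sub_self]
    let _ : LieRingModule L V :=
      { bracket := fun x v => ρ0 x v
        add_lie := fun x y v => LinearMap.congr_fun (ρ.map_add x y) v
        lie_add := fun x v w => map_add (ρ0 x) v w
        leibniz_lie := fun x y v => by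
          change ρ0 x (ρ0 y v) = ρ0 ⁅x, y⁆ v + ρ0 y (ρ0 x v)
          rw [hρlie]; abel }
    let _ : LieModule K L V :=
      { smul_lie := fun c x v => LinearMap.congr_fun (ρ.map_smul c x) v
        lie_smul := fun c x v => map_smul (ρ0 x) c v }
    have hact : ∀ (x : L) (v : V), ⁅x, v⁆ = ρ0 x v := fun x v => rfl
    let l : V →ₗ[K] K := P'.liftQ (lam ∘ₗ Q.subtype) (fun φ hφ => lamP φ hφ)
    have hl : ∀ φ : Q, l (P'.mkQ φ) = lam φ := fun φ => rfl
    have hl0 : l ≠ 0 := by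
      intro h0
      obtain ⟨g, hg⟩ := LinearMap.exists_leftInverse_of_injective (LinearMap.ker π).subtype
        (Submodule.ker_subtype _)
      have hg' : ∀ r, π r = 0 → (g r : A) = r := fun r hr =>
        congrArg Subtype.val (LinearMap.congr_fun hg (⟨r, hr⟩ : LinearMap.ker π))
      let ψ : Module.End K A := (LinearMap.ker π).subtype ∘ₗ g
      have hψ1 : lam ψ = 1 := by
        rw [hlam, ← hf]
        exact congrArg f (hg' r0 hr0)
      have hψ : ψ ∈ Q := by
        refine ⟨fun a => (g a).2, fun r hr => ?_⟩
        rw [hψ1, one_smul]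
        exact hg' r hr
      have h1 := hl ⟨ψ, hψ⟩
      rw [h0, hψ1] at h1
      simp at h1
    obtain ⟨v, hv, hv2⟩ := levi_weyl (K := K) (L := L) _ (V := V) l rfl (by
      intro x v
      obtain ⟨φ, rfl⟩ := P'.mkQ_surjective v
      rw [hact, hρ0, hl]
      exact lamT _ _ φ.2) hl0
    obtain ⟨φ, rfl⟩ := P'.mkQ_surjective v
    rw [hl] at hv
    have h3 : ∀ a, T a φ ∈ P := by
      intro a
      have h4 : T (s (π a)) φ ∈ P := by
        have h5 := hv2 (π a)
        rw [hact, hρ0, Submodule.mkQ_apply, Submodule.Quotient.mk_eq_zero] at h5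
        exact h5
      have h6 : T (a - s (π a)) φ ∈ P := TRP _ (by rw [map_sub, hs', sub_self]) φ φ.2
      rw [map_sub, LinearMap.sub_apply] at h6
      simpa using add_mem h6 h4
    refine ⟨(lam φ)⁻¹ • (φ : Module.End K A), Q.smul_mem _ φ.2, by simp [hv], fun a => ?_⟩
    rw [map_smul]
    exact P.smul_mem _ (h3 a)
  rcases hZ with hZ | hZ
  · refine ⟨LinearMap.ker (T.flip φ), ?_, ?_⟩
    · intro x hx y hy
      rw [LinearMap.mem_ker, LinearMap.flip_apply] at hx hy ⊢
      rw [hTlie, hx, hy, map_zero, map_zero, sub_zero]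
    · rw [isCompl_iff, disjoint_iff, codisjoint_iff, eq_bot_iff, eq_top_iff]
      constructor
      · rintro x ⟨hx, hx2⟩
        have hx3 : T x φ = 0 := hx
        have hx4 : π x = 0 := hx2
        rw [TR x hx4 φ hφQ, hφ1, one_smul, neg_eq_zero] at hx3
        exact hZ x hx4 (fun a => by rw [hx3]; rfl)
      · rintro a -
        obtain ⟨r, hr, hr2⟩ := (hP _).1 (hφP a)
        rw [Submodule.mem_sup]
        refine ⟨a + r, ?_, -r, neg_mem hr, by abel⟩
        change T (a + r) φ = 0
        rw [map_add, LinearMap.add_apply, TR r hr φ hφQ, hφ1, ← hr2]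
        simp
  · have hT0 : ∀ a, T a φ = 0 := by
      intro a
      obtain ⟨r, hr, hr2⟩ := (hP _).1 (hφP a)
      rw [← hr2]
      ext b
      exact hZ r hr b
    refine ⟨LinearMap.ker φ, ?_, ?_⟩
    · intro x _ y hy
      have h1 := hT x φ y
      rw [LinearMap.mem_ker] at hy ⊢
      rw [hT0, hy, map_zero, zero_sub, LinearMap.zero_apply] at h1
      exact neg_eq_zero.1 h1.symm
    · rw [isCompl_iff, disjoint_iff, codisjoint_iff, eq_bot_iff, eq_top_iff]
      have hid : ∀ r, π r = 0 → φ r = r := by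
        intro r hr
        rw [hφQ.2 r hr, hφ1, one_smul]
      constructor
      · rintro x ⟨hx, hx2⟩
        have hx3 : φ x = 0 := hx
        rw [hid x hx2] at hx3
        exact hx3
      · rintro a -
        rw [Submodule.mem_sup]
        refine ⟨a - φ a, ?_, φ a, hφQ.1 a, by abel⟩
        rw [LinearMap.mem_ker, map_sub, hid _ (hφQ.1 a), sub_self]

/-- The bracket induced on the quotient by an ideal. -/
def leviQuotBr {K A : Type*} [Field K] [AddCommGroup A] [Module K A]
    (br : A →ₗ[K] A →ₗ[K] A) (J : Submodule K A)
    (hJ : ∀ a : A, ∀ x ∈ J, br a x ∈ J ∧ br x a ∈ J) : (A ⧸ J) →ₗ[K] (A ⧸ J) →ₗ[K] (A ⧸ J) :=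
  J.liftQ
    { toFun := fun a => J.mapQ J (br a) (fun x hx => (hJ a x hx).1)
      map_add' := by
        intro a b
        refine Submodule.linearMap_qext _ (LinearMap.ext fun c => ?_)
        simp
      map_smul' := by
        intro a b
        refine Submodule.linearMap_qext _ (LinearMap.ext fun c => ?_)
        simp }
    (by
      intro x hx
      rw [LinearMap.mem_ker]
      refine Submodule.linearMap_qext _ (LinearMap.ext fun c => ?_)
      simpa using (hJ c x hx).2)

theorem leviQuotBr_mk {K A : Type*} [Field K] [AddCommGroup A] [Module K A]
    (br : A →ₗ[K] A →ₗ[K] A) (J : Submodule K A)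
    (hJ : ∀ a : A, ∀ x ∈ J, br a x ∈ J ∧ br x a ∈ J) (a b : A) :
    leviQuotBr br J hJ (J.mkQ a) (J.mkQ b) = J.mkQ (br a b) := rfl

theorem leviQuotBr_leibniz {K A : Type*} [Field K] [AddCommGroup A] [Module K A]
    (br : A →ₗ[K] A →ₗ[K] A)
    (leibniz : ∀ a b c : A, br a (br b c) = br (br a b) c + br b (br a c))
    (J : Submodule K A)
    (hJ : ∀ a : A, ∀ x ∈ J, br a x ∈ J ∧ br x a ∈ J) (a b c : A ⧸ J) :
    leviQuotBr br J hJ a (leviQuotBr br J hJ b c) =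
      leviQuotBr br J hJ (leviQuotBr br J hJ a b) c
        + leviQuotBr br J hJ b (leviQuotBr br J hJ a c) := by
  obtain ⟨a, rfl⟩ := J.mkQ_surjective a
  obtain ⟨b, rfl⟩ := J.mkQ_surjective b
  obtain ⟨c, rfl⟩ := J.mkQ_surjective c
  simp only [leviQuotBr_mk, leibniz a b c, map_add]

/-- The bracket induced on a subalgebra. -/
def leviSubBr {K A : Type*} [Field K] [AddCommGroup A] [Module K A]
    (br : A →ₗ[K] A →ₗ[K] A) (B : Submodule K A)
    (hB : ∀ x ∈ B, ∀ y ∈ B, br x y ∈ B) : B →ₗ[K] B →ₗ[K] B :=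
  LinearMap.mk₂ K (fun x y => ⟨br x y, hB x x.2 y y.2⟩)
    (by intros; ext1; simp) (by intros; ext1; simp) (by intros; ext1; simp) (by intros; ext1; simp)

theorem leviSubBr_coe {K A : Type*} [Field K] [AddCommGroup A] [Module K A]
    (br : A →ₗ[K] A →ₗ[K] A) (B : Submodule K A)
    (hB : ∀ x ∈ B, ∀ y ∈ B, br x y ∈ B) (x y : B) :
    (leviSubBr br B hB x y : A) = br x y := rfl

theorem leviSubBr_leibniz {K A : Type*} [Field K] [AddCommGroup A] [Module K A]
    (br : A →ₗ[K] A →ₗ[K] A)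
    (leibniz : ∀ a b c : A, br a (br b c) = br (br a b) c + br b (br a c))
    (B : Submodule K A) (hB : ∀ x ∈ B, ∀ y ∈ B, br x y ∈ B) (a b c : B) :
    leviSubBr br B hB a (leviSubBr br B hB b c) =
      leviSubBr br B hB (leviSubBr br B hB a b) c
        + leviSubBr br B hB b (leviSubBr br B hB a c) := by
  exact Subtype.ext (leibniz (a : A) b c)

theorem levi_reduce {K L A : Type*} [Field K] [AddCommGroup L] [Module K L]
    [AddCommGroup A] [Module K A]
    (br : A →ₗ[K] A →ₗ[K] A)
    (π : A →ₗ[K] L) (hπ : Function.Surjective π)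
    (J : Submodule K A) (hJ : ∀ a : A, ∀ x ∈ J, br a x ∈ J ∧ br x a ∈ J)
    (hJk : J ≤ LinearMap.ker π)
    (h1 : ∃ S : Submodule K (A ⧸ J), (∀ x ∈ S, ∀ y ∈ S, leviQuotBr br J hJ x y ∈ S) ∧
      IsCompl S (LinearMap.ker (J.liftQ π hJk)))
    (h2 : ∀ (B : Submodule K A) (hB : ∀ x ∈ B, ∀ y ∈ B, br x y ∈ B),
      Function.Surjective (π.domRestrict B) → (∀ x ∈ B, π x = 0 → x ∈ J) →
      ∃ S : Submodule K B, (∀ x ∈ S, ∀ y ∈ S, leviSubBr br B hB x y ∈ S) ∧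
        IsCompl S (LinearMap.ker (π.domRestrict B))) :
    ∃ S : Submodule K A, (∀ x ∈ S, ∀ y ∈ S, br x y ∈ S) ∧ IsCompl S (LinearMap.ker π) := by
  obtain ⟨S', hS'c, hS'⟩ := h1
  have hlift : ∀ a, J.liftQ π hJk (J.mkQ a) = π a := fun a => rfl
  have hB : ∀ x ∈ S'.comap J.mkQ, ∀ y ∈ S'.comap J.mkQ, br x y ∈ S'.comap J.mkQ := by
    intro x hx y hy
    rw [Submodule.mem_comap, ← leviQuotBr_mk br J hJ]
    exact hS'c _ hx _ hy
  obtain ⟨S, hSc, hS⟩ := h2 (S'.comap J.mkQ) hB (by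
      intro x
      obtain ⟨a, rfl⟩ := hπ x
      have ha : J.mkQ a ∈ S' ⊔ LinearMap.ker (J.liftQ π hJk) := by rw [hS'.sup_eq_top]; trivial
      obtain ⟨u, hu, v, hv, huv⟩ := Submodule.mem_sup.1 ha
      obtain ⟨u, rfl⟩ := J.mkQ_surjective u
      refine ⟨⟨u, hu⟩, ?_⟩
      change π u = π a
      rw [← hlift a, ← huv, map_add, LinearMap.mem_ker.1 hv, add_zero, hlift]) (by
      intro x hx hx0
      have : J.mkQ x ∈ S' ⊓ LinearMap.ker (J.liftQ π hJk) := ⟨hx, hx0⟩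
      rw [hS'.inf_eq_bot, Submodule.mem_bot, Submodule.mkQ_apply,
        Submodule.Quotient.mk_eq_zero] at this
      exact this)
  have hB2 := hS'
  refine ⟨S.map (S'.comap J.mkQ).subtype, ?_, ?_⟩
  · rintro _ ⟨x, hx, rfl⟩ _ ⟨y, hy, rfl⟩
    exact ⟨_, hSc x hx y hy, rfl⟩
  · rw [isCompl_iff, disjoint_iff, codisjoint_iff, eq_bot_iff, eq_top_iff]
    constructor
    · rintro _ ⟨⟨x, hx, rfl⟩, hx2⟩
      have : x ∈ S ⊓ LinearMap.ker (π.domRestrict (S'.comap J.mkQ)) := ⟨hx, hx2⟩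
      rw [hS.inf_eq_bot, Submodule.mem_bot] at this
      rw [this]; simp
    · rintro a -
      have ha : J.mkQ a ∈ S' ⊔ LinearMap.ker (J.liftQ π hJk) := by rw [hS'.sup_eq_top]; trivial
      obtain ⟨u, hu, v, hv, huv⟩ := Submodule.mem_sup.1 ha
      obtain ⟨u, rfl⟩ := J.mkQ_surjective u
      have h3 : (⟨u, hu⟩ : S'.comap J.mkQ) ∈ S ⊔ LinearMap.ker (π.domRestrict (S'.comap J.mkQ)) := by
        rw [hS.sup_eq_top]; trivial
      obtain ⟨s, hs, t, ht, hst⟩ := Submodule.mem_sup.1 h3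
      rw [Submodule.mem_sup]
      refine ⟨s, ⟨s, hs, rfl⟩, a - s, ?_, by abel⟩
      have e1 : (s : A) + t = u := congrArg Subtype.val hst
      have e2 : π t = 0 := ht
      have e3 : π u = π a := by
        rw [← hlift a, ← huv, map_add, LinearMap.mem_ker.1 hv, add_zero, hlift]
      rw [LinearMap.mem_ker, map_sub, ← e3, ← e1, map_add, e2]
      simp

theorem levi_abelian {K L : Type*} [Field K] [CharZero K] [LieRing L] [LieAlgebra K L]
    [FiniteDimensional K L] [LieAlgebra.IsKilling K L] (n : ℕ) :
    ∀ {A : Type*} [AddCommGroup A] [Module K A] [FiniteDimensional K A]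
    (br : A →ₗ[K] A →ₗ[K] A)
    (_ : ∀ a b c : A, br a (br b c) = br (br a b) c + br b (br a c))
    (π : A →ₗ[K] L) (_ : Function.Surjective π)
    (_ : ∀ a b, π (br a b) = ⁅π a, π b⁆)
    (_ : ∀ r s, π r = 0 → π s = 0 → br r s = 0) (_ : Module.finrank K A = n),
    ∃ S : Submodule K A, (∀ x ∈ S, ∀ y ∈ S, br x y ∈ S) ∧ IsCompl S (LinearMap.ker π) := by
  induction n using Nat.strong_induction_on with
  | _ n ih =>
  intro A _ _ _ br leibniz π hπ hom hab hn
  by_cases hZ1 : ∀ r, π r = 0 → (∀ a, br r a = 0) → r = 0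
  · exact levi_core br leibniz π hπ hom hab (Or.inl hZ1)
  by_cases hZ2 : ∀ r, π r = 0 → ∀ a, br r a = 0
  · exact levi_core br leibniz π hπ hom hab (Or.inr hZ2)
  let Z : Submodule K A := LinearMap.ker π ⊓ LinearMap.ker br
  have hZ : ∀ r, r ∈ Z ↔ π r = 0 ∧ br r = 0 := fun r => Iff.rfl
  have hZi : ∀ a : A, ∀ x ∈ Z, br a x ∈ Z ∧ br x a ∈ Z := by
    intro a x hx
    obtain ⟨h1, h2⟩ := (hZ x).1 hx
    refine ⟨(hZ _).2 ⟨by rw [hom, h1, lie_zero], ?_⟩, ?_⟩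
    · ext b
      have := leibniz a x b
      rw [h2] at this
      simpa using this.symm
    · rw [h2]; exact Z.zero_mem
  refine levi_reduce br π hπ Z hZi inf_le_left ?_ ?_
  · refine ih (Module.finrank K (A ⧸ Z)) ?_ _ (leviQuotBr_leibniz br leibniz Z hZi) _ ?_ ?_ ?_ rfl
    · have hne : 0 < Module.finrank K Z := by
        rw [Nat.pos_iff_ne_zero]
        intro h0
        have hbot : Z = ⊥ := Submodule.finrank_eq_zero.1 h0
        apply hZ1
        intro r hr hr2
        have : r ∈ Z := (hZ r).2 ⟨hr, LinearMap.ext hr2⟩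
        rw [hbot] at this
        simpa using this
      have := Z.finrank_quotient_add_finrank
      omega
    · intro x
      obtain ⟨a, rfl⟩ := hπ x
      exact ⟨Z.mkQ a, rfl⟩
    · intro a b
      obtain ⟨a, rfl⟩ := Z.mkQ_surjective a
      obtain ⟨b, rfl⟩ := Z.mkQ_surjective b
      exact hom a b
    · intro a b ha hb
      obtain ⟨a, rfl⟩ := Z.mkQ_surjective a
      obtain ⟨b, rfl⟩ := Z.mkQ_surjective b
      rw [leviQuotBr_mk, hab a b ha hb, map_zero]
  · intro B hB hBs hBJ
    refine ih (Module.finrank K B) ?_ _ (leviSubBr_leibniz br leibniz B hB) _ hBs ?_ ?_ rfl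
    · rw [← hn]
      apply Submodule.finrank_lt
      rintro rfl
      apply hZ2
      intro r hr a
      rw [((hZ r).1 (hBJ r trivial hr)).2]; rfl
    · intro a b
      exact hom a b
    · intro a b ha hb
      ext1
      exact hab a b ha hb

theorem levi_der_map {K A A' : Type*} [Field K] [AddCommGroup A] [Module K A]
    [AddCommGroup A'] [Module K A']
    (br : A →ₗ[K] A →ₗ[K] A) (br' : A' →ₗ[K] A' →ₗ[K] A') (f : A →ₗ[K] A')
    (hf : ∀ a b, f (br a b) = br' (f a) (f b)) (I : Submodule K A) (I' : Submodule K A')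
    (h : I ≤ I'.comap f) (k : ℕ) :
    derSeriesIn br I k ≤ (derSeriesIn br' I' k).comap f := by
  induction k with
  | zero => exact h
  | succ k ih =>
    refine Submodule.span_le.2 ?_
    rintro _ ⟨a, ha, b, hb, rfl⟩
    change f (br a b) ∈ derSeriesIn br' I' (k + 1)
    rw [hf]
    exact Submodule.subset_span ⟨f a, ih ha, f b, ih hb, rfl⟩

theorem levi_der_add {K A : Type*} [Field K] [AddCommGroup A] [Module K A]
    (br : A →ₗ[K] A →ₗ[K] A) (I : Submodule K A) (m k : ℕ) :
    derSeriesIn br (derSeriesIn br I m) k = derSeriesIn br I (m + k) := by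
  induction k with
  | zero => rfl
  | succ k ih =>
    change bracketSpan br (derSeriesIn br (derSeriesIn br I m) k)
      (derSeriesIn br (derSeriesIn br I m) k) =
      bracketSpan br (derSeriesIn br I (m + k)) (derSeriesIn br I (m + k))
    rw [ih]

theorem levi_solvable {K L : Type*} [Field K] [CharZero K] [LieRing L] [LieAlgebra K L]
    [FiniteDimensional K L] [LieAlgebra.IsKilling K L] (m : ℕ) :
    ∀ {A : Type*} [AddCommGroup A] [Module K A] [FiniteDimensional K A]
    (br : A →ₗ[K] A →ₗ[K] A)
    (_ : ∀ a b c : A, br a (br b c) = br (br a b) c + br b (br a c))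
    (π : A →ₗ[K] L) (_ : Function.Surjective π)
    (_ : ∀ a b, π (br a b) = ⁅π a, π b⁆)
    (_ : derSeriesIn br (LinearMap.ker π) m = ⊥),
    ∃ S : Submodule K A, (∀ x ∈ S, ∀ y ∈ S, br x y ∈ S) ∧ IsCompl S (LinearMap.ker π) := by
  induction m with
  | zero =>
    intro A _ _ _ br leibniz π hπ hom hm
    refine ⟨⊤, fun _ _ _ _ => trivial, ?_⟩
    have : LinearMap.ker π = ⊥ := hm
    rw [this]
    exact isCompl_top_bot
  | succ m ih =>
    intro A _ _ _ br leibniz π hπ hom hm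
    let J := bracketSpan br (LinearMap.ker π) (LinearMap.ker π)
    have hmem : ∀ a b, π a = 0 → π b = 0 → br a b ∈ J := fun a b ha hb =>
      Submodule.subset_span ⟨a, ha, b, hb, rfl⟩
    have hJi : ∀ a : A, ∀ x ∈ J, br a x ∈ J ∧ br x a ∈ J := by
      intro a x hx
      have : J ≤ J.comap (br a) ⊓ J.comap (br.flip a) := by
        refine Submodule.span_le.2 ?_
        rintro _ ⟨r, hr, s, hs, rfl⟩
        have hr' : π r = 0 := hr
        have hs' : π s = 0 := hs
        have l1 : ∀ a t, π t = 0 → π (br a t) = 0 := fun a t ht => by rw [hom, ht, lie_zero]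
        have l2 : ∀ a t, π t = 0 → π (br t a) = 0 := fun a t ht => by rw [hom, ht, zero_lie]
        constructor
        · change br a (br r s) ∈ J
          rw [leibniz]
          exact add_mem (hmem _ _ (l1 _ _ hr') hs') (hmem _ _ hr' (l1 _ _ hs'))
        · change br (br r s) a ∈ J
          have e := leibniz r s a
          rw [← sub_eq_iff_eq_add] at e
          rw [← e]
          exact sub_mem (hmem _ _ hr' (l2 _ _ hs')) (hmem _ _ hs' (l2 _ _ hr'))
      exact this hx
    have hJk : J ≤ LinearMap.ker π := by
      refine Submodule.span_le.2 ?_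
      rintro _ ⟨r, hr, s, hs, rfl⟩
      change π (br r s) = 0
      rw [hom, LinearMap.mem_ker.1 hr, zero_lie]
    refine levi_reduce br π hπ J hJi hJk ?_ ?_
    · refine levi_abelian _ _ (leviQuotBr_leibniz br leibniz J hJi) _ ?_ ?_ ?_ rfl
      · intro x
        obtain ⟨a, rfl⟩ := hπ x
        exact ⟨J.mkQ a, rfl⟩
      · intro a b
        obtain ⟨a, rfl⟩ := J.mkQ_surjective a
        obtain ⟨b, rfl⟩ := J.mkQ_surjective b
        exact hom a b
      · intro a b ha hb
        obtain ⟨a, rfl⟩ := J.mkQ_surjective a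
        obtain ⟨b, rfl⟩ := J.mkQ_surjective b
        rw [leviQuotBr_mk, Submodule.mkQ_apply, Submodule.Quotient.mk_eq_zero]
        exact hmem a b ha hb
    · intro B hB hBs hBJ
      refine ih _ (leviSubBr_leibniz br leibniz B hB) _ hBs (fun a b => hom a b) ?_
      rw [eq_bot_iff]
      intro x hx
      have h1 := levi_der_map (leviSubBr br B hB) br B.subtype (fun a b => rfl)
        (LinearMap.ker (π.domRestrict B)) J (fun x hx => hBJ x x.2 hx) m hx
      have h2 : derSeriesIn br J m = ⊥ := by
        have := levi_der_add br (LinearMap.ker π) 1 m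
        rw [add_comm, hm] at this
        exact this
      rw [h2] at h1
      rw [Submodule.mem_bot]
      ext1
      simpa using h1

/-- Levi's theorem: if `R` is the solvable radical (the unique maximal
solvable ideal) of a finite-dimensional (left) Leibniz algebra `A` over an
algebraically closed field of characteristic zero, then there is a subalgebra `S`
of `A` which is a semisimple Lie algebra (the bracket on `S` is antisymmetric and
`S` has no nonzero solvable ideals) such that `A = S ⊕ R` as vector spaces. -/
theorem leibniz_levi_decomposition
    {K A : Type*} [Field K] [IsAlgClosed K] [CharZero K]
    [AddCommGroup A] [Module K A] [FiniteDimensional K A]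
    (br : A →ₗ[K] A →ₗ[K] A)
    (leibniz : ∀ a b c : A, br a (br b c) = br (br a b) c + br b (br a c))
    (R : Submodule K A)
    (hRideal : ∀ a : A, ∀ x ∈ R, br a x ∈ R ∧ br x a ∈ R)
    (hRsolv : ∃ m : ℕ, derSeriesIn br R m = ⊥)
    (hRmax : ∀ I : Submodule K A, (∀ a : A, ∀ x ∈ I, br a x ∈ I ∧ br x a ∈ I) →
      (∃ m : ℕ, derSeriesIn br I m = ⊥) → I ≤ R) :
    ∃ S : Submodule K A,
      (∀ x ∈ S, ∀ y ∈ S, br x y ∈ S) ∧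
      (∀ x ∈ S, ∀ y ∈ S, br x y = -br y x) ∧
      (∀ I : Submodule K A, I ≤ S →
        (∀ s ∈ S, ∀ x ∈ I, br s x ∈ I ∧ br x s ∈ I) →
        (∃ m : ℕ, derSeriesIn br I m = ⊥) → I = ⊥) ∧
      IsCompl S R := by
  obtain ⟨mR, hmR⟩ := hRsolv
  -- squares lie in the radical
  have hsq : ∀ x, br x x ∈ R := by
    let I : Submodule K A := Submodule.span K {z | ∃ x, br x x = z}
    have hker : I ≤ LinearMap.ker br := by
      refine Submodule.span_le.2 ?_
      rintro _ ⟨x, rfl⟩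
      refine LinearMap.mem_ker.2 (LinearMap.ext fun y => ?_)
      simpa using leibniz x x y
    have hsqI : ∀ x, br x x ∈ I := fun x => Submodule.subset_span ⟨x, rfl⟩
    have hI : I ≤ R := by
      apply hRmax
      · intro a x hx
        refine ⟨?_, ?_⟩
        · have : I ≤ I.comap (br a) := by
            refine Submodule.span_le.2 ?_
            rintro _ ⟨x, rfl⟩
            change br a (br x x) ∈ I
            have e : br a (br x x) =
                br (br a x + x) (br a x + x) - br (br a x) (br a x) - br x x := by
              rw [leibniz]
              simp only [map_add, LinearMap.add_apply]
              abel
            rw [e]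
            exact sub_mem (sub_mem (hsqI _) (hsqI _)) (hsqI _)
          exact this hx
        · rw [LinearMap.mem_ker.1 (hker hx)]
          exact I.zero_mem
      · refine ⟨1, ?_⟩
        rw [eq_bot_iff]
        refine Submodule.span_le.2 ?_
        rintro _ ⟨a, ha, b, hb, rfl⟩
        rw [LinearMap.mem_ker.1 (hker ha)]
        exact Submodule.zero_mem _
    exact fun x => hI (hsqI x)
  have hskew : ∀ x y, br x y + br y x ∈ R := by
    intro x y
    have e : br x y + br y x = br (x + y) (x + y) - br x x - br y y := by
      simp only [map_add, LinearMap.add_apply]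
      abel
    rw [e]
    exact sub_mem (sub_mem (hsq _) (hsq _)) (hsq _)
  -- an ideal containing a solvable ideal modulo `R` is solvable
  have hsolv : ∀ (I : Submodule K A) (m : ℕ), derSeriesIn br I m ≤ R →
      ∃ k, derSeriesIn br I k = ⊥ := by
    intro I m h
    refine ⟨m + mR, ?_⟩
    rw [← levi_der_add, eq_bot_iff, ← hmR]
    exact levi_der_map br br LinearMap.id (fun _ _ => rfl) _ _ h mR
  let bq := leviQuotBr br R hRideal
  let instRing : LieRing (A ⧸ R) :=
    { bracket := fun x y => bq x y
      add_lie := fun x y z => by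
        change bq (x + y) z = bq x z + bq y z
        simp
      lie_add := fun x y z => map_add (bq x) y z
      lie_self := fun x => by
        obtain ⟨x, rfl⟩ := R.mkQ_surjective x
        change bq (R.mkQ x) (R.mkQ x) = 0
        rw [leviQuotBr_mk, Submodule.mkQ_apply, Submodule.Quotient.mk_eq_zero]
        exact hsq x
      leibniz_lie := fun x y z => leviQuotBr_leibniz br leibniz R hRideal x y z }
  let instAlg : LieAlgebra K (A ⧸ R) :=
    { lie_smul := fun c x y => map_smul (bq x) c y }
  have hom : ∀ a b, R.mkQ (br a b) = ⁅R.mkQ a, R.mkQ b⁆ := fun a b => rfl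
  have hrad : LieAlgebra.HasTrivialRadical K (A ⧸ R) := by
    rw [LieAlgebra.hasTrivialRadical_iff]
    let I := LieAlgebra.radical K (A ⧸ R)
    obtain ⟨k, hk⟩ := LieAlgebra.IsSolvable.solvable K I
    rw [LieIdeal.derivedSeries_eq_bot_iff] at hk
    have hder : ∀ n, derSeriesIn br (I.toSubmodule.comap R.mkQ) n ≤
        (LieAlgebra.derivedSeriesOfIdeal K (A ⧸ R) n I).toSubmodule.comap R.mkQ := by
      intro n
      induction n with
      | zero => exact le_rfl
      | succ n ih =>
        refine Submodule.span_le.2 ?_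
        rintro _ ⟨a, ha, b, hb, rfl⟩
        change R.mkQ (br a b) ∈ LieAlgebra.derivedSeriesOfIdeal K (A ⧸ R) (n + 1) I
        rw [LieAlgebra.derivedSeriesOfIdeal_succ, hom]
        exact LieSubmodule.lie_mem_lie (ih ha) (ih hb)
    have hle : I.toSubmodule.comap R.mkQ ≤ R := by
      apply hRmax
      · intro a x hx
        have hx' : R.mkQ x ∈ I := hx
        constructor
        · change R.mkQ (br a x) ∈ I
          rw [hom]
          exact I.lie_mem hx'
        · change R.mkQ (br x a) ∈ I
          rw [hom]
          exact lie_mem_left K (A ⧸ R) I _ _ hx'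
      · apply hsolv _ k
        intro x hx
        have h1 := hder k hx
        rw [hk] at h1
        have h2 : R.mkQ x = 0 := by simpa using h1
        rwa [Submodule.mkQ_apply, Submodule.Quotient.mk_eq_zero] at h2
    rw [LieSubmodule.eq_bot_iff]
    intro x hx
    obtain ⟨x, rfl⟩ := R.mkQ_surjective x
    rw [Submodule.mkQ_apply, Submodule.Quotient.mk_eq_zero]
    exact hle hx
  obtain ⟨S, hSc, hS⟩ := levi_solvable (K := K) (L := A ⧸ R) mR br leibniz R.mkQ R.mkQ_surjective
    hom (by rw [Submodule.ker_mkQ]; exact hmR)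
  rw [Submodule.ker_mkQ] at hS
  have hdisj : ∀ x ∈ S, x ∈ R → x = 0 := by
    intro x h1 h2
    have : x ∈ S ⊓ R := ⟨h1, h2⟩
    rw [hS.inf_eq_bot] at this
    simpa using this
  refine ⟨S, hSc, ?_, ?_, hS⟩
  · intro x hx y hy
    exact eq_neg_of_add_eq_zero_left
      (hdisj _ (add_mem (hSc x hx y hy) (hSc y hy x hx)) (hskew x y))
  · rintro I hIS hI ⟨m, hm⟩
    have hle : I ⊔ R ≤ R := by
      apply hRmax
      · intro a x hx
        have ha : a ∈ S ⊔ R := by rw [hS.sup_eq_top]; trivial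
        obtain ⟨s, hs, r, hr, rfl⟩ := Submodule.mem_sup.1 ha
        obtain ⟨i, hi, t, ht, rfl⟩ := Submodule.mem_sup.1 hx
        have hIl : I ≤ I ⊔ R := le_sup_left
        have hRl : R ≤ I ⊔ R := le_sup_right
        simp only [map_add, LinearMap.add_apply]
        exact ⟨add_mem (add_mem (hIl (hI s hs i hi).1) (hRl (hRideal i r hr).2))
            (hRl (add_mem (hRideal s t ht).1 (hRideal r t ht).1)),
          add_mem (add_mem (hIl (hI s hs i hi).2) (hRl (hRideal s t ht).2))
            (hRl (add_mem (hRideal i r hr).1 (hRideal r t ht).2))⟩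
      · apply hsolv _ m
        have h1 : ∀ n, derSeriesIn br (I ⊔ R) n ≤ derSeriesIn br I n ⊔ R := by
          intro n
          induction n with
          | zero => exact le_rfl
          | succ n ih =>
            refine Submodule.span_le.2 ?_
            rintro _ ⟨a, ha, b, hb, rfl⟩
            obtain ⟨i, hi, r, hr, rfl⟩ := Submodule.mem_sup.1 (ih ha)
            obtain ⟨j, hj, t, ht, rfl⟩ := Submodule.mem_sup.1 (ih hb)
            have hRl : R ≤ derSeriesIn br I (n + 1) ⊔ R := le_sup_right
            have hIl : derSeriesIn br I (n + 1) ≤ derSeriesIn br I (n + 1) ⊔ R := le_sup_left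
            have hij : br i j ∈ derSeriesIn br I (n + 1) :=
              Submodule.subset_span ⟨i, hi, j, hj, rfl⟩
            simp only [map_add, LinearMap.add_apply]
            exact add_mem (add_mem (hIl hij) (hRl (hRideal j r hr).2))
              (hRl (add_mem (hRideal i t ht).1 (hRideal r t ht).1))
        refine (h1 m).trans ?_
        rw [hm]
        simp
    rw [eq_bot_iff]
    intro x hx
    rw [Submodule.mem_bot]
    exact hdisj x (hIS hx) (hle (le_sup_left (a := I) (b := R) hx))
end

section
/- Let A be a finite-dimensional (left) Leibniz algebra over a field and let L be a Lie subset of A that spans A. Suppose that the left multiplication operator L_a is nilpotent for all a ∈ L. Then A is a nilpotent Leibniz algebra. -/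
section JacobsonEngel

attribute [local instance] LieRing.ofAssociativeRing

/-- Extending a Lie subalgebra of nilpotent operators by a nilpotent normalizing element. -/
theorem jacobson_extend {K A : Type*} [Field K] [AddCommGroup A] [Module K A]
    [FiniteDimensional K A] (H : LieSubalgebra K (Module.End K A))
    (hH : ∀ x ∈ H, IsNilpotent x) (x : Module.End K A) (hx₁ : x ∈ H.normalizer)
    (hx : IsNilpotent x) :
    ∃ H' : LieSubalgebra K (Module.End K A),
      H'.toSubmodule = Submodule.span K {x} ⊔ H.toSubmodule ∧ ∀ y ∈ H', IsNilpotent y := by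
  let K' : LieSubalgebra K (Module.End K A) :=
    { (Submodule.span K {x}) ⊔ (H : Submodule K (Module.End K A)) with
      lie_mem' := fun {y z} => LieSubalgebra.lie_mem_sup_of_mem_normalizer hx₁ }
  have hxK' : x ∈ K' := Submodule.mem_sup_left (Submodule.subset_span (Set.mem_singleton _))
  have hKK' : H ≤ K' := (LieSubalgebra.toSubmodule_le_toSubmodule H K').mp le_sup_right
  have hK' : K' ≤ H.normalizer := by
    rw [← LieSubalgebra.toSubmodule_le_toSubmodule]
    exact sup_le ((Submodule.span_singleton_le_iff_mem _ _).mpr hx₁) H.le_normalizer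
  refine ⟨K', rfl, ?_⟩
  obtain ⟨I, hI₁ : (I : LieSubalgebra K K') = LieSubalgebra.ofLe hKK'⟩ :=
    LieSubalgebra.exists_nested_lieIdeal_ofLe_normalizer hKK' hK'
  have hI₂ : Submodule.span K {(⟨x, hxK'⟩ : K')} ⊔ LieSubmodule.toSubmodule I = ⊤ := by
    rw [← LieIdeal.toLieSubalgebra_toSubmodule K K' I, hI₁]
    apply Submodule.map_injective_of_injective
      (K' : Submodule K (Module.End K A)).injective_subtype
    simp only [LieSubalgebra.coe_ofLe, Submodule.map_sup, Submodule.map_subtype_range_inclusion,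
      Submodule.map_top, Submodule.range_subtype]
    rw [Submodule.map_subtype_span_singleton]
  have hIH : ∀ z : I, ((z : K') : Module.End K A) ∈ H := by
    intro z
    have hz : (z : K') ∈ (I : LieSubalgebra K K') := z.2
    rw [hI₁, LieSubalgebra.mem_ofLe] at hz
    exact hz
  have hIn : LieModule.IsNilpotent I A := by
    rw [LieModule.isNilpotent_iff_forall' (R := K)]
    intro z
    exact hH _ (hIH z)
  have hN : LieModule.IsNilpotent K' A :=
    LieSubmodule.isNilpotentOfIsNilpotentSpanSupEqTop hI₂ (by exact hx) hIn
  intro y hy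
  rw [LieModule.isNilpotent_iff_forall' (R := K)] at hN
  exact hN ⟨y, hy⟩

/-- Outside a nilpotent subalgebra there is an element of the Lie set normalizing it. -/
theorem jacobson_exists_normalizing {K A : Type*} [Field K] [AddCommGroup A] [Module K A]
    [FiniteDimensional K A] (S : Set (Module.End K A))
    (hS : ∀ a ∈ S, ∀ b ∈ S, ⁅a, b⁆ ∈ S)
    (H : LieSubalgebra K (Module.End K A))
    (hH : ∀ x ∈ H, IsNilpotent x)
    (hspan : H.toSubmodule ≤ Submodule.span K (S ∩ H))
    (s₀ : Module.End K A) (hs₀ : s₀ ∈ S) (hs₀H : s₀ ∉ H) :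
    ∃ s ∈ S, s ∉ H ∧ s ∈ H.normalizer := by
  have hN : LieModule.IsNilpotent H (Module.End K A) := by
    rw [LieModule.isNilpotent_iff_forall' (R := K)]
    intro z
    exact LieAlgebra.ad_nilpotent_of_nilpotent (R := K) (hH z z.2)
  obtain ⟨k, hk⟩ := LieModule.IsNilpotent.nilpotent K H (Module.End K A)
  by_contra! hcon
  have key : ∀ n, ∃ s ∈ S, s ∉ H ∧
      s ∈ LieModule.lowerCentralSeries K H (Module.End K A) n := by
    intro n
    induction n with
    | zero => exact ⟨s₀, hs₀, hs₀H, by simp⟩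
    | succ n ih =>
      obtain ⟨s, hs, hsH, hsn⟩ := ih
      have h1 : ∃ t ∈ S ∩ H, ⁅t, s⁆ ∉ H := by
        by_contra! h2
        apply hcon s hs hsH
        rw [LieSubalgebra.mem_normalizer_iff']
        intro y hy
        have hy' := hspan hy
        clear hy
        induction hy' using Submodule.span_induction with
        | mem y hy => exact h2 y hy
        | zero => simp
        | add y z _ _ hy hz => rw [add_lie]; exact H.add_mem hy hz
        | smul c y _ hy => rw [smul_lie]; exact H.smul_mem c hy
      obtain ⟨t, ⟨htS, htH⟩, hts⟩ := h1
      refine ⟨⁅t, s⁆, hS t htS s hs, hts, ?_⟩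
      rw [LieModule.lowerCentralSeries_succ]
      exact LieSubmodule.lie_mem_lie (x := (⟨t, htH⟩ : H)) (LieSubmodule.mem_top _) hsn
  obtain ⟨s, -, hsH, hs⟩ := key k
  rw [hk, LieSubmodule.mem_bot] at hs
  exact hsH (hs ▸ H.zero_mem)

/-- The Jacobson version of the Engel theorem for Lie sets of nilpotent operators. -/
theorem jacobson_engel {K A : Type*} [Field K] [AddCommGroup A] [Module K A]
    [FiniteDimensional K A] (S : Set (Module.End K A))
    (hS : ∀ a ∈ S, ∀ b ∈ S, ⁅a, b⁆ ∈ S) (hnil : ∀ a ∈ S, IsNilpotent a) :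
    ∃ H : LieSubalgebra K (Module.End K A), S ⊆ H ∧ LieModule.IsNilpotent H A := by
  let s : Set (LieSubalgebra K (Module.End K A)) :=
    {H | (∀ x ∈ H, IsNilpotent x) ∧ H.toSubmodule ≤ Submodule.span K (S ∩ H)}
  have hs : s.Nonempty := by
    refine ⟨⊥, ?_, ?_⟩
    · intro x hx
      rw [LieSubalgebra.mem_bot] at hx
      rw [hx]
      exact IsNilpotent.zero
    · simp
  obtain ⟨H, ⟨hH₁, hH₂⟩, hmax⟩ :=
    (LieSubalgebra.wellFoundedGT_of_noetherian K (Module.End K A)).wf.has_min s hs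
  refine ⟨H, ?_, ?_⟩
  · by_contra hcon
    obtain ⟨s₀, hs₀, hs₀H⟩ := Set.not_subset.mp hcon
    obtain ⟨x, hxS, hxH, hxn⟩ := jacobson_exists_normalizing S hS H hH₁ hH₂ s₀ hs₀ hs₀H
    obtain ⟨H', hH', hnilH'⟩ := jacobson_extend H hH₁ x hxn (hnil x hxS)
    have hle : H ≤ H' := by
      rw [← LieSubalgebra.toSubmodule_le_toSubmodule, hH']
      exact le_sup_right
    have hxH' : x ∈ H' := by
      rw [← LieSubalgebra.mem_toSubmodule, hH']
      exact Submodule.mem_sup_left (Submodule.mem_span_singleton_self x)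
    refine hmax H' ⟨hnilH', ?_⟩ (lt_of_le_of_ne hle fun h => hxH (h ▸ hxH'))
    rw [hH']
    refine sup_le ?_ (hH₂.trans (Submodule.span_mono fun y hy => ⟨hy.1, hle hy.2⟩))
    rw [Submodule.span_singleton_le_iff_mem]
    exact Submodule.subset_span ⟨hxS, hxH'⟩
  · rw [LieModule.isNilpotent_iff_forall' (R := K)]
    intro z
    exact hH₁ z z.2

/-- The Leibniz conclusion. -/
theorem jacobson_leibniz
    {K A : Type*} [Field K]
    [AddCommGroup A] [Module K A] [FiniteDimensional K A]
    (br : A →ₗ[K] A →ₗ[K] A)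
    (leibniz : ∀ a b c : A, br a (br b c) = br (br a b) c + br b (br a c))
    (L : Set A)
    (hLclosed : ∀ a ∈ L, ∀ b ∈ L, br a b ∈ L)
    (hLspan : Submodule.span K L = ⊤)
    (hnil : ∀ a ∈ L, IsNilpotent (br a)) :
    ∃ m : ℕ, lcs br m = ⊥ := by
  let S : Set (Module.End K A) := {f | ∃ a ∈ L, br a = f}
  have hS : ∀ a ∈ S, ∀ b ∈ S, ⁅a, b⁆ ∈ S := by
    rintro _ ⟨a, ha, rfl⟩ _ ⟨b, hb, rfl⟩
    refine ⟨br a b, hLclosed a ha b hb, ?_⟩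
    ext c
    rw [LieRing.of_associative_ring_bracket]
    simp [leibniz a b c]
  obtain ⟨H, hSH, hN⟩ := jacobson_engel S hS (by rintro _ ⟨a, ha, rfl⟩; exact hnil a ha)
  have hmem : ∀ a : A, (br a : Module.End K A) ∈ H.toSubmodule := by
    intro a
    have ha : a ∈ Submodule.span K L := hLspan ▸ Submodule.mem_top
    have hle : Submodule.span K L ≤ H.toSubmodule.comap br :=
      Submodule.span_le.mpr fun b hb => hSH ⟨b, hb, rfl⟩
    exact hle ha
  obtain ⟨k, hk⟩ := LieModule.IsNilpotent.nilpotent K H A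
  have key : ∀ n, lcs br n ≤ (LieModule.lowerCentralSeries K H A n).toSubmodule := by
    intro n
    induction n with
    | zero => simp
    | succ n ih =>
      rw [lcs, bracketSpan, Submodule.span_le]
      rintro _ ⟨a, -, b, hb, rfl⟩
      rw [LieModule.lowerCentralSeries_succ]
      exact LieSubmodule.lie_mem_lie (x := (⟨br a, hmem a⟩ : H)) (LieSubmodule.mem_top _) (ih hb)
  refine ⟨k, ?_⟩
  have := key k
  rw [hk] at this
  simpa using this

end JacobsonEngel

/-- if a Lie subset `L` spanning a finite-dimensional (left) Leibniz
algebra `A` consists of elements with nilpotent left multiplication operator, then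
`A` is nilpotent. -/
theorem leibniz_engel_lie_subset
    {K A : Type*} [Field K]
    [AddCommGroup A] [Module K A] [FiniteDimensional K A]
    (br : A →ₗ[K] A →ₗ[K] A)
    (leibniz : ∀ a b c : A, br a (br b c) = br (br a b) c + br b (br a c))
    (L : Set A)
    (hLclosed : ∀ a ∈ L, ∀ b ∈ L, br a b ∈ L)
    (hLspan : Submodule.span K L = ⊤)
    (hnil : ∀ a ∈ L, IsNilpotent (br a)) :
    ∃ m : ℕ, lcs br m = ⊥ := by
  exact jacobson_leibniz br leibniz L hLclosed hLspan hnil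
end

section
/- Let A be a finite-dimensional (left) Leibniz algebra over a field of characteristic zero that admits an automorphism σ of prime period (σ^p = id for some prime p) whose only fixed point is 0 (σ(a) = a implies a = 0). Then A is nilpotent. -/
/-- Every proper `T`-invariant subspace `W` admits a vector outside `W` sent into `W` by `T`. -/
def EngGood {K V : Type*} [Field K] [AddCommGroup V] [Module K V]
    (T : Set (Module.End K V)) : Prop :=
  ∀ W : Submodule K V, W ≠ ⊤ → (∀ t ∈ T, ∀ w ∈ W, t w ∈ W) → ∃ v, v ∉ W ∧ ∀ t ∈ T, t v ∈ W

theorem mem_of_span {K V : Type*} [Field K] [AddCommGroup V] [Module K V]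
    {T : Set (Module.End K V)} {W : Submodule K V} {v : V} (h : ∀ t ∈ T, t v ∈ W)
    {x : Module.End K V} (hx : x ∈ Submodule.span K T) : x v ∈ W := by
  induction hx using Submodule.span_induction with
  | mem x hx => exact h x hx
  | zero => simp
  | add x y _ _ hx hy => exact W.add_mem hx hy
  | smul c x _ hx => exact W.smul_mem c hx

theorem EngGood.of_span {K V : Type*} [Field K] [AddCommGroup V] [Module K V]
    {T S : Set (Module.End K V)} (hT : EngGood T) (hTS : T ⊆ Submodule.span K S)
    (h : S ⊆ Submodule.span K T) : EngGood S := by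
  intro W hW hinv
  obtain ⟨v, hv, hv2⟩ := hT W hW (fun t ht w hw => mem_of_span (fun s hs => hinv s hs w hw) (hTS ht))
  exact ⟨v, hv, fun s hs => mem_of_span hv2 (h hs)⟩

theorem EngGood.words {K V : Type*} [Field K] [AddCommGroup V] [Module K V]
    [FiniteDimensional K V]
    {T : Set (Module.End K V)} (hT : EngGood T) :
    ∃ N : ℕ, ∀ l : List (Module.End K V), (∀ t ∈ l, t ∈ T) → N ≤ l.length → l.prod = 0 := by
  let good : Set (Submodule K V) := {W | (∀ t ∈ T, ∀ w ∈ W, t w ∈ W) ∧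
    ∃ N : ℕ, ∀ l : List (Module.End K V), (∀ t ∈ l, t ∈ T) → N ≤ l.length → ∀ w ∈ W, l.prod w = 0}
  have hne : good.Nonempty := by
    refine ⟨⊥, ?_, 0, ?_⟩
    · intro t _ w hw
      simp_all
    · intro l _ _ w hw
      simp_all
  obtain ⟨W, ⟨hinv, N, hN⟩, hmax⟩ :=
    WellFounded.has_min (wellFounded_gt (α := Submodule K V)) good hne
  by_cases hW : W = ⊤
  · refine ⟨N, fun l hl hlen => ?_⟩
    ext v
    simpa using hN l hl hlen v (by simp [hW])
  exfalso
  obtain ⟨v, hv, hv2⟩ := hT W hW hinv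
  let W' : Submodule K V :=
    { carrier := {v | ∀ t ∈ T, t v ∈ W}
      add_mem' := fun {a b} ha hb t ht => by
        rw [map_add]; exact W.add_mem (ha t ht) (hb t ht)
      zero_mem' := fun t ht => by simp
      smul_mem' := fun c x hx t ht => by
        rw [map_smul]; exact W.smul_mem c (hx t ht) }
  have hle : W ≤ W' := fun w hw t ht => hinv t ht w hw
  refine hmax W' ⟨fun t ht w hw => hle (hw t ht), N + 1, ?_⟩ (lt_of_le_of_ne hle ?_)
  · intro l hl hlen w hw
    rcases List.eq_nil_or_concat l with rfl | ⟨l', t, rfl⟩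
    · simp at hlen
    · rw [List.concat_eq_append] at hl hlen ⊢
      rw [List.prod_append, List.prod_singleton, Module.End.mul_apply]
      apply hN l' (fun s hs => hl s (by simp [hs])) (by simpa using hlen)
      exact hw t (hl t (by simp))
  · intro h
    apply hv
    rw [h]
    exact hv2

theorem eng_find {K V : Type*} [Field K] [AddCommGroup V] [Module K V]
    {T S : Set (Module.End K V)} (hTS : T ⊆ S) (hS : ∀ x ∈ S, ∀ y ∈ S, x * y - y * x ∈ S) (j : ℕ) :
    ∀ s ∈ S, s ∉ Submodule.span K T →
    (∀ l₁ l₂ : List (Module.End K V), (∀ t ∈ l₁, t ∈ T) → (∀ t ∈ l₂, t ∈ T) →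
      j ≤ l₁.length + l₂.length → l₁.prod * s * l₂.prod = 0) →
    ∃ s' ∈ S, s' ∉ Submodule.span K T ∧ ∀ t ∈ T, t * s' - s' * t ∈ Submodule.span K T := by
  induction j with
  | zero =>
    intro s _ hs h
    have := h [] [] (by simp) (by simp) (by simp)
    simp at this
    simp [this] at hs
  | succ j ih =>
    intro s hsS hs h
    by_cases hc : ∀ t ∈ T, t * s - s * t ∈ Submodule.span K T
    · exact ⟨s, hsS, hs, hc⟩
    push Not at hc
    obtain ⟨t, ht, hts⟩ := hc
    refine ih _ (hS t (hTS ht) s hsS) hts ?_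
    intro l₁ l₂ h₁ h₂ hl
    have e1 := h (l₁ ++ [t]) l₂ (by
      intro x hx
      rcases List.mem_append.1 hx with hx | hx
      · exact h₁ x hx
      · simp at hx; exact hx ▸ ht) h₂ (by simp; omega)
    have e2 := h l₁ (t :: l₂) h₁ (by
      intro x hx
      rcases List.mem_cons.1 hx with hx | hx
      · exact hx ▸ ht
      · exact h₂ x hx) (by simp; omega)
    simp only [List.prod_append, List.prod_cons, List.prod_nil, mul_one] at e1 e2
    calc l₁.prod * (t * s - s * t) * l₂.prod
        = l₁.prod * t * s * l₂.prod - l₁.prod * s * (t * l₂.prod) := by noncomm_ring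
      _ = 0 := by rw [e1, e2, sub_zero]

theorem EngGood.insert_end {K V : Type*} [Field K] [AddCommGroup V] [Module K V]
    {T : Set (Module.End K V)} (hT : EngGood T) {s : Module.End K V} (hs : IsNilpotent s)
    (hc : ∀ t ∈ T, t * s - s * t ∈ Submodule.span K T) : EngGood (insert s T) := by
  intro W hW hinv
  obtain ⟨v, hv, hv2⟩ := hT W hW (fun t ht => hinv t (Or.inr ht))
  have key : ∀ n : ℕ, ∀ v, v ∉ W → (∀ t ∈ T, t v ∈ W) → (s ^ n) v ∈ W →
      ∃ v, v ∉ W ∧ ∀ t ∈ insert s T, t v ∈ W := by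
    intro n
    induction n with
    | zero => intro v h _ h'; exact absurd (by simpa using h') h
    | succ n ih =>
      intro v h1 h2 h3
      by_cases hsv : s v ∈ W
      · refine ⟨v, h1, ?_⟩
        rintro t (rfl | ht)
        · exact hsv
        · exact h2 t ht
      · refine ih (s v) hsv ?_ ?_
        · intro t ht
          have e : t (s v) = (t * s - s * t) v + s (t v) := by simp
          rw [e]
          exact W.add_mem (mem_of_span h2 (hc t ht)) (hinv s (Or.inl rfl) _ (h2 t ht))
        · rwa [pow_succ, Module.End.mul_apply] at h3
  obtain ⟨n, hn⟩ := hs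
  exact key n v hv hv2 (by simp [hn])

/-- Jacobson's version of Engel's theorem. -/
theorem engGood_of_nil {K V : Type*} [Field K] [AddCommGroup V] [Module K V]
    [FiniteDimensional K V]
    {S : Set (Module.End K V)} (hS : ∀ x ∈ S, ∀ y ∈ S, x * y - y * x ∈ S)
    (hnil : ∀ x ∈ S, IsNilpotent x) : EngGood S := by
  let good : Set (Submodule K (Module.End K V)) :=
    {P | ∃ T ⊆ S, EngGood T ∧ P = Submodule.span K T}
  have hne : good.Nonempty := by
    refine ⟨_, ∅, by simp, ?_, rfl⟩
    intro W hW _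
    have : ∃ v, v ∉ W := by
      by_contra! h
      exact hW (eq_top_iff.2 fun v _ => h v)
    obtain ⟨v, hv⟩ := this
    exact ⟨v, hv, by simp⟩
  obtain ⟨P, ⟨T, hTS, hT, rfl⟩, hmax⟩ :=
    WellFounded.has_min (wellFounded_gt (α := Submodule K (Module.End K V))) good hne
  by_cases hST : S ⊆ Submodule.span K T
  · exact hT.of_span (hTS.trans Submodule.subset_span) hST
  exfalso
  obtain ⟨s, hsS, hs⟩ := Set.not_subset.1 hST
  obtain ⟨N, hN⟩ := hT.words
  obtain ⟨s', hs'S, hs', hc⟩ := eng_find hTS hS (2 * N) s hsS hs (by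
    intro l₁ l₂ h₁ h₂ hl
    by_cases h : N ≤ l₁.length
    · rw [hN l₁ h₁ h]; simp
    · rw [hN l₂ h₂ (by omega)]; simp)
  refine hmax (Submodule.span K (insert s' T))
    ⟨insert s' T, Set.insert_subset hs'S hTS, hT.insert_end (hnil s' hs'S) hc, rfl⟩
    (lt_of_le_of_ne (Submodule.span_mono (Set.subset_insert _ _)) ?_)
  intro h
  apply hs'
  rw [h]
  exact Submodule.subset_span (Set.mem_insert _ _)

theorem leib_alg_closed {K A : Type*} [Field K] [CharZero K] [IsAlgClosed K]
    [AddCommGroup A] [Module K A] [FiniteDimensional K A]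
    (br : A →ₗ[K] A →ₗ[K] A)
    (leibniz : ∀ a b c : A, br a (br b c) = br (br a b) c + br b (br a c))
    (σ : Module.End K A)
    (hσ : ∀ a b : A, σ (br a b) = br (σ a) (σ b))
    (p : ℕ) (hp : p.Prime) (hper : σ ^ p = 1)
    (hfix : ∀ a : A, σ a = a → a = 0) : EngGood (Set.range br) := by
  have hss : σ.IsSemisimple := by
    refine Module.End.isSemisimple_of_squarefree_aeval_eq_zero
      (p := (Polynomial.X ^ p - 1 : Polynomial K)) ?_ (by simp [hper])
    exact ((Polynomial.X_pow_sub_one_separable_iff).2 (by exact_mod_cast hp.ne_zero)).squarefree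
  have htop : ⨆ μ : K, σ.eigenspace μ = ⊤ := by
    rw [← Module.End.iSup_maxGenEigenspace_eq_top σ]
    congr 1
    ext1 μ
    exact (hss.isFinitelySemisimple.maxGenEigenspace_eq_eigenspace μ).symm
  have hpw : ∀ (μ : K) (a : A), σ a = μ • a → ∀ n : ℕ, (σ ^ n) a = μ ^ n • a := by
    intro μ a h n
    induction n with
    | zero => simp
    | succ n ih => rw [pow_succ, Module.End.mul_apply, h, map_smul, ih, smul_smul, pow_succ']
  have hroot : ∀ (μ : K) (a : A), σ a = μ • a → a ≠ 0 → μ ^ p = 1 := by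
    intro μ a h ha
    have h1 := hpw μ a h p
    rw [hper, Module.End.one_apply] at h1
    have h2 : (μ ^ p - 1) • a = 0 := by rw [sub_smul, ← h1, one_smul, sub_self]
    rcases smul_eq_zero.1 h2 with h | h
    · exact sub_eq_zero.1 h
    · exact absurd h ha
  let S : Set (Module.End K A) := {x | ∃ a, ∃ μ : K, σ a = μ • a ∧ br a = x}
  have hSgood : EngGood S := by
    apply engGood_of_nil
    · rintro _ ⟨a, μ, ha, rfl⟩ _ ⟨b, ν, hb, rfl⟩
      refine ⟨br a b, μ * ν, ?_, ?_⟩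
      · rw [hσ, ha, hb]; simp [smul_smul, mul_comm]
      · ext c
        simp [leibniz a b c]
    · rintro _ ⟨a, μ, ha, rfl⟩
      by_cases ha0 : a = 0
      · simp [ha0]
      refine ⟨p, ?_⟩
      have hμ := hroot μ a ha ha0
      have hμ1 : μ ≠ 1 := by
        rintro rfl
        exact ha0 (hfix a (by simpa using ha))
      have hprim : IsPrimitiveRoot μ p := by
        have := orderOf_eq_prime (p := p) (hp := ⟨hp⟩) hμ hμ1
        rw [← this]; exact IsPrimitiveRoot.orderOf μ
      have hle : ⨆ ν : K, σ.eigenspace ν ≤ LinearMap.ker ((br a : Module.End K A) ^ p) := by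
        refine iSup_le fun ν b hb => ?_
        rw [Module.End.mem_eigenspace_iff] at hb
        rw [LinearMap.mem_ker]
        by_cases hb0 : b = 0
        · simp [hb0]
        have hν := hroot ν b hb hb0
        have hν0 : ν ≠ 0 := by
          rintro rfl
          simp [hp.ne_zero] at hν
        have : NeZero p := ⟨hp.ne_zero⟩
        obtain ⟨k, hk, hk2⟩ := hprim.eq_pow_of_pow_eq_one (ξ := ν⁻¹) (by simp [hν])
        have hev : ∀ n : ℕ, σ (((br a : Module.End K A) ^ n) b)
            = (μ ^ n * ν) • ((br a : Module.End K A) ^ n) b := by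
          intro n
          induction n with
          | zero => simpa using hb
          | succ n ih =>
            rw [pow_succ', Module.End.mul_apply, hσ, ih, ha]
            simp only [map_smul, LinearMap.smul_apply, smul_smul]
            congr 1
            ring
        have h0 : ((br a : Module.End K A) ^ k) b = 0 := by
          apply hfix
          rw [hev k, hk2, inv_mul_cancel₀ hν0, one_smul]
        have : p = (p - k) + k := by omega
        rw [this, pow_add, Module.End.mul_apply, h0, map_zero]
      rw [htop] at hle
      ext b
      exact hle (Submodule.mem_top (x := b))
  refine hSgood.of_span ?_ ?_
  · rintro _ ⟨a, μ, _, rfl⟩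
    exact Submodule.subset_span ⟨a, rfl⟩
  · rintro _ ⟨a, rfl⟩
    have hle : ⨆ ν : K, σ.eigenspace ν ≤ (Submodule.span K S).comap br := by
      refine iSup_le fun ν b hb => ?_
      rw [Module.End.mem_eigenspace_iff] at hb
      exact Submodule.subset_span ⟨b, ν, hb, rfl⟩
    rw [htop] at hle
    exact hle (Submodule.mem_top (x := a))

open TensorProduct in
theorem leib_words {K A : Type*} [Field K] [CharZero K]
    [AddCommGroup A] [Module K A] [FiniteDimensional K A]
    (br : A →ₗ[K] A →ₗ[K] A)
    (leibniz : ∀ a b c : A, br a (br b c) = br (br a b) c + br b (br a c))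
    (σ : Module.End K A)
    (hσ : ∀ a b : A, σ (br a b) = br (σ a) (σ b))
    (p : ℕ) (hp : p.Prime) (hper : σ ^ p = 1)
    (hfix : ∀ a : A, σ a = a → a = 0) :
    ∃ N : ℕ, ∀ l : List A, N ≤ l.length → (l.map (fun a => (br a : Module.End K A))).prod = 0 := by
  let F := AlgebraicClosure K
  have : CharZero F := charZero_of_injective_algebraMap (algebraMap K F).injective
  let B := F ⊗[K] A
  let br' : B →ₗ[F] B →ₗ[F] B := LinearMap.BilinMap.baseChange F br
  have hbr : ∀ (x y : F) (a b : A), br' (x ⊗ₜ a) (y ⊗ₜ b) = (x * y) ⊗ₜ br a b := by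
    intro x y a b
    exact LinearMap.BilinMap.baseChange_tmul br x a y b
  let σ' : Module.End F B := LinearMap.baseChange F σ
  have hσt : ∀ (x : F) (a : A), σ' (x ⊗ₜ a) = x ⊗ₜ σ a := fun x a => rfl
  have hgood : EngGood (Set.range br') := by
    refine leib_alg_closed br' ?_ σ' ?_ p hp ?_ ?_
    · intro a b c
      induction a using TensorProduct.induction_on with
      | zero => simp
      | add a₁ a₂ h₁ h₂ => simp only [map_add, LinearMap.add_apply, h₁, h₂]; abel
      | tmul x a =>
      induction b using TensorProduct.induction_on with
      | zero => simp
      | add a₁ a₂ h₁ h₂ => simp only [map_add, LinearMap.add_apply, h₁, h₂]; abel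
      | tmul y b =>
      induction c using TensorProduct.induction_on with
      | zero => simp
      | add a₁ a₂ h₁ h₂ => simp only [map_add, h₁, h₂]; abel
      | tmul z c =>
      simp only [hbr, leibniz a b c, TensorProduct.tmul_add]
      rw [show x * (y * z) = x * y * z by ring, show y * (x * z) = x * y * z by ring]
    · intro a b
      induction a using TensorProduct.induction_on with
      | zero => simp
      | add a₁ a₂ h₁ h₂ => simp only [map_add, LinearMap.add_apply, h₁, h₂]
      | tmul x a =>
      induction b using TensorProduct.induction_on with
      | zero => simp
      | add a₁ a₂ h₁ h₂ => simp only [map_add, h₁, h₂]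
      | tmul y b =>
      simp only [hbr, hσt, hσ]
    · have : σ' ^ p = LinearMap.baseChange F (σ ^ p) := (LinearMap.baseChange_pow K F A σ p).symm
      rw [this, hper]
      exact LinearMap.baseChange_one K A
    · intro a ha
      have hinj : Function.Injective (σ - 1 : Module.End K A) := by
        rw [← LinearMap.ker_eq_bot, LinearMap.ker_eq_bot']
        intro m hm
        exact hfix m (sub_eq_zero.1 hm)
      have hinj' := Module.Flat.lTensor_preserves_injective_linearMap (M := F) _ hinj
      apply hinj'
      rw [map_zero, LinearMap.lTensor_sub, LinearMap.sub_apply]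
      have e1 : (LinearMap.lTensor F σ) a = σ' a := rfl
      rw [e1, ha]
      erw [LinearMap.lTensor_id]
      simp
  obtain ⟨N, hN⟩ := hgood.words
  refine ⟨N, fun l hl => ?_⟩
  have h1 := hN (l.map (fun a => (br' ((1 : F) ⊗ₜ a) : Module.End F B))) (by
    intro t ht
    obtain ⟨a, _, rfl⟩ := List.mem_map.1 ht
    exact ⟨_, rfl⟩) (by simpa using hl)
  have h2 : ∀ (l : List A) (v : A),
      (l.map (fun a => (br' ((1 : F) ⊗ₜ a) : Module.End F B))).prod ((1 : F) ⊗ₜ v)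
      = (1 : F) ⊗ₜ[K] ((l.map (fun a => (br a : Module.End K A))).prod v) := by
    intro l v
    induction l with
    | nil => simp
    | cons a l ih =>
      simp only [List.map_cons, List.prod_cons, Module.End.mul_apply, ih, hbr, one_mul]
  ext v
  have h3 := h2 l v
  rw [h1, LinearMap.zero_apply] at h3
  have hinj : Function.Injective (fun v : A => (1 : F) ⊗ₜ[K] v) :=
    Module.FaithfullyFlat.tensorProduct_mk_injective A
  apply hinj
  simp [← h3]

/-- a finite-dimensional (left) Leibniz algebra over a field of
characteristic zero admitting an automorphism of prime period with no nonzero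
fixed points is nilpotent. -/
theorem leibniz_nilpotent_of_fixed_point_free_automorphism
    {K A : Type*} [Field K] [CharZero K]
    [AddCommGroup A] [Module K A] [FiniteDimensional K A]
    (br : A →ₗ[K] A →ₗ[K] A)
    (leibniz : ∀ a b c : A, br a (br b c) = br (br a b) c + br b (br a c))
    (σ : A ≃ₗ[K] A)
    (hσ : ∀ a b : A, σ (br a b) = br (σ a) (σ b))
    (p : ℕ) (hp : p.Prime) (hper : σ ^ p = 1)
    (hfix : ∀ a : A, σ a = a → a = 0) :
    ∃ m : ℕ, lcs br m = ⊥ := by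
  have hper' : (σ : Module.End K A) ^ p = 1 := by
    have e : ∀ n : ℕ, (σ : Module.End K A) ^ n = ((σ ^ n : A ≃ₗ[K] A) : Module.End K A) := by
      intro n
      induction n with
      | zero => rfl
      | succ n ih => rw [pow_succ, ih, pow_succ]; rfl
    rw [e, hper]; rfl
  obtain ⟨N, hN⟩ := leib_words br leibniz (σ : Module.End K A) hσ p hp hper' hfix
  have key : ∀ k : ℕ, ∀ v ∈ lcs br k, ∀ l : List A, N ≤ l.length + k →
      (l.map (fun a => (br a : Module.End K A))).prod v = 0 := by
    intro k
    induction k with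
    | zero => intro v _ l hl; rw [hN l (by simpa using hl)]; rfl
    | succ k ih =>
      intro v hv l hl
      have hle : lcs br (k + 1) ≤
          LinearMap.ker (l.map (fun a => (br a : Module.End K A))).prod := by
        refine Submodule.span_le.2 ?_
        rintro _ ⟨a, _, b, hb, rfl⟩
        have := ih b hb (l ++ [a]) (by simp; omega)
        simpa [Module.End.mul_apply] using this
      exact hle hv
  refine ⟨N, eq_bot_iff.2 fun v hv => ?_⟩
  simpa using key N v hv [] (by simp)
end

section
/- Let A be a finite-dimensional (left) Leibniz algebra over a field of characteristic zero that admits a non-singular (invertible) derivation. Then A is nilpotent. -/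
/-- The ascending filtration of `V` determined by a space `U` of endomorphisms. -/
def ascFil {K V : Type*} [Field K] [AddCommGroup V] [Module K V]
    (U : Submodule K (V →ₗ[K] V)) : ℕ → Submodule K V
  | 0 => ⊥
  | n + 1 =>
    { carrier := {v | ∀ u ∈ U, u v ∈ ascFil U n}
      add_mem' := by
        intro a b ha hb u hu
        rw [map_add]
        exact add_mem (ha u hu) (hb u hu)
      zero_mem' := by
        intro u hu
        simp
      smul_mem' := by
        intro c x hx u hu
        rw [map_smul]
        exact Submodule.smul_mem _ _ (hx u hu) }

section Fil
variable {K V : Type*} [Field K] [AddCommGroup V] [Module K V]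

lemma mem_ascFil_succ (U : Submodule K (V →ₗ[K] V)) (n : ℕ) (v : V) :
    v ∈ ascFil U (n + 1) ↔ ∀ u ∈ U, u v ∈ ascFil U n := Iff.rfl

lemma mem_ascFil_zero (U : Submodule K (V →ₗ[K] V)) (v : V) :
    v ∈ ascFil U 0 ↔ v = 0 := Submodule.mem_bot K

lemma ascFil_le_succ (U : Submodule K (V →ₗ[K] V)) (n : ℕ) :
    ascFil U n ≤ ascFil U (n + 1) := by
  induction n with
  | zero => intro v hv; rw [mem_ascFil_zero] at hv; rw [hv]; exact zero_mem _
  | succ n ih => intro v hv u hu; exact ih (hv u hu)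

lemma ascFil_mono (U : Submodule K (V →ₗ[K] V)) : Monotone (ascFil U) :=
  monotone_nat_of_le_succ (ascFil_le_succ U)

lemma ascFil_invariant (U : Submodule K (V →ₗ[K] V)) (x : V →ₗ[K] V)
    (hx : ∀ u ∈ U, u * x - x * u ∈ U) (n : ℕ) : ∀ v ∈ ascFil U n, x v ∈ ascFil U n := by
  induction n with
  | zero => intro v hv; rw [mem_ascFil_zero] at *; simp [hv]
  | succ n ih =>
    intro v hv u hu
    have h1 := hv _ (hx u hu)
    have h2 := ih _ (hv u hu)
    have : u (x v) = (u * x - x * u) v + x (u v) := by simp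
    rw [this]
    exact add_mem h1 h2

lemma ascFil_extend (U : Submodule K (V →ₗ[K] V)) (x : V →ₗ[K] V)
    (hx : ∀ u ∈ U, u * x - x * u ∈ U) (p : ℕ) (hp : x ^ p = 0) (i : ℕ) :
    ascFil U i ≤ ascFil (U ⊔ K ∙ x) (i * p) := by
  induction i with
  | zero => intro v hv; rw [mem_ascFil_zero] at hv; rw [hv]; exact zero_mem _
  | succ i ih =>
    have key : ∀ q : ℕ, ∀ v ∈ ascFil U (i + 1), (x ^ q) v ∈ ascFil U i →
        v ∈ ascFil (U ⊔ K ∙ x) (i * p + q) := by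
      intro q
      induction q with
      | zero => intro v _ hv; exact ih (by simpa using hv)
      | succ q ihq =>
        intro v hv hq
        rw [← add_assoc, mem_ascFil_succ]
        intro u hu
        obtain ⟨y, hy, z, hz, rfl⟩ := Submodule.mem_sup.1 hu
        obtain ⟨c, rfl⟩ := Submodule.mem_span_singleton.1 hz
        rw [LinearMap.add_apply, LinearMap.smul_apply]
        refine add_mem ?_ (Submodule.smul_mem _ _ ?_)
        · exact ascFil_mono _ (Nat.le_add_right _ _) (ih (hv y hy))
        · refine ihq _ (ascFil_invariant U x hx _ _ hv) ?_
          rw [pow_succ] at hq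
          exact hq
    intro v hv
    have := key p v hv (by simp [hp])
    rwa [Nat.succ_mul]

/-- Jacobson's theorem for bracket-closed sets of nilpotent endomorphisms. -/
lemma jacobson_closed [FiniteDimensional K V] (S : Set (V →ₗ[K] V))
    (hnil : ∀ x ∈ S, ∃ p : ℕ, x ^ p = 0)
    (hbr : ∀ x ∈ S, ∀ y ∈ S, x * y - y * x ∈ S) :
    ∃ U : Submodule K (V →ₗ[K] V), S ⊆ U ∧ ∃ m, ascFil U m = ⊤ := by
  let P : Set (Submodule K (V →ₗ[K] V)) :=
    {U | U ≤ Submodule.span K (S ∩ U) ∧ ∃ m, ascFil U m = ⊤}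
  have hP : P.Nonempty := by
    refine ⟨⊥, bot_le, 1, ?_⟩
    rw [eq_top_iff]
    intro v _ u hu
    rw [(Submodule.mem_bot K).1 hu]
    exact zero_mem _
  have wf : WellFounded ((· > ·) : Submodule K (V →ₗ[K] V) → _ → Prop) := wellFounded_gt
  obtain ⟨U, ⟨hU, m, hm⟩, hmax⟩ := wf.has_min P hP
  refine ⟨U, ?_, m, hm⟩
  by_contra hS
  obtain ⟨x0, hx0, hx0U⟩ := Set.not_subset.1 hS
  have hex : ∃ x ∈ S, x ∉ U ∧ ∀ t ∈ S ∩ U, t * x - x * t ∈ U := by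
    by_contra hcon
    push Not at hcon
    have step : ∀ k : ℕ, ∃ x ∈ S, x ∉ U ∧
        ∀ i j, i + m ≤ j + k → ∀ v ∈ ascFil U i, x v ∈ ascFil U j := by
      intro k
      induction k with
      | zero =>
        refine ⟨x0, hx0, hx0U, ?_⟩
        intro i j hij v _
        have : ascFil U m ≤ ascFil U j := ascFil_mono U (by omega)
        rw [hm] at this
        exact this trivial
      | succ k ih =>
        obtain ⟨x, hxS, hxU, hx⟩ := ih
        obtain ⟨t, ht, htx⟩ := hcon x hxS hxU
        refine ⟨_, hbr t ht.1 x hxS, htx, ?_⟩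
        intro i j hij v hv
        have e : (t * x - x * t) v = t (x v) - x (t v) := by simp
        rw [e]
        refine sub_mem ?_ ?_
        · exact (mem_ascFil_succ U j _).1 (hx i (j + 1) (by omega) v hv) t ht.2
        · cases i with
          | zero =>
            rw [mem_ascFil_zero] at hv
            simp [hv]
          | succ i => exact hx i j (by omega) _ (hv t ht.2)
    obtain ⟨x, hxS, hxU, hx⟩ := step (2 * m)
    apply hxU
    have : x = 0 := by
      ext v
      have := hx m 0 (by omega) v (by rw [hm]; trivial)
      rw [mem_ascFil_zero] at this
      simpa using this
    rw [this]
    exact zero_mem _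
  obtain ⟨x, hxS, hxU, hx⟩ := hex
  have hxall : ∀ u ∈ U, u * x - x * u ∈ U := by
    intro u hu
    have hle : Submodule.span K (S ∩ U) ≤
        U.comap (LinearMap.mulRight K x - LinearMap.mulLeft K x) :=
      Submodule.span_le.2 fun t ht => hx t ht
    exact hle (hU hu)
  obtain ⟨p, hp⟩ := hnil x hxS
  refine hmax (U ⊔ K ∙ x) ⟨?_, m * p, ?_⟩ ?_
  · refine sup_le (hU.trans (Submodule.span_mono ?_)) ?_
    · exact Set.inter_subset_inter_right _ (fun y hy => Submodule.mem_sup_left hy)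
    · rw [Submodule.span_singleton_le_iff_mem]
      exact Submodule.subset_span ⟨hxS, Submodule.mem_sup_right (Submodule.mem_span_singleton_self x)⟩
  · rw [eq_top_iff, ← hm]
    exact ascFil_extend U x hxall p hp m
  · refine lt_of_le_of_ne le_sup_left ?_
    intro h
    apply hxU
    rw [h]
    exact Submodule.mem_sup_right (Submodule.mem_span_singleton_self x)

lemma lcs_le_ascFil (br : V →ₗ[K] V →ₗ[K] V) (U : Submodule K (V →ₗ[K] V))
    (hU : ∀ a, br a ∈ U) (m : ℕ) (hm : ascFil U m = ⊤) (k : ℕ) :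
    ∀ j, k + j = m → lcs br k ≤ ascFil U j := by
  induction k with
  | zero => intro j hj; rw [zero_add] at hj; rw [hj, hm]; exact le_top
  | succ k ih =>
    intro j hj
    refine Submodule.span_le.2 ?_
    rintro _ ⟨a, _, b, hb, rfl⟩
    exact ih (j + 1) (by omega) hb _ (hU a)

lemma br_mem_genEigen (br : V →ₗ[K] V →ₗ[K] V) (D : V →ₗ[K] V)
    (hD : ∀ a b : V, D (br a b) = br (D a) b + br a (D b)) (α β : K) (a b : V)
    (ha : a ∈ Module.End.maxGenEigenspace D α) (hb : b ∈ Module.End.maxGenEigenspace D β) :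
    br a b ∈ Module.End.maxGenEigenspace D (α + β) := by
  rw [Module.End.mem_maxGenEigenspace] at *
  obtain ⟨i, hi⟩ := ha
  obtain ⟨j, hj⟩ := hb
  refine ⟨i + j, ?_⟩
  generalize hn : i + j = n
  induction n generalizing i j a b with
  | zero =>
    obtain rfl : i = 0 := by omega
    have : a = 0 := by simpa using hi
    simp [this]
  | succ n ih =>
    have e : (D - (α + β) • (1 : Module.End K V)) (br a b) =
        br ((D - α • (1 : Module.End K V)) a) b + br a ((D - β • (1 : Module.End K V)) b) := by
      simp [hD, add_smul]
      abel
    rw [pow_succ, Module.End.mul_apply, e, map_add]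
    have h1 : ((D - (α + β) • (1 : Module.End K V)) ^ n)
        (br ((D - α • (1 : Module.End K V)) a) b) = 0 := by
      cases i with
      | zero =>
        have : a = 0 := by simpa using hi
        simp [this]
      | succ i =>
        rw [pow_succ] at hi
        exact ih _ _ i hi j hj (by omega)
    have h2 : ((D - (α + β) • (1 : Module.End K V)) ^ n)
        (br a ((D - β • (1 : Module.End K V)) b)) = 0 := by
      cases j with
      | zero =>
        have : b = 0 := by simpa using hj
        simp [this]
      | succ j =>
        rw [pow_succ] at hj
        exact ih _ _ i hi j hj (by omega)
    rw [h1, h2, add_zero]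

lemma br_nilpotent [CharZero K] [IsAlgClosed K] [FiniteDimensional K V]
    (br : V →ₗ[K] V →ₗ[K] V) (D : V →ₗ[K] V)
    (hD : ∀ a b : V, D (br a b) = br (D a) b + br a (D b))
    (hinj : Function.Injective D) (α : K) (a : V)
    (ha : a ∈ Module.End.maxGenEigenspace D α) : ∃ p : ℕ, (br a) ^ p = 0 := by
  by_cases hα : α = 0
  · subst hα
    rw [Module.End.mem_maxGenEigenspace] at ha
    obtain ⟨k, hk⟩ := ha
    rw [zero_smul, sub_zero, Module.End.pow_apply] at hk
    have : a = 0 := (hinj.iterate k) (by rw [hk, ← Module.End.pow_apply, map_zero])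
    exact ⟨1, by simp [this]⟩
  have hnil : IsNilpotent (R := Module.End K V) (br a) := by
    rw [Module.End.isNilpotent_iff_of_finite]
    have htop : Module.End.maxGenEigenspace (br a) 0 = ⊤ := by
      rw [eq_top_iff, ← Module.End.iSup_maxGenEigenspace_eq_top D]
      refine iSup_le fun β v hv => ?_
      rw [Module.End.mem_maxGenEigenspace, zero_smul, sub_zero]
      have hmem : ∀ n : ℕ, ((br a : Module.End K V) ^ n) v ∈
          Module.End.maxGenEigenspace D (n * α + β) := by
        intro n
        induction n with
        | zero => simpa using hv
        | succ n ih =>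
          rw [pow_succ', Module.End.mul_apply]
          have := br_mem_genEigen br D hD α _ a _ ha ih
          convert this using 2
          push_cast
          ring
      by_contra hcon
      push Not at hcon
      have hfin : (spectrum K (D : Module.End K V)).Finite := by
        simpa only [Module.End.hasEigenvalue_iff_mem_spectrum, Set.setOf_mem_eq] using
          Module.End.finite_hasEigenvalue D
      have hev : ∀ n : ℕ, (n * α + β) ∈ spectrum K (D : Module.End K V) := by
        intro n
        rw [← Module.End.hasEigenvalue_iff_mem_spectrum]
        have : Module.End.HasUnifEigenvalue D (n * α + β) ⊤ := by
          intro hbot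
          apply hcon n
          have := hmem n
          rw [Module.End.maxGenEigenspace, hbot] at this
          exact (Submodule.mem_bot K).1 this
        exact this.lt zero_lt_one
      refine Set.infinite_of_injective_forall_mem (f := fun n : ℕ => (n * α + β)) ?_ hev hfin
      intro n n' h
      simpa [hα] using h
    intro v
    have : v ∈ Module.End.maxGenEigenspace (br a) 0 := by rw [htop]; trivial
    rwa [Module.End.mem_maxGenEigenspace, zero_smul, sub_zero] at this
  exact hnil

lemma nilpotent_algClosed [CharZero K] [IsAlgClosed K] [FiniteDimensional K V]
    (br : V →ₗ[K] V →ₗ[K] V)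
    (leibniz : ∀ a b c : V, br a (br b c) = br (br a b) c + br b (br a c)) (D : V →ₗ[K] V)
    (hD : ∀ a b : V, D (br a b) = br (D a) b + br a (D b))
    (hinj : Function.Injective D) : ∃ m : ℕ, lcs br m = ⊥ := by
  obtain ⟨U, hSU, m, hm⟩ := jacobson_closed
    {x : V →ₗ[K] V | ∃ α : K, ∃ a ∈ Module.End.maxGenEigenspace D α, br a = x}
    (by
      rintro _ ⟨α, a, ha, rfl⟩
      exact br_nilpotent br D hD hinj α a ha)
    (by
      rintro _ ⟨α, a, ha, rfl⟩ _ ⟨β, b, hb, rfl⟩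
      refine ⟨α + β, br a b, br_mem_genEigen br D hD α β a b ha hb, ?_⟩
      ext c
      simp [leibniz a b c])
  have hall : ∀ a, br a ∈ U := by
    have : (⊤ : Submodule K V) ≤ U.comap br := by
      rw [← Module.End.iSup_maxGenEigenspace_eq_top D]
      exact iSup_le fun α a ha => hSU ⟨α, a, ha, rfl⟩
    exact fun a => this (show a ∈ ⊤ from trivial)
  refine ⟨m, ?_⟩
  rw [eq_bot_iff]
  exact lcs_le_ascFil br U hall m hm m 0 (by omega)

end Fil

open TensorProduct in
lemma lcs_baseChange {K A : Type*} (L : Type*) [Field K] [Field L] [Algebra K L]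
    [AddCommGroup A] [Module K A] (br : A →ₗ[K] A →ₗ[K] A) (n : ℕ) :
    ∀ a ∈ lcs br n, (1 : L) ⊗ₜ[K] a ∈ lcs (LinearMap.BilinMap.baseChange L br) n := by
  induction n with
  | zero => intro a _; exact Submodule.mem_top
  | succ n ih =>
    intro x hx
    change x ∈ Submodule.span K _ at hx
    induction hx using Submodule.span_induction with
    | mem y hy =>
      obtain ⟨a, _, b, hb, rfl⟩ := hy
      refine Submodule.subset_span ⟨1 ⊗ₜ a, trivial, 1 ⊗ₜ b, ih b hb, ?_⟩
      simp
    | zero => rw [tmul_zero]; exact zero_mem _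
    | add a b _ _ ha hb => rw [tmul_add]; exact add_mem ha hb
    | smul c a _ ha =>
      rw [tmul_smul, ← algebraMap_smul L c]
      exact Submodule.smul_mem _ _ ha

/-- a finite-dimensional (left) Leibniz algebra over a field of
characteristic zero admitting a non-singular derivation is nilpotent. -/
theorem leibniz_nilpotent_of_invertible_derivation
    {K A : Type*} [Field K] [CharZero K]
    [AddCommGroup A] [Module K A] [FiniteDimensional K A]
    (br : A →ₗ[K] A →ₗ[K] A)
    (leibniz : ∀ a b c : A, br a (br b c) = br (br a b) c + br b (br a c))
    (D : A →ₗ[K] A)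
    (hD : ∀ a b : A, D (br a b) = br (D a) b + br a (D b))
    (hinv : Function.Bijective D) :
    ∃ m : ℕ, lcs br m = ⊥ := by
  let L := AlgebraicClosure K
  have hl : ∀ x y z : TensorProduct K L A,
      LinearMap.BilinMap.baseChange L br x (LinearMap.BilinMap.baseChange L br y z) =
      LinearMap.BilinMap.baseChange L br (LinearMap.BilinMap.baseChange L br x y) z +
      LinearMap.BilinMap.baseChange L br y (LinearMap.BilinMap.baseChange L br x z) := by
    intro x y z
    induction x using TensorProduct.induction_on with
    | zero => simp
    | add x x' hx hx' => simp only [map_add, LinearMap.add_apply, hx, hx']; abel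
    | tmul r a =>
      induction y using TensorProduct.induction_on with
      | zero => simp
      | add x x' hx hx' => simp only [map_add, LinearMap.add_apply, hx, hx']; abel
      | tmul s b =>
        induction z using TensorProduct.induction_on with
        | zero => simp
        | add x x' hx hx' => simp only [map_add, hx, hx']; abel
        | tmul t c =>
          simp only [LinearMap.BilinMap.baseChange_tmul]
          rw [leibniz a b c, TensorProduct.tmul_add, mul_assoc, mul_left_comm s r t]
  have hd : ∀ x y : TensorProduct K L A,
      D.baseChange L (LinearMap.BilinMap.baseChange L br x y) =
      LinearMap.BilinMap.baseChange L br (D.baseChange L x) y +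
      LinearMap.BilinMap.baseChange L br x (D.baseChange L y) := by
    intro x y
    induction x using TensorProduct.induction_on with
    | zero => simp
    | add x x' hx hx' => simp only [map_add, LinearMap.add_apply, hx, hx']; abel
    | tmul r a =>
      induction y using TensorProduct.induction_on with
      | zero => simp
      | add x x' hx hx' => simp only [map_add, hx, hx']; abel
      | tmul s b =>
        simp only [LinearMap.BilinMap.baseChange_tmul, LinearMap.baseChange_tmul]
        rw [hD a b, TensorProduct.tmul_add]
  have hi : Function.Injective (D.baseChange L) :=
    Module.Flat.lTensor_preserves_injective_linearMap (M := L) D hinv.1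
  obtain ⟨m, hm⟩ := nilpotent_algClosed _ hl _ hd hi
  refine ⟨m, ?_⟩
  rw [eq_bot_iff]
  intro a ha
  have h1 := lcs_baseChange L br m a ha
  rw [hm, Submodule.mem_bot] at h1
  rw [Submodule.mem_bot]
  exact Module.Flat.tensorProduct_mk_injective (R := K) A L (by simpa using h1)
end

section
/- Let A be a finite-dimensional (left) Leibniz algebra over an algebraically closed field of characteristic zero. Then A is nilpotent if and only if A admits an invertible Leibniz derivation of order s for some integer s ≥ 2. -/
/-- The left-normed product `[x_1, x_2, ..., x_s] = [x_1, [x_2, [... [x_{s-1}, x_s] ...]]]`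
of a list of elements (with junk value `0` on the empty list). -/
def leftNormedProd {K A : Type*} [Field K] [AddCommGroup A] [Module K A]
    (br : A →ₗ[K] A →ₗ[K] A) : List A → A
  | [] => 0
  | [x] => x
  | x :: xs => br x (leftNormedProd br xs)


namespace LeibAux

open Module

section Gen
variable {K A : Type*} [Field K] [AddCommGroup A] [Module K A]

/-- product of left multiplications -/
def mulList (br : A →ₗ[K] A →ₗ[K] A) : List A → Module.End K A
  | [] => 1
  | x :: l => br x * mulList br l

/-- formal derivative of `mulList` along `D` -/
def dMulList (br : A →ₗ[K] A →ₗ[K] A) (D : A →ₗ[K] A) : List A → Module.End K A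
  | [] => 0
  | x :: l => br (D x) * mulList br l + br x * dMulList br D l

/-- formal derivative of `leftNormedProd` along `D` -/
def dNorm (br : A →ₗ[K] A →ₗ[K] A) (D : A →ₗ[K] A) : List A → A
  | [] => 0
  | [x] => D x
  | x :: xs => br (D x) (leftNormedProd br xs) + br x (dNorm br D xs)

theorem norm_cons (br : A →ₗ[K] A →ₗ[K] A) (x : A) (l : List A) (hl : l ≠ []) :
    leftNormedProd br (x :: l) = br x (leftNormedProd br l) := by
  cases l with
  | nil => exact absurd rfl hl
  | cons y l => rfl

theorem dNorm_cons (br : A →ₗ[K] A →ₗ[K] A) (D : A →ₗ[K] A) (x : A) (l : List A) (hl : l ≠ []) :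
    dNorm br D (x :: l) = br (D x) (leftNormedProd br l) + br x (dNorm br D l) := by
  cases l with
  | nil => exact absurd rfl hl
  | cons y l => rfl

theorem norm_snoc (br : A →ₗ[K] A →ₗ[K] A) (l : List A) (z : A) :
    leftNormedProd br (l ++ [z]) = mulList br l z := by
  induction l with
  | nil => rfl
  | cons x l ih => rw [List.cons_append, norm_cons _ _ _ (by simp), ih]; rfl

theorem dNorm_snoc (br : A →ₗ[K] A →ₗ[K] A) (D : A →ₗ[K] A) (l : List A) (z : A) :
    dNorm br D (l ++ [z]) = dMulList br D l z + mulList br l (D z) := by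
  induction l with
  | nil => simp [dNorm, dMulList, mulList]
  | cons x l ih =>
    rw [List.cons_append, dNorm_cons _ _ _ _ (by simp), ih, norm_snoc]
    simp [dMulList, mulList, add_assoc]

theorem mulList_append (br : A →ₗ[K] A →ₗ[K] A) (l m : List A) :
    mulList br (l ++ m) = mulList br l * mulList br m := by
  induction l with
  | nil => simp [mulList]
  | cons x l ih => simp [mulList, ih, mul_assoc]

theorem dMulList_append (br : A →ₗ[K] A →ₗ[K] A) (D : A →ₗ[K] A) (l m : List A) :
    dMulList br D (l ++ m) = dMulList br D l * mulList br m + mulList br l * dMulList br D m := by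
  induction l with
  | nil => simp [dMulList, mulList]
  | cons x l ih => simp only [List.cons_append, dMulList, mulList, ih, mulList_append]; noncomm_ring

theorem sum_eq_dNorm (br : A →ₗ[K] A →ₗ[K] A) (D : A →ₗ[K] A) (n : ℕ) (x : Fin n → A) :
    ∑ j : Fin n, leftNormedProd br (List.ofFn (Function.update x j (D (x j)))) =
      dNorm br D (List.ofFn x) := by
  induction n with
  | zero => simp [dNorm]
  | succ n ih =>
    rcases Nat.eq_zero_or_pos n with rfl | hn
    · simp [dNorm, leftNormedProd]
    have hne : ∀ y : Fin n → A, List.ofFn y ≠ [] := by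
      intro y h
      have := congrArg List.length h
      simp at this; omega
    rw [Fin.sum_univ_succ, List.ofFn_succ (f := x), dNorm_cons _ _ _ _ (hne _), ← ih]
    congr 1
    · rw [List.ofFn_succ, norm_cons _ _ _ (hne _)]
      simp
    · rw [map_sum]
      refine Finset.sum_congr rfl fun j _ => ?_
      rw [List.ofFn_succ, norm_cons _ _ _ (hne _), Function.update_of_ne (Fin.succ_ne_zero j).symm]
      congr 3
      ext i
      by_cases h : i = j
      · subst h; simp
      · rw [Function.update_of_ne h, Function.update_of_ne (by simpa using h)]

/-- multilinear version of `mulList` -/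
noncomputable def mulML (br : A →ₗ[K] A →ₗ[K] A) (n : ℕ) :
    MultilinearMap K (fun _ : Fin n => A) (Module.End K A) :=
  (MultilinearMap.mkPiAlgebraFin K n (Module.End K A)).compLinearMap (fun _ => br)

theorem mulML_eq (br : A →ₗ[K] A →ₗ[K] A) (n : ℕ) (x : Fin n → A) :
    mulML br n x = mulList br (List.ofFn x) := by
  have : ∀ l : List A, mulList br l = (l.map br).prod := by
    intro l
    induction l with
    | nil => rfl
    | cons x l ih => simp [mulList, ih]
  rw [this]
  simp [mulML, List.map_ofFn, Function.comp_def]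

theorem sum_eq_dMulList (br : A →ₗ[K] A →ₗ[K] A) (D : A →ₗ[K] A) (n : ℕ) (x : Fin n → A) :
    ∑ j : Fin n, mulList br (List.ofFn (Function.update x j (D (x j)))) =
      dMulList br D (List.ofFn x) := by
  induction n with
  | zero => simp [dMulList]
  | succ n ih =>
    rw [Fin.sum_univ_succ, List.ofFn_succ (f := x), dMulList, ← ih]
    congr 1
    · rw [List.ofFn_succ]
      simp [mulList]
    · rw [Finset.mul_sum]
      refine Finset.sum_congr rfl fun j _ => ?_
      rw [List.ofFn_succ, mulList, Function.update_of_ne (Fin.succ_ne_zero j).symm]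
      congr 3
      ext i
      by_cases h : i = j
      · subst h; simp
      · rw [Function.update_of_ne h, Function.update_of_ne (by simpa using h)]

/-- an endomorphism of a finite-dimensional space that is locally nilpotent is nilpotent -/
theorem nilp_of_local [FiniteDimensional K A] (T : Module.End K A)
    (h : ∀ v, ∃ k, (T ^ k) v = 0) : IsNilpotent T := by
  have h1 : T.maxGenEigenspace 0 = ⊤ := by
    rw [eq_top_iff]
    intro v _
    obtain ⟨k, hk⟩ := h v
    rw [Module.End.mem_maxGenEigenspace]
    exact ⟨k, by simpa using hk⟩
  rw [Module.End.maxGenEigenspace_eq_genEigenspace_finrank] at h1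
  refine ⟨finrank K A, ?_⟩
  ext v
  have : v ∈ T.genEigenspace 0 (finrank K A) := by rw [h1]; trivial
  rw [Module.End.mem_genEigenspace_nat] at this
  simpa using this

/-- the order `n+1` condition in terms of operators -/
def HOp (br : A →ₗ[K] A →ₗ[K] A) (D : Module.End K A) (n : ℕ) : Prop :=
  ∀ l : List A, l.length = n → D * mulList br l - mulList br l * D = dMulList br D l

theorem gen_aux (br : A →ₗ[K] A →ₗ[K] A) (D : Module.End K A) (n : ℕ) (hn : 0 < n)
    (H : HOp br D n) (c : K) (N : ℕ) : ∀ (x : Fin n → A) (k : Fin n → ℕ),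
    (∀ i, ((D - c • 1) ^ k i) (x i) = 0) → ∑ i, k i = N →
    ((LinearMap.mulLeft K D - LinearMap.mulRight K D - ((n : K) * c) • 1) ^ N) (mulML br n x) = 0 := by
  induction N with
  | zero =>
    intro x k h hk
    have h0 : x ⟨0, hn⟩ = 0 := by
      have := h ⟨0, hn⟩
      rw [Finset.sum_eq_zero_iff.mp hk ⟨0, hn⟩ (Finset.mem_univ _)] at this
      simpa using this
    rw [(mulML br n).map_coord_zero _ h0, map_zero]
  | succ N ih =>
    intro x k h hk
    have key : (LinearMap.mulLeft K D - LinearMap.mulRight K D - ((n : K) * c) • (1 : Module.End K (Module.End K A)))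
        (mulML br n x) = ∑ i, mulML br n (Function.update x i ((D - c • 1) (x i))) := by
      have h1 := H (List.ofFn x) (by simp)
      rw [← sum_eq_dMulList] at h1
      simp only [← mulML_eq] at h1
      simp only [LinearMap.sub_apply, LinearMap.mulLeft_apply, LinearMap.mulRight_apply, h1,
        LinearMap.smul_apply, MultilinearMap.map_update_sub, MultilinearMap.map_update_smul,
        Module.End.one_apply, Function.update_eq_self, Finset.sum_sub_distrib, Finset.sum_const,
        Finset.card_univ, Fintype.card_fin]
      rw [← Nat.cast_smul_eq_nsmul K, smul_smul]
    rw [pow_succ, Module.End.mul_apply, key, map_sum]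
    refine Finset.sum_eq_zero fun i _ => ?_
    rcases hki : k i with _ | m
    · have h0 := h i
      rw [hki] at h0
      simp only [pow_zero, Module.End.one_apply] at h0
      rw [(mulML br n).map_coord_zero i (by simp [h0]), map_zero]
    · refine ih _ (Function.update k i m) ?_ ?_
      · intro j
        by_cases hj : j = i
        · subst hj
          have := h j
          rw [hki, pow_succ, Module.End.mul_apply] at this
          simpa using this
        · simpa [hj] using h j
      · have := Finset.sum_update_of_mem (Finset.mem_univ i) k m
        have h2 := Finset.sum_sdiff (f := k) (Finset.subset_univ {i})
        rw [Finset.sum_singleton] at h2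
        omega

end Gen
end LeibAux

namespace LeibAux

open Module

attribute [local instance] LieRing.ofAssociativeRing

section Gen2
variable {K A : Type*} [Field K] [AddCommGroup A] [Module K A]

theorem genEig_zero (D : Module.End K A) (hD : Function.Injective D) :
    D.maxGenEigenspace 0 = ⊥ := by
  rw [eq_bot_iff]
  intro v hv
  rw [Module.End.mem_maxGenEigenspace] at hv
  obtain ⟨k, hk⟩ := hv
  have hk' : (D ^ k) v = 0 := by simpa using hk
  have : Function.Injective (D ^ k : Module.End K A) := by
    rw [Module.End.coe_pow]; exact hD.iterate k
  exact this (by rw [hk', map_zero])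

theorem nilp_hom [CharZero K] [IsAlgClosed K] [FiniteDimensional K A]
    (br : A →ₗ[K] A →ₗ[K] A) (D : Module.End K A)
    (hD : Function.Injective D) (n : ℕ) (hn : 0 < n) (H : HOp br D n) (c : K) (x : A)
    (hx : x ∈ D.maxGenEigenspace c) : IsNilpotent (br x) := by
  by_cases hc : c = 0
  · subst hc
    rw [genEig_zero D hD] at hx
    rw [(Submodule.mem_bot K).mp hx, map_zero]
    exact IsNilpotent.zero
  have hfin : {μ : K | D.maxGenEigenspace μ ≠ ⊥}.Finite :=
    WellFoundedGT.finite_ne_bot_of_iSupIndep (Module.End.independent_maxGenEigenspace D)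
  obtain ⟨k, hk⟩ := (Module.End.mem_maxGenEigenspace _ _ _).mp hx
  set T : Module.End K A := (br x) ^ n with hT
  have hTT : T = mulML br n (fun _ => x) := by
    simp [mulML, hT]
  have hTmem : T ∈ (LieModule.toEnd K (Module.End K A) (Module.End K A) D).maxGenEigenspace ((n : K) * c) := by
    rw [Module.End.mem_maxGenEigenspace]
    refine ⟨∑ _i : Fin n, k, ?_⟩
    have := gen_aux br D n hn H c _ (fun _ => x) (fun _ => k) (fun _ => hk) rfl
    rw [← hTT] at this
    convert this using 4
    ext f v
    simp [LieRing.of_associative_ring_bracket]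
  have step : ∀ (μ : K) (v : A), v ∈ D.maxGenEigenspace μ →
      T v ∈ D.maxGenEigenspace ((n : K) * c + μ) := by
    intro μ v hv
    have := LieModule.lie_mem_maxGenEigenspace_toEnd (R := K) (L := Module.End K A) (M := A)
      (x := D) (y := T) (m := v) hTmem (χ₂ := μ) (by simpa using hv)
    simpa using this
  have step2 : ∀ (j : ℕ) (μ : K) (v : A), v ∈ D.maxGenEigenspace μ →
      (T ^ j) v ∈ D.maxGenEigenspace ((j : K) * ((n : K) * c) + μ) := by
    intro j
    induction j with
    | zero => intro μ v hv; simpa using hv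
    | succ j ih =>
      intro μ v hv
      rw [pow_succ, Module.End.mul_apply]
      have := ih _ _ (step μ v hv)
      convert this using 2
      push_cast; ring
  have hloc : ∀ μ : K, ∀ v ∈ D.maxGenEigenspace μ, v ∈ T.maxGenEigenspace 0 := by
    intro μ v hv
    have hinj : Function.Injective (fun j : ℕ => (j : K) * ((n : K) * c) + μ) := by
      intro i j hij
      have h1 : (n : K) * c ≠ 0 := mul_ne_zero (by exact_mod_cast hn.ne') hc
      have h2 := mul_right_cancel₀ h1 (add_right_cancel hij)
      exact_mod_cast h2
    obtain ⟨_, ⟨j, rfl⟩, hj⟩ := (Set.infinite_range_of_injective hinj).exists_notMem_finite hfin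
    have h3 := step2 j μ v hv
    simp only [Set.mem_ofPred_eq, not_not] at hj
    rw [hj] at h3
    rw [Module.End.mem_maxGenEigenspace]
    exact ⟨j, by simpa using h3⟩
  have hTn : IsNilpotent T := by
    apply nilp_of_local
    intro v
    have htop : (⊤ : Submodule K A) ≤ T.maxGenEigenspace 0 := by
      rw [← Module.End.iSup_maxGenEigenspace_eq_top D]
      exact iSup_le fun μ v hv => hloc μ v hv
    obtain ⟨j, hj⟩ := (Module.End.mem_maxGenEigenspace _ _ _).mp (htop (Submodule.mem_top (x := v)))
    exact ⟨j, by simpa using hj⟩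
  obtain ⟨j, hj⟩ := hTn
  exact ⟨n * j, by rw [pow_mul]; exact hj⟩

/-- homogeneous elements span -/
theorem span_hom [IsAlgClosed K] [FiniteDimensional K A] (D : Module.End K A) :
    Submodule.span K {x : A | ∃ c, x ∈ D.maxGenEigenspace c} = ⊤ := by
  rw [eq_top_iff, ← Module.End.iSup_maxGenEigenspace_eq_top D]
  exact iSup_le fun μ v hv => Submodule.subset_span ⟨μ, hv⟩

/-- consequence of the Lie theorem -/
theorem killed [CharZero K] [IsAlgClosed K] {g V : Type*} [LieRing g] [LieAlgebra K g]
    [LieAlgebra.IsSolvable g] [AddCommGroup V] [Module K V] [LieRingModule g V] [LieModule K g V]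
    [FiniteDimensional K V] [Nontrivial V] (S : Set g) (hS : Submodule.span K S = ⊤)
    (hnil : ∀ x ∈ S, IsNilpotent (LieModule.toEnd K g V x)) :
    ∃ v : V, v ≠ 0 ∧ ∀ x : g, ⁅x, v⁆ = 0 := by
  obtain ⟨χ, hχ⟩ := LieModule.exists_nontrivial_weightSpace_of_isSolvable K g V
  obtain ⟨⟨v, hv⟩, hv0⟩ := exists_ne (0 : LieModule.weightSpace V χ)
  have hv0' : v ≠ 0 := fun h => hv0 (Subtype.ext h)
  rw [LieModule.mem_weightSpace] at hv
  have hχ0 : χ = 0 := by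
    apply LinearMap.ext_on hS
    intro x hx
    obtain ⟨k, hk⟩ := hnil x hx
    have hp : ∀ j : ℕ, ((LieModule.toEnd K g V x) ^ j) v = (χ x) ^ j • v := by
      intro j
      induction j with
      | zero => simp
      | succ j ih =>
        rw [pow_succ', Module.End.mul_apply, ih, map_smul, LieModule.toEnd_apply_apply, hv, smul_smul, pow_succ]
    have := hp k
    rw [hk] at this
    have h4 : (χ x) ^ k = 0 := by
      by_contra h
      exact (smul_ne_zero h hv0') this.symm
    simpa using eq_zero_of_pow_eq_zero h4
  exact ⟨v, hv0', fun x => by rw [hv, hχ0]; simp⟩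

end Gen2
end LeibAux

namespace LeibAux

open Module

attribute [local instance] LieRing.ofAssociativeRing

section Jac
universe u
variable {K : Type*} [Field K]

/-- An ideal with solvable underlying algebra and abelian quotient. -/
theorem solvable_of_sub {g : Type*} [LieRing g] [LieAlgebra K g] (H : LieSubalgebra K g)
    [hs : LieAlgebra.IsSolvable H] (hH : ∀ x y : g, ⁅x, y⁆ ∈ H) : LieAlgebra.IsSolvable g := by
  obtain ⟨k, hk⟩ := LieAlgebra.IsSolvable.solvable K H
  let I : LieIdeal K g := { H.toSubmodule with lie_mem := fun {x m} _ => hH x m }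
  have hI : LieAlgebra.IsSolvable I := by
    let e : I →ₗ⁅K⁆ H :=
      { toFun := fun x => ⟨x.1, x.2⟩
        map_add' := fun _ _ => rfl
        map_smul' := fun _ _ => rfl
        map_lie' := rfl }
    have he : Function.Injective e := fun x y h => Subtype.ext (congrArg (fun z : H => (z : g)) h)
    exact he.lieAlgebra_isSolvable
  obtain ⟨k, hk⟩ := LieAlgebra.IsSolvable.solvable K I
  rw [LieIdeal.derivedSeries_eq_bot_iff] at hk
  refine LieAlgebra.IsSolvable.mk (R := K) (k := k + 1) ?_
  rw [LieAlgebra.derivedSeries_def, LieAlgebra.derivedSeriesOfIdeal_add, eq_bot_iff, ← hk]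
  apply LieAlgebra.derivedSeriesOfIdeal_mono
  rw [LieAlgebra.derivedSeriesOfIdeal_succ, LieAlgebra.derivedSeriesOfIdeal_zero,
    LieSubmodule.lieIdeal_oper_eq_span, LieSubmodule.lieSpan_le]
  rintro _ ⟨x, y, rfl⟩
  exact hH _ _

theorem jacobson_solvable [CharZero K] [IsAlgClosed K] (d : ℕ) : ∀ (g : Type u) [LieRing g] [LieAlgebra K g]
    [FiniteDimensional K g] (δ : Module.End K g), Function.Injective δ →
    (∀ x y : g, δ ⁅x, y⁆ = ⁅δ x, y⁆ + ⁅x, δ y⁆) → finrank K g = d → LieAlgebra.IsSolvable g := by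
  induction d using Nat.strong_induction_on with
  | _ d IH =>
  intro g _ _ _ δ hδ hl hd
  by_cases hg : Subsingleton g
  · infer_instance
  rw [not_subsingleton_iff_nontrivial] at hg
  -- a maximal proper invariant subalgebra
  let s : Set (LieSubalgebra K g) := {H | H ≠ ⊤ ∧ ∀ x ∈ H, δ x ∈ H}
  have hs : s.Nonempty := by
    refine ⟨⊥, ?_, ?_⟩
    · intro h
      obtain ⟨x, hx⟩ := exists_ne (0 : g)
      have hx2 : x ∈ (⊥ : LieSubalgebra K g) := by rw [h]; exact LieSubalgebra.mem_top x
      exact hx ((LieSubalgebra.mem_bot x).mp hx2)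
    · intro x hx
      rw [LieSubalgebra.mem_bot] at hx ⊢
      rw [hx, map_zero]
  obtain ⟨H, ⟨hHtop, hHδ⟩, hmax⟩ := (LieSubalgebra.wellFoundedGT_of_noetherian K g).wf.has_min s hs
  have hmax' : ∀ H' : LieSubalgebra K g, (∀ x ∈ H', δ x ∈ H') → H < H' → H' = ⊤ := by
    intro H' h1 h2
    by_contra h3
    exact hmax H' ⟨h3, h1⟩ h2
  have hlt : finrank K H < d := by
    rw [← hd]
    apply Submodule.finrank_lt (s := H.toSubmodule)
    intro h
    exact hHtop (LieSubalgebra.toSubmodule_injective (by simpa using h))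
  let δH : Module.End K H := δ.restrict (p := H.toSubmodule) (q := H.toSubmodule) hHδ
  have hδHc : ∀ x : H, ((δH x : H) : g) = δ x := fun x => rfl
  have hδH : Function.Injective δH := by
    intro x y h
    apply Subtype.ext
    apply hδ
    rw [← hδHc, ← hδHc, h]
  have hHs : LieAlgebra.IsSolvable H := by
    refine IH _ hlt H δH hδH ?_ rfl
    intro x y
    apply Subtype.ext
    simp [hδHc, hl]
  -- act on the quotient
  let N : LieSubmodule K H g := H.toLieSubmodule
  let M := g ⧸ N
  have hM : Nontrivial M := by
    apply Submodule.Quotient.nontrivial_iff.mpr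
    intro h
    apply hHtop
    apply LieSubalgebra.toSubmodule_injective
    simpa [N] using h
  have hfM : FiniteDimensional K M := inferInstanceAs (FiniteDimensional K (g ⧸ N.toSubmodule))
  let br : g →ₗ[K] g →ₗ[K] g := (LieModule.toEnd K g g : g →ₗ[K] g →ₗ[K] g)
  have hbr : ∀ x y, br x y = ⁅x, y⁆ := fun _ _ => rfl
  have hop : HOp br δ 1 := by
    intro l hlen
    obtain ⟨x, rfl⟩ := List.length_eq_one_iff.mp hlen
    ext y
    simp [mulList, dMulList, hbr, hl]
  obtain ⟨v, hv0, hv⟩ := killed (K := K) (g := H) (V := M)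
    {x : H | ∃ c, x ∈ δH.maxGenEigenspace c} (span_hom δH) (by
      rintro x ⟨c, hx⟩
      have hx' : (x : g) ∈ δ.maxGenEigenspace c := by
        rw [Module.End.mem_maxGenEigenspace] at hx ⊢
        obtain ⟨k, hk⟩ := hx
        refine ⟨k, ?_⟩
        have : ∀ (k : ℕ) (x : H), ((((δH - c • 1) ^ k) x : H) : g) = ((δ - c • 1) ^ k) (x : g) := by
          intro k
          induction k with
          | zero => intro x; simp
          | succ k ih =>
            intro x
            rw [pow_succ, pow_succ, Module.End.mul_apply, Module.End.mul_apply, ih]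
            simp [hδHc]
        rw [← this, hk]; rfl
      obtain ⟨k, hk⟩ := nilp_hom br δ hδ 1 one_pos hop c x hx'
      refine ⟨k, ?_⟩
      have : ∀ (k : ℕ) (y : g), ((LieModule.toEnd K H M x) ^ k) (LieSubmodule.Quotient.mk' N y) =
          LieSubmodule.Quotient.mk' N (((br (x : g)) ^ k) y) := by
        intro k
        induction k with
        | zero => intro y; rfl
        | succ k ih =>
          intro y
          rw [pow_succ, pow_succ, Module.End.mul_apply, Module.End.mul_apply, ← ih]
          rfl
      ext m
      obtain ⟨y, rfl⟩ := LieSubmodule.Quotient.surjective_mk' N m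
      rw [this, hk]
      simp)
  obtain ⟨y, rfl⟩ := LieSubmodule.Quotient.surjective_mk' N v
  have hyH : y ∉ H := by
    intro h
    exact hv0 ((LieSubmodule.Quotient.mk_eq_zero (N := N)).mpr h)
  have hyN : y ∈ H.normalizer := by
    rw [LieSubalgebra.mem_normalizer_iff']
    intro z hz
    have h1 := hv ⟨z, hz⟩
    rw [← LieModuleHom.map_lie, LieSubmodule.Quotient.mk_eq_zero] at h1
    exact h1
  have hnorm : H.normalizer = ⊤ := by
    apply hmax'
    · intro x hx
      rw [LieSubalgebra.mem_normalizer_iff] at hx ⊢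
      intro z hz
      have : ⁅δ x, z⁆ = δ ⁅x, z⁆ - ⁅x, δ z⁆ := by rw [hl]; abel
      rw [this]
      exact sub_mem (hHδ _ (hx z hz)) (hx _ (hHδ z hz))
    · refine lt_of_le_of_ne (LieSubalgebra.le_normalizer H) ?_
      intro h
      exact hyH (h ▸ hyN)
  have hid : ∀ x : g, ∀ z ∈ H, ⁅x, z⁆ ∈ H := by
    intro x z hz
    have : x ∈ H.normalizer := by rw [hnorm]; exact LieSubalgebra.mem_top x
    exact (LieSubalgebra.mem_normalizer_iff H x).mp this z hz
  -- an eigenvector in the quotient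
  let Q := g ⧸ H.toSubmodule
  have hQ : Nontrivial Q := hM
  let δQ : Module.End K Q := H.toSubmodule.mapQ H.toSubmodule δ hHδ
  obtain ⟨μ, hμ⟩ := Module.End.exists_eigenvalue δQ
  obtain ⟨w, hw⟩ := hμ.exists_hasEigenvector
  obtain ⟨a, rfl⟩ := H.toSubmodule.mkQ_surjective w
  have haH : a ∉ H := by
    intro h
    exact hw.2 ((Submodule.Quotient.mk_eq_zero _).mpr h)
  have haδ : δ a - μ • a ∈ H := by
    have h1 : δQ (H.toSubmodule.mkQ a) = μ • H.toSubmodule.mkQ a := hw.apply_eq_smul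
    have h2 : H.toSubmodule.mkQ (δ a - μ • a) = 0 := by
      rw [map_sub, map_smul, ← h1]; exact sub_self _
    exact (Submodule.Quotient.mk_eq_zero _).mp h2
  have hmem : ∀ x y, x ∈ Submodule.span K {a} ⊔ H.toSubmodule →
      y ∈ Submodule.span K {a} ⊔ H.toSubmodule → ⁅x, y⁆ ∈ H := by
    intro x y hx hy
    obtain ⟨_, h1, p, hp, rfl⟩ := Submodule.mem_sup.mp hx
    obtain ⟨_, h2, q, hq, rfl⟩ := Submodule.mem_sup.mp hy
    obtain ⟨r, rfl⟩ := Submodule.mem_span_singleton.mp h1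
    obtain ⟨t, rfl⟩ := Submodule.mem_span_singleton.mp h2
    have e : ⁅r • a + p, t • a + q⁆ = ⁅r • a, q⁆ - ⁅t • a, p⁆ + ⁅p, q⁆ := by
      rw [← lie_skew (t • a) p]
      simp
      abel
    rw [e]
    exact add_mem (sub_mem (hid _ _ hq) (hid _ _ hp)) (hid _ _ hq)
  let H' : LieSubalgebra K g :=
    { (Submodule.span K {a} ⊔ H.toSubmodule) with
      lie_mem' := fun {x y} hx hy => Submodule.mem_sup_right (hmem x y hx hy) }
  have hH' : H' = ⊤ := by
    apply hmax'
    · intro x hx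
      obtain ⟨_, h1, p, hp, rfl⟩ := Submodule.mem_sup.mp (show x ∈ Submodule.span K {a} ⊔ H.toSubmodule from hx)
      obtain ⟨r, rfl⟩ := Submodule.mem_span_singleton.mp h1
      have e : δ (r • a + p) = (r * μ) • a + (r • (δ a - μ • a) + δ p) := by
        rw [map_add, map_smul, smul_sub, smul_smul]; abel
      rw [e]
      exact Submodule.add_mem_sup (Submodule.mem_span_singleton.mpr ⟨_, rfl⟩)
        (add_mem (H.toSubmodule.smul_mem r haδ) (hHδ p hp))
    · refine lt_of_le_of_ne (fun x hx => Submodule.mem_sup_right (show x ∈ H.toSubmodule from hx)) ?_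
      intro h
      apply haH
      rw [h]
      exact Submodule.mem_sup_left (Submodule.mem_span_singleton_self a)
  have htop : ∀ x, x ∈ Submodule.span K {a} ⊔ H.toSubmodule := by
    intro x
    have : x ∈ H' := by rw [hH']; exact LieSubalgebra.mem_top x
    exact this
  exact solvable_of_sub (K := K) H (fun x y => hmem x y (htop x) (htop y))

end Jac
end LeibAux

namespace LeibAux

open Module

attribute [local instance] LieRing.ofAssociativeRing

section Perfect
variable {K A : Type*} [Field K] [AddCommGroup A] [Module K A]

/-- the order `n+1` condition -/
def HN (br : A →ₗ[K] A →ₗ[K] A) (D : Module.End K A) (n : ℕ) : Prop :=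
  ∀ l : List A, l.length = n + 1 → D (leftNormedProd br l) = dNorm br D l

theorem HN.hOp {br : A →ₗ[K] A →ₗ[K] A} {D : Module.End K A} {n : ℕ} (h : HN br D n) :
    HOp br D n := by
  intro l hl
  ext z
  have := h (l ++ [z]) (by simp [hl])
  rw [norm_snoc, dNorm_snoc] at this
  simp [this]

/-- Leibniz identity -/
def Leib (br : A →ₗ[K] A →ₗ[K] A) : Prop :=
  ∀ a b c : A, br a (br b c) = br (br a b) c + br b (br a c)

theorem Leib.lie {br : A →ₗ[K] A →ₗ[K] A} (h : Leib br) (a b : A) :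
    br (br a b) = ⁅(br a : Module.End K A), (br b : Module.End K A)⁆ := by
  ext c
  simp [LieRing.of_associative_ring_bracket, h a b c]

theorem lemA {br : A →ₗ[K] A →ₗ[K] A} (L : Leib br) {D : Module.End K A} {n : ℕ}
    (H : HOp br D n) (l : List A) (hl : l ≠ []) : ∀ pre suf : List A,
    pre.length + l.length + suf.length = n →
    ⁅D, mulList br pre * br (leftNormedProd br l) * mulList br suf⁆ =
      dMulList br D pre * br (leftNormedProd br l) * mulList br suf +
      mulList br pre * br (dNorm br D l) * mulList br suf +
      mulList br pre * br (leftNormedProd br l) * dMulList br D suf := by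
  induction l with
  | nil => exact absurd rfl hl
  | cons x l ih =>
    intro pre suf hlen
    by_cases hl' : l = []
    · subst hl'
      have h1 := H (pre ++ [x] ++ suf) (by simp at hlen ⊢; omega)
      simp only [mulList_append, dMulList_append] at h1
      simp only [mulList, dMulList, mul_one, mul_zero, add_zero] at h1
      simp only [leftNormedProd, dNorm, LieRing.of_associative_ring_bracket]
      rw [h1]; noncomm_ring
    · have i1 := ih hl' (pre ++ [x]) suf (by simp at hlen ⊢; omega)
      have i2 := ih hl' pre (x :: suf) (by simp at hlen ⊢; omega)
      rw [norm_cons _ _ _ hl', dNorm_cons _ _ _ _ hl', map_add, L.lie, L.lie, L.lie]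
      simp only [mulList_append, dMulList_append, mulList, dMulList, mul_one, mul_zero, add_zero] at i1 i2
      simp only [LieRing.of_associative_ring_bracket] at i1 i2 ⊢
      generalize mulList br pre = P at *
      generalize mulList br suf = S at *
      generalize dMulList br D pre = P' at *
      generalize dMulList br D suf = S' at *
      generalize (br (leftNormedProd br l) : Module.End K A) = q at *
      generalize (br (dNorm br D l) : Module.End K A) = q' at *
      generalize (br x : Module.End K A) = X at *
      generalize (br (D x) : Module.End K A) = X' at *
      have e : D * (P * (X * q - q * X) * S) - P * (X * q - q * X) * S * D =
        (D * (P * X * q * S) - P * X * q * S * D) - (D * (P * q * (X * S)) - P * q * (X * S) * D) := by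
        noncomm_ring
      rw [e, i1, i2]; noncomm_ring

theorem lie_norm {br : A →ₗ[K] A →ₗ[K] A} (L : Leib br) {D : Module.End K A} {n : ℕ}
    (hn : 0 < n) (H : HOp br D n) (l : List A) (hl : l.length = n) :
    ⁅D, (br (leftNormedProd br l) : Module.End K A)⁆ = br (dNorm br D l) := by
  have := lemA L H l (by rintro rfl; simp at hl; omega) [] [] (by simpa using hl)
  simpa [mulList, dMulList] using this

theorem perfect_span {br : A →ₗ[K] A →ₗ[K] A} (hp : bracketSpan br ⊤ ⊤ = ⊤) (k : ℕ) :
    Submodule.span K {x | ∃ l : List A, l.length = k + 1 ∧ leftNormedProd br l = x} = ⊤ := by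
  induction k with
  | zero =>
    rw [eq_top_iff]
    intro x _
    exact Submodule.subset_span ⟨[x], rfl, rfl⟩
  | succ k ih =>
    rw [eq_top_iff, ← hp, bracketSpan, Submodule.span_le]
    rintro _ ⟨a, -, b, -, rfl⟩
    have hb : b ∈ Submodule.span K {x | ∃ l : List A, l.length = k + 1 ∧ leftNormedProd br l = x} := by
      rw [ih]; trivial
    induction hb using Submodule.span_induction with
    | mem x hx =>
      obtain ⟨l, hl, rfl⟩ := hx
      refine Submodule.subset_span ⟨a :: l, by simp [hl], ?_⟩
      rw [norm_cons]
      rintro rfl; simp at hl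
    | zero => simp
    | add x y _ _ hx hy => rw [map_add]; exact add_mem hx hy
    | smul c x _ hx => rw [map_smul]; exact Submodule.smul_mem _ c hx

/-- defect of `D` being a derivation -/
def defect (br : A →ₗ[K] A →ₗ[K] A) (D : Module.End K A) : A →ₗ[K] Module.End K A :=
  (LinearMap.mulLeft K D - LinearMap.mulRight K D) ∘ₗ br - br ∘ₗ D

theorem defect_apply (br : A →ₗ[K] A →ₗ[K] A) (D : Module.End K A) (x : A) :
    defect br D x = ⁅D, (br x : Module.End K A)⁆ - br (D x) := rfl

/-- the derivative of the commutator product along the defect -/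
def eList (br : A →ₗ[K] A →ₗ[K] A) (D : Module.End K A) : List A → Module.End K A
  | [] => 0
  | [x] => defect br D x
  | x :: xs => ⁅defect br D x, (br (leftNormedProd br xs) : Module.End K A)⁆ +
      ⁅(br x : Module.End K A), eList br D xs⁆

theorem eList_cons (br : A →ₗ[K] A →ₗ[K] A) (D : Module.End K A) (x : A) (l : List A)
    (hl : l ≠ []) : eList br D (x :: l) =
      ⁅defect br D x, (br (leftNormedProd br l) : Module.End K A)⁆ +
      ⁅(br x : Module.End K A), eList br D l⁆ := by
  cases l with
  | nil => exact absurd rfl hl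
  | cons y l => rfl

theorem lie_norm_gen {br : A →ₗ[K] A →ₗ[K] A} (L : Leib br) (D : Module.End K A)
    (l : List A) (hl : l ≠ []) :
    ⁅D, (br (leftNormedProd br l) : Module.End K A)⁆ = br (dNorm br D l) + eList br D l := by
  induction l with
  | nil => exact absurd rfl hl
  | cons x l ih =>
    by_cases hl' : l = []
    · subst hl'
      simp [leftNormedProd, dNorm, eList, defect_apply]
    · rw [norm_cons _ _ _ hl', dNorm_cons _ _ _ _ hl', eList_cons _ _ _ _ hl', map_add,
        L.lie, L.lie, L.lie, leibniz_lie, ih hl', defect_apply, lie_add, sub_lie]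
      abel

theorem perfect_derivation [CharZero K] {br : A →ₗ[K] A →ₗ[K] A} (L : Leib br)
    {D : Module.End K A} {n : ℕ} (hn : 0 < n) (H : HN br D n)
    (hp : bracketSpan br ⊤ ⊤ = ⊤) (x : A) :
    ⁅D, (br x : Module.End K A)⁆ = br (D x) := by
  set E := defect br D with hE
  have ind : ∀ (k : ℕ) (M : Type _) [AddCommGroup M] [Module K M] (f g : A →ₗ[K] M),
      (∀ l : List A, l.length = k + 1 → f (leftNormedProd br l) = g (leftNormedProd br l)) →
      f = g := by
    intro k M _ _ f g h
    refine LinearMap.ext_on (perfect_span hp k) ?_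
    rintro _ ⟨l, hl, rfl⟩
    exact h l hl
  -- first identity
  have h1 : ∀ x y, E (br x y) = ⁅E x, (br y : Module.End K A)⁆ := by
    intro x y
    obtain ⟨m, rfl⟩ : ∃ m, n = m + 1 := ⟨n - 1, by omega⟩
    let ψ : A →ₗ[K] Module.End K A := (LinearMap.mulLeft K (E x) - LinearMap.mulRight K (E x)) ∘ₗ br
    have hψ : ∀ y, ψ y = ⁅E x, (br y : Module.End K A)⁆ := fun _ => rfl
    have : E ∘ₗ br x = ψ := by
      refine ind m _ _ _ ?_
      intro l hl
      have hl' : l ≠ [] := by rintro rfl; simp at hl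
      rw [LinearMap.comp_apply, hψ, hE, defect_apply, defect_apply, ← norm_cons _ _ _ hl',
        H (x :: l) (by simp [hl]), dNorm_cons _ _ _ _ hl', norm_cons _ _ _ hl', map_add, L.lie, L.lie, L.lie,
        ← lie_norm L hn H.hOp l hl, sub_lie, leibniz_lie]
      abel
    rw [← hψ, ← this]; rfl
  have h2 : ∀ x y z, ⁅(br y : Module.End K A), ⁅E x, (br z : Module.End K A)⁆⁆ =
      ⁅E y, ⁅(br x : Module.End K A), (br z : Module.End K A)⁆⁆ := by
    intro x y z
    have a1 := h1 x (br y z)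
    rw [L x y z, map_add, h1, h1, h1, L.lie, L.lie, leibniz_lie (E x)] at a1
    exact (add_left_cancel a1).symm
  have h4 : ∀ (l : List A), l ≠ [] → ∀ u v,
      ⁅(br v : Module.End K A), ⁅(br u : Module.End K A), eList br D l⁆⁆ =
      (l.length : K) • ⁅(br v : Module.End K A), ⁅E u, (br (leftNormedProd br l) : Module.End K A)⁆⁆ := by
    intro l
    induction l with
    | nil => intro h; exact absurd rfl h
    | cons x l ih =>
      intro _ u v
      by_cases hl' : l = []
      · subst hl'
        simp only [eList, leftNormedProd, List.length_singleton, Nat.cast_one, one_smul, ← hE]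
        rw [← lie_skew (br u : Module.End K A) (E x), lie_neg, h2, h2, ← lie_skew (br x : Module.End K A), lie_neg, neg_neg]
      · rw [eList_cons _ _ _ _ hl', norm_cons _ _ _ hl', ← hE, lie_add, lie_add, h2, ih hl', L.lie,
          lie_smul, h2, List.length_cons]
        push_cast
        rw [add_smul, one_smul, add_comm]
  have h5 : ∀ v x, ⁅(br v : Module.End K A), E x⁆ = 0 := by
    intro v x
    let ψ : A →ₗ[K] Module.End K A := (LinearMap.mulLeft K (br v : Module.End K A) - LinearMap.mulRight K (br v : Module.End K A)) ∘ₗ E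
    have hψ : ∀ y, ψ y = ⁅(br v : Module.End K A), E y⁆ := fun _ => rfl
    have : ψ = 0 := by
      refine ind n _ _ _ ?_
      intro l hl
      rw [hψ, LinearMap.zero_apply]
      obtain ⟨u, l, rfl⟩ : ∃ u l', l = u :: l' := by
        cases l with
        | nil => simp at hl
        | cons u l => exact ⟨u, l, rfl⟩
      have hl2 : l.length = n := by simpa using hl
      have hl' : l ≠ [] := by rintro rfl; simp at hl2; omega
      have e1 : E (leftNormedProd br (u :: l)) = eList br D (u :: l) := by
        rw [hE, defect_apply, lie_norm_gen L D _ (by simp), H _ hl]; abel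
      rw [eList_cons _ _ _ _ hl', norm_cons _ _ _ hl', h1, ← hE] at e1
      have e2 : ⁅(br u : Module.End K A), eList br D l⁆ = 0 := by
        simpa using e1.symm
      have e3 := h4 l hl' u v
      rw [e2, lie_zero, hl2] at e3
      rw [norm_cons _ _ _ hl', h1]
      exact (smul_eq_zero.mp e3.symm).resolve_left (by exact_mod_cast hn.ne')
    rw [← hψ, this]; rfl
  have h6 : E = 0 := by
    refine ind 1 _ _ _ ?_
    intro l hl
    obtain ⟨a, b, rfl⟩ := List.length_eq_two.mp hl
    have : leftNormedProd br [a, b] = br a b := rfl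
    rw [this, h1, ← lie_skew, h5]; simp
  have := defect_apply br D x
  rw [← hE, h6] at this
  exact (sub_eq_zero.mp this.symm)

end Perfect
end LeibAux

namespace LeibAux

open Module

attribute [local instance] LieRing.ofAssociativeRing

section Final
universe u
variable {K : Type*} [Field K]

section
variable {A : Type*} [AddCommGroup A] [Module K A]

/-- the Lie algebra of left multiplications -/
def leftLie (br : A →ₗ[K] A →ₗ[K] A) (L : Leib br) : LieSubalgebra K (Module.End K A) :=
  { LinearMap.range br with
    lie_mem' := by
      rintro _ _ ⟨a, rfl⟩ ⟨b, rfl⟩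
      exact ⟨br a b, L.lie a b⟩ }

/-- left multiplication as element of `leftLie` -/
def leftMul (br : A →ₗ[K] A →ₗ[K] A) (L : Leib br) : A →ₗ[K] leftLie br L :=
  LinearMap.codRestrict (leftLie br L).toSubmodule br (fun x => ⟨x, rfl⟩)

theorem leftMul_coe (br : A →ₗ[K] A →ₗ[K] A) (L : Leib br) (x : A) :
    ((leftMul br L x : leftLie br L) : Module.End K A) = br x := rfl

theorem leftMul_surj (br : A →ₗ[K] A →ₗ[K] A) (L : Leib br) : Function.Surjective (leftMul br L) := by
  rintro ⟨_, a, rfl⟩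
  exact ⟨a, rfl⟩

theorem leftMul_lie (br : A →ₗ[K] A →ₗ[K] A) (L : Leib br) (a b : A) :
    leftMul br L (br a b) = ⁅leftMul br L a, leftMul br L b⁆ := Subtype.ext (L.lie a b)

theorem perfect_zero [CharZero K] [IsAlgClosed K] [FiniteDimensional K A]
    {br : A →ₗ[K] A →ₗ[K] A} (L : Leib br)
    {D : Module.End K A} (hD : Function.Bijective D) {n : ℕ} (hn : 0 < n) (H : HN br D n)
    (hp : bracketSpan br ⊤ ⊤ = ⊤) : (⊤ : Submodule K A) = ⊥ := by
  have hder := perfect_derivation L hn H hp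
  let g := leftLie br L
  have hmem : ∀ T ∈ g, (LinearMap.mulLeft K D - LinearMap.mulRight K D) T ∈ g := by
    rintro _ ⟨x, rfl⟩
    exact ⟨D x, (hder x).symm⟩
  let δ : Module.End K g :=
    (LinearMap.mulLeft K D - LinearMap.mulRight K D).restrict (p := g.toSubmodule)
      (q := g.toSubmodule) hmem
  have hδc : ∀ T : g, ((δ T : g) : Module.End K A) = ⁅D, (T : Module.End K A)⁆ := fun _ => rfl
  have hδL : ∀ x, δ (leftMul br L x) = leftMul br L (D x) := fun x => Subtype.ext (hder x)
  have hsurj : Function.Surjective δ := by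
    intro T
    obtain ⟨a, rfl⟩ := leftMul_surj br L T
    obtain ⟨b, rfl⟩ := hD.2 a
    exact ⟨leftMul br L b, hδL b⟩
  have hinj : Function.Injective δ := LinearMap.injective_iff_surjective.mpr hsurj
  have hsolv : LieAlgebra.IsSolvable g := by
    refine jacobson_solvable (K := K) _ g δ hinj ?_ rfl
    intro x y
    apply Subtype.ext
    rw [hδc, LieSubalgebra.coe_bracket, leibniz_lie]
    rfl
  have hder1 : LieAlgebra.derivedSeries K g 1 = ⊤ := by
    have hc : (LieAlgebra.derivedSeries K g 1).toSubmodule =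
        Submodule.span K {⁅x, y⁆ | (x : g) (y : g)} :=
      LieAlgebra.coe_derivedSeries_one_eq (R := K) (L := g)
    rw [← LieSubmodule.toSubmodule_inj, LieSubmodule.top_toSubmodule, hc, eq_top_iff]
    have : (⊤ : Submodule K A) ≤ (Submodule.span K {⁅x, y⁆ | (x : g) (y : g)}).comap (leftMul br L) := by
      rw [← hp, bracketSpan, Submodule.span_le]
      rintro _ ⟨a, -, b, -, rfl⟩
      apply Submodule.subset_span
      exact ⟨_, _, (leftMul_lie br L a b).symm⟩
    intro T _
    obtain ⟨a, rfl⟩ := leftMul_surj br L T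
    exact this (Submodule.mem_top (x := a))
  have hsub : Subsingleton g := by
    by_contra h
    rw [not_subsingleton_iff_nontrivial] at h
    exact (LieAlgebra.derivedSeries_lt_top_of_solvable (R := K) (L := g)).ne hder1
  rw [eq_bot_iff, ← hp, bracketSpan, Submodule.span_le]
  rintro _ ⟨a, -, b, -, rfl⟩
  have h0 : leftMul br L a = 0 := Subsingleton.elim _ _
  have h1 : br a = 0 := by rw [← leftMul_coe br L, h0]; rfl
  rw [h1]; simp

theorem bs_mono (br : A →ₗ[K] A →ₗ[K] A) {p p' q q' : Submodule K A} (h : p ≤ p') (h' : q ≤ q') :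
    bracketSpan br p q ≤ bracketSpan br p' q' := by
  apply Submodule.span_mono
  rintro _ ⟨a, ha, b, hb, rfl⟩
  exact ⟨a, h ha, b, h' hb, rfl⟩

theorem lcs_succ_le (br : A →ₗ[K] A →ₗ[K] A) (n : ℕ) : lcs br (n + 1) ≤ lcs br n := by
  induction n with
  | zero => exact le_top
  | succ n ih => exact bs_mono br le_rfl ih

theorem der_le_lcs (br : A →ₗ[K] A →ₗ[K] A) (n : ℕ) : derSeries br n ≤ lcs br n := by
  induction n with
  | zero => exact le_rfl
  | succ n ih => exact bs_mono br le_top ih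

theorem mulList_mem_lcs (br : A →ₗ[K] A →ₗ[K] A) (l : List A) (z : A) :
    mulList br l z ∈ lcs br l.length := by
  induction l with
  | nil => exact Submodule.mem_top
  | cons x l ih => exact Submodule.subset_span ⟨x, Submodule.mem_top, _, ih, rfl⟩

theorem lcs_le_span (br : A →ₗ[K] A →ₗ[K] A) (n : ℕ) :
    lcs br n ≤ Submodule.span K {y | ∃ l : List A, l.length = n ∧ ∃ z, mulList br l z = y} := by
  induction n with
  | zero => intro z _; exact Submodule.subset_span ⟨[], rfl, z, rfl⟩
  | succ n ih =>
    rw [lcs, bracketSpan, Submodule.span_le]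
    rintro _ ⟨a, -, b, hb, rfl⟩
    have : Submodule.span K {y | ∃ l : List A, l.length = n ∧ ∃ z, mulList br l z = y} ≤
      (Submodule.span K {y | ∃ l : List A, l.length = n + 1 ∧ ∃ z, mulList br l z = y}).comap (br a) := by
      rw [Submodule.span_le]
      rintro _ ⟨l, hl, z, rfl⟩
      exact Submodule.subset_span ⟨a :: l, by simp [hl], z, rfl⟩
    exact this (ih hb)

theorem dMulList_mem_lcs (br : A →ₗ[K] A →ₗ[K] A) (D : Module.End K A) (l : List A) (z : A) :
    dMulList br D l z ∈ lcs br l.length := by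
  induction l with
  | nil => exact Submodule.mem_top
  | cons x l ih =>
    refine add_mem ?_ ?_
    · exact mulList_mem_lcs br (D x :: l) z
    · exact Submodule.subset_span ⟨x, Submodule.mem_top, _, ih, rfl⟩

theorem lcs_D (br : A →ₗ[K] A →ₗ[K] A) (D : Module.End K A) (n : ℕ) (H : HOp br D n) :
    ∀ x ∈ lcs br n, D x ∈ lcs br n := by
  have : Submodule.span K {y | ∃ l : List A, l.length = n ∧ ∃ z, mulList br l z = y} ≤
      (lcs br n).comap D := by
    rw [Submodule.span_le]
    rintro _ ⟨l, hl, z, rfl⟩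
    have h1 := LinearMap.congr_fun (H l hl) z
    simp only [LinearMap.sub_apply, Module.End.mul_apply] at h1
    change D (mulList br l z) ∈ lcs br n
    rw [sub_eq_iff_eq_add.mp h1]
    subst hl
    exact add_mem (dMulList_mem_lcs br D l z) (mulList_mem_lcs br l _)
  exact fun x hx => this (lcs_le_span br n hx)

/-- restriction of the bracket -/
def brSub (br : A →ₗ[K] A →ₗ[K] A) (B : Submodule K A) (hB : ∀ a ∈ B, ∀ b ∈ B, br a b ∈ B) :
    B →ₗ[K] B →ₗ[K] B :=
  LinearMap.mk₂ K (fun a b => ⟨br a b, hB a a.2 b b.2⟩)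
    (fun _ _ _ => Subtype.ext (by simp)) (fun _ _ _ => Subtype.ext (by simp))
    (fun _ _ _ => Subtype.ext (by simp)) (fun _ _ _ => Subtype.ext (by simp))

theorem brSub_coe (br : A →ₗ[K] A →ₗ[K] A) (B : Submodule K A)
    (hB : ∀ a ∈ B, ∀ b ∈ B, br a b ∈ B) (a b : B) : ((brSub br B hB a b : B) : A) = br a b := rfl

theorem norm_sub (br : A →ₗ[K] A →ₗ[K] A) (B : Submodule K A)
    (hB : ∀ a ∈ B, ∀ b ∈ B, br a b ∈ B) (l : List B) :
    ((leftNormedProd (brSub br B hB) l : B) : A) = leftNormedProd br (l.map (fun x : B => (x : A))) := by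
  induction l with
  | nil => rfl
  | cons x l ih =>
    by_cases h : l = []
    · subst h; rfl
    · rw [norm_cons _ _ _ h, List.map_cons, norm_cons _ _ _ (fun h' => h (List.map_eq_nil_iff.mp h')), brSub_coe, ih]

theorem dNorm_sub (br : A →ₗ[K] A →ₗ[K] A) (D : Module.End K A) (B : Submodule K A)
    (hB : ∀ a ∈ B, ∀ b ∈ B, br a b ∈ B) (hD : ∀ x ∈ B, D x ∈ B) (l : List B) :
    ((dNorm (brSub br B hB) (D.restrict hD) l : B) : A) =
      dNorm br D (l.map (fun x : B => (x : A))) := by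
  induction l with
  | nil => rfl
  | cons x l ih =>
    by_cases h : l = []
    · subst h; rfl
    · rw [dNorm_cons _ _ _ _ h, List.map_cons, dNorm_cons _ _ _ _ (fun h' => h (List.map_eq_nil_iff.mp h')),
        Submodule.coe_add, brSub_coe, brSub_coe, ih, norm_sub]
      rfl

theorem der_sub (br : A →ₗ[K] A →ₗ[K] A) (B : Submodule K A)
    (hB : ∀ a ∈ B, ∀ b ∈ B, br a b ∈ B) (n : ℕ) (hn : derSeries br n ≤ B) (k : ℕ) :
    derSeries br (n + k) ≤ (derSeries (brSub br B hB) k).map B.subtype := by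
  induction k with
  | zero => intro x hx; exact ⟨⟨x, hn hx⟩, Submodule.mem_top, rfl⟩
  | succ k ih =>
    rw [← add_assoc, derSeries, bracketSpan, Submodule.span_le]
    rintro _ ⟨a, ha, b, hb, rfl⟩
    obtain ⟨a', ha', rfl⟩ := ih ha
    obtain ⟨b', hb', rfl⟩ := ih hb
    exact ⟨brSub br B hB a' b', Submodule.subset_span ⟨a', ha', b', hb', rfl⟩, rfl⟩

theorem leftLie_solvable (br : A →ₗ[K] A →ₗ[K] A) (L : Leib br) (k : ℕ)
    (hk : derSeries br k = ⊥) : LieAlgebra.IsSolvable (leftLie br L) := by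
  have key : ∀ k : ℕ, (LieAlgebra.derivedSeries K (leftLie br L) k).toSubmodule ≤
      (derSeries br k).map (leftMul br L) := by
    intro k
    induction k with
    | zero =>
      intro T _
      obtain ⟨a, rfl⟩ := leftMul_surj br L T
      exact ⟨a, Submodule.mem_top, rfl⟩
    | succ k ih =>
      rw [LieAlgebra.derivedSeries_def, LieAlgebra.derivedSeriesOfIdeal_succ,
        LieSubmodule.lieIdeal_oper_eq_linear_span', Submodule.span_le]
      rintro _ ⟨X, hX, Y, hY, rfl⟩
      obtain ⟨a, ha, rfl⟩ := ih hX
      obtain ⟨b, hb, rfl⟩ := ih hY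
      exact ⟨br a b, Submodule.subset_span ⟨a, ha, b, hb, rfl⟩, leftMul_lie br L a b⟩
  refine LieAlgebra.IsSolvable.mk (R := K) (k := k) ?_
  rw [← LieSubmodule.toSubmodule_inj, LieSubmodule.bot_toSubmodule, eq_bot_iff]
  have := key k
  rwa [hk, Submodule.map_bot] at this

end

theorem solvable_main [CharZero K] [IsAlgClosed K] {n : ℕ} (hn : 0 < n) (d : ℕ) :
    ∀ (A : Type u) [AddCommGroup A] [Module K A] [FiniteDimensional K A]
    (br : A →ₗ[K] A →ₗ[K] A) (_ : Leib br) (D : Module.End K A) (_ : Function.Bijective D)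
    (_ : HN br D n), finrank K A = d → ∃ k, derSeries br k = ⊥ := by
  induction d using Nat.strong_induction_on with
  | _ d IH =>
  intro A _ _ _ br L D hD H hd
  by_cases hp : bracketSpan br ⊤ ⊤ = ⊤
  · exact ⟨0, perfect_zero L hD hn H hp⟩
  have hanti : lcs br n ≤ lcs br 1 := antitone_nat_of_succ_le (lcs_succ_le br) hn
  have hne : lcs br n ≠ ⊤ := by
    intro h
    rw [h, top_le_iff] at hanti
    exact hp hanti
  have hB : ∀ a ∈ lcs br n, ∀ b ∈ lcs br n, br a b ∈ lcs br n := fun a _ b hb =>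
    lcs_succ_le br n (Submodule.subset_span ⟨a, Submodule.mem_top, b, hb, rfl⟩)
  have hDB := lcs_D br D n H.hOp
  have hinj : Function.Injective (D.restrict hDB) := by
    intro x y h
    exact Subtype.ext (hD.1 (congrArg (fun z : lcs br n => (z : A)) h))
  obtain ⟨k, hk⟩ := IH (finrank K (lcs br n)) (by rw [← hd]; exact Submodule.finrank_lt hne)
    (lcs br n) (brSub br _ hB) (fun a b c => Subtype.ext (L a b c)) (D.restrict hDB)
    ⟨hinj, LinearMap.injective_iff_surjective.mp hinj⟩
    (by
      intro l hl
      apply Subtype.ext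
      rw [dNorm_sub, ← H _ (by simpa using hl), ← norm_sub br _ hB]
      rfl) rfl
  refine ⟨n + k, ?_⟩
  rw [eq_bot_iff]
  have := der_sub br _ hB n (der_le_lcs br n) k
  rwa [hk, Submodule.map_bot] at this

theorem nilpotent_main [CharZero K] [IsAlgClosed K] {n : ℕ} (hn : 0 < n)
    {A : Type*} [AddCommGroup A] [Module K A] [FiniteDimensional K A]
    (br : A →ₗ[K] A →ₗ[K] A) (L : Leib br) (D : Module.End K A) (hD : Function.Bijective D)
    (H : HN br D n) : ∃ m, lcs br m = ⊥ := by
  obtain ⟨k, hk⟩ := solvable_main (K := K) hn _ A br L D hD H rfl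
  have hs := leftLie_solvable br L k hk
  obtain ⟨m, hm⟩ := IsArtinian.monotone_stabilizes (R := K) (M := A)
    ⟨fun i => OrderDual.toDual (lcs br i), monotone_nat_of_le_succ fun i => lcs_succ_le br i⟩
  have hst : lcs br m = lcs br (m + 1) := hm (m + 1) (Nat.le_succ m)
  refine ⟨m, ?_⟩
  by_contra hne
  let C : LieSubmodule K (leftLie br L) A :=
    { lcs br m with
      lie_mem := by
        rintro ⟨_, a, rfl⟩ b hb
        exact lcs_succ_le br m (Submodule.subset_span ⟨a, Submodule.mem_top, b, hb, rfl⟩) }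
  have hC : Nontrivial C := (Submodule.nontrivial_iff_ne_bot (p := lcs br m)).mpr hne
  have hfC : FiniteDimensional K C := inferInstanceAs (FiniteDimensional K (lcs br m))
  have hV : Nontrivial (C →ₗ[K] K) := inferInstanceAs (Nontrivial (Module.Dual K C))
  have hspan : Submodule.span K (leftMul br L '' {x : A | ∃ c, x ∈ D.maxGenEigenspace c}) = ⊤ := by
    rw [← Submodule.map_span, span_hom, Submodule.map_top, LinearMap.range_eq_top]
    exact leftMul_surj br L
  obtain ⟨f, hf0, hf⟩ := killed (K := K) (g := leftLie br L) (V := C →ₗ[K] K) _ hspan (by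
    rintro _ ⟨x, ⟨c, hx⟩, rfl⟩
    obtain ⟨j, hj⟩ := nilp_hom br D hD.1 n hn H.hOp c x hx
    refine ⟨j, ?_⟩
    have e1 : ∀ (j : ℕ) (y : C), (((LieModule.toEnd K (leftLie br L) C (leftMul br L x)) ^ j) y : A) =
        ((br x : Module.End K A) ^ j) (y : A) := by
      intro j
      induction j with
      | zero => intro y; rfl
      | succ j ih =>
        intro y
        rw [pow_succ, pow_succ, Module.End.mul_apply, Module.End.mul_apply, ih]
        rfl
    have e2 : ∀ (j : ℕ) (f : C →ₗ[K] K) (y : C),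
        ((LieModule.toEnd K (leftLie br L) (C →ₗ[K] K) (leftMul br L x)) ^ j) f y =
        (-1) ^ j * f (((LieModule.toEnd K (leftLie br L) C (leftMul br L x)) ^ j) y) := by
      intro j
      induction j with
      | zero => intro f y; simp
      | succ j ih =>
        intro f y
        rw [pow_succ, Module.End.mul_apply, ih, LieModule.toEnd_apply_apply,
          Module.Dual.lie_apply, pow_succ', pow_succ' (LieModule.toEnd K (leftLie br L) C (leftMul br L x)),
          Module.End.mul_apply, LieModule.toEnd_apply_apply]
        ring
    ext f y
    rw [e2]
    have : ((LieModule.toEnd K (leftLie br L) C (leftMul br L x)) ^ j) y = 0 := by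
      apply Subtype.ext
      rw [e1, hj]; rfl
    rw [this]; simp)
  apply hf0
  have hle : lcs br m ≤ (LinearMap.ker f).map (C.toSubmodule.subtype) := by
    conv_lhs => rw [hst]
    rw [lcs, bracketSpan, Submodule.span_le]
    rintro _ ⟨a, -, b, hb, rfl⟩
    let w : C := ⁅leftMul br L a, (⟨b, hb⟩ : C)⁆
    refine ⟨w, ?_, rfl⟩
    change f w = 0
    have := LinearMap.congr_fun (hf (leftMul br L a)) (⟨b, hb⟩ : C)
    rw [Module.Dual.lie_apply] at this
    exact neg_eq_zero.mp this
  ext ⟨y, hy⟩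
  obtain ⟨⟨z, hz⟩, hz1, rfl⟩ := hle hy
  exact hz1

theorem leftNormed_mem_lcs {A : Type*} [AddCommGroup A] [Module K A] (br : A →ₗ[K] A →ₗ[K] A)
    (m : ℕ) (l : List A) (hl : l.length = m + 1) : leftNormedProd br l ∈ lcs br m := by
  obtain ⟨l', z, rfl⟩ : ∃ l' z, l = l' ++ [z] := by
    have : l ≠ [] := by rintro rfl; simp at hl
    exact ⟨l.dropLast, l.getLast this, (List.dropLast_append_getLast this).symm⟩
  rw [norm_snoc]
  have : l'.length = m := by simpa using hl
  rw [← this]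
  exact mulList_mem_lcs br l' z

end Final
end LeibAux

/-- a finite-dimensional (left) Leibniz algebra over an algebraically
closed field of characteristic zero is nilpotent iff it admits an invertible Leibniz
derivation of order `s` for some `s ≥ 2`. -/
theorem leibniz_nilpotent_iff_invertible_leibniz_derivation
    {K A : Type*} [Field K] [IsAlgClosed K] [CharZero K]
    [AddCommGroup A] [Module K A] [FiniteDimensional K A]
    (br : A →ₗ[K] A →ₗ[K] A)
    (leibniz : ∀ a b c : A, br a (br b c) = br (br a b) c + br b (br a c)) :
    (∃ m : ℕ, lcs br m = ⊥) ↔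
      ∃ s : ℕ, 2 ≤ s ∧ ∃ D : A →ₗ[K] A, Function.Bijective D ∧
        ∀ x : Fin s → A,
          D (leftNormedProd br (List.ofFn x)) =
            ∑ j : Fin s,
              leftNormedProd br (List.ofFn (Function.update x j (D (x j)))) := by
  constructor
  · rintro ⟨m, hm⟩
    have hz : ∀ l : List A, l.length = m + 2 → leftNormedProd br l = 0 := by
      intro l hl
      have h1 := LeibAux.leftNormed_mem_lcs br (m + 1) l hl
      have h2 := LeibAux.lcs_succ_le br m h1
      rw [hm] at h2
      exact (Submodule.mem_bot K).mp h2
    refine ⟨m + 2, by omega, LinearMap.id, Function.bijective_id, ?_⟩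
    intro x
    rw [hz _ (by simp), map_zero]
    symm
    exact Finset.sum_eq_zero fun j _ => hz _ (by simp)
  · rintro ⟨s, hs, D, hD, h⟩
    obtain ⟨n, rfl⟩ : ∃ n, s = n + 1 := ⟨s - 1, by omega⟩
    refine LeibAux.nilpotent_main (n := n) (by omega) br leibniz D hD ?_
    intro l hl
    have h1 := h (fun i => l.get (i.cast hl.symm))
    rw [LeibAux.sum_eq_dNorm] at h1
    have h2 : List.ofFn (fun i : Fin (n + 1) => l.get (i.cast hl.symm)) = l := by
      apply List.ext_get
      · simp [hl]
      · intro i h3 h4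
        simp only [List.get_eq_getElem, List.getElem_ofFn, Fin.val_cast]
    rwa [h2] at h1
end

section
/- Let A be a finite-dimensional (left) Leibniz algebra over a field. For any a ∈ A, there exists b ∈ E_A(a) such that E_A(a) = E_A(b). -/
/-- The Engel subalgebra `E_A(a)`: the Fitting null component of the left
multiplication operator `L_a = br a`, i.e. `{x : A | ∃ k, (L_a)^k x = 0}`. -/
def engel {K A : Type*} [Field K] [AddCommGroup A] [Module K A]
    (br : A →ₗ[K] A →ₗ[K] A) (a : A) : Submodule K A :=
  ⨆ k : ℕ, LinearMap.ker ((br a) ^ k)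

/-- in a finite-dimensional (left) Leibniz algebra, for any `a` there
exists `b ∈ E_A(a)` with `E_A(a) = E_A(b)`. -/
theorem leibniz_engel_subalgebra_generator_inside
    {K A : Type*} [Field K]
    [AddCommGroup A] [Module K A] [FiniteDimensional K A]
    (br : A →ₗ[K] A →ₗ[K] A)
    (leibniz : ∀ a b c : A, br a (br b c) = br (br a b) c + br b (br a c))
    (a : A) :
    ∃ b ∈ engel br a, engel br a = engel br b := by
  have hself : ∀ c, br (br a a) c = 0 := fun c => by
    have h := leibniz a a c
    exact right_eq_add.mp h
  have hinv : ∀ x, br x = 0 → br (br a x) = 0 := fun x hx => by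
    ext c
    have h := leibniz a x c
    simpa [hx] using h.symm
  let f : ℕ →o (Submodule K A)ᵒᵈ :=
    { toFun := fun n => OrderDual.toDual ((LinearMap.ker br).map ((br a) ^ n))
      monotone' := by
        refine monotone_nat_of_le_succ fun n => ?_
        change (LinearMap.ker br).map ((br a) ^ (n + 1)) ≤ (LinearMap.ker br).map ((br a) ^ n)
        rintro _ ⟨x, hx, rfl⟩
        refine ⟨br a x, hinv x hx, ?_⟩
        rw [pow_succ]
        rfl }
  obtain ⟨n, hn⟩ := IsArtinian.monotone_stabilizes f
  have h1 : (LinearMap.ker br).map ((br a) ^ n) = (LinearMap.ker br).map ((br a) ^ (n + 1)) :=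
    hn (n + 1) (Nat.le_succ n)
  have h2 : ((br a) ^ (n + 1)) a ∈ (LinearMap.ker br).map ((br a) ^ (n + 1)) := by
    rw [← h1]
    refine ⟨br a a, LinearMap.ext hself, ?_⟩
    rw [pow_succ]
    rfl
  obtain ⟨z, hz, hza⟩ := h2
  have hz0 : br z = 0 := hz
  refine ⟨a - z, ?_, ?_⟩
  · refine Submodule.mem_iSup_of_mem (n + 1) ?_
    rw [LinearMap.mem_ker, map_sub, hza, sub_self]
  · simp only [engel, map_sub, hz0, sub_zero]
end

section
/- Let A be a finite-dimensional (left) Leibniz algebra over a field, let M be a subalgebra of A and let a ∈ A. Suppose the Engel subalgebra E_A(a) is contained in M. Then M equals its own right normalizer: M = N^r_A(M). -/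
/-- Fitting-type lemma: if `V` is `f`-invariant and `f x ∈ V`, then `x` is congruent modulo
`V` to an element of the Fitting null component of `f`. -/
theorem fitting_aux {K A : Type*} [Field K] [AddCommGroup A] [Module K A]
    [FiniteDimensional K A] (f : A →ₗ[K] A) (V : Submodule K A)
    (hV : ∀ v ∈ V, f v ∈ V) (x : A) (hx : f x ∈ V) :
    ∃ w ∈ V, x - w ∈ ⨆ k : ℕ, LinearMap.ker (f ^ k) := by
  have anti : Antitone (fun k : ℕ => V.map (f ^ k)) := by
    refine antitone_nat_of_succ_le fun n => ?_
    rintro _ ⟨v, hv, rfl⟩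
    exact ⟨f v, hV v hv, by rw [pow_succ]; rfl⟩
  obtain ⟨n, hn⟩ := IsArtinian.monotone_stabilizes
    (⟨fun k => OrderDual.toDual (V.map (f ^ k)), fun i j h => anti h⟩ :
      ℕ →o (Submodule K A)ᵒᵈ)
  have h1 : V.map (f ^ n) = V.map (f ^ (n + 1)) := hn (n + 1) (Nat.le_succ n)
  have h2 : (f ^ (n + 1)) x ∈ V.map (f ^ (n + 1)) := by
    rw [← h1]
    exact ⟨f x, hx, by rw [pow_succ]; rfl⟩
  obtain ⟨w, hw, hwx⟩ := h2
  refine ⟨w, hw, Submodule.mem_iSup_of_mem (n + 1) ?_⟩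
  rw [LinearMap.mem_ker, map_sub, hwx, sub_self]

/-- a subalgebra `M` of a finite-dimensional (left) Leibniz algebra
containing an Engel subalgebra `E_A(a)` equals its own right normalizer. -/
theorem leibniz_engel_subalgebra_self_right_normalizing
    {K A : Type*} [Field K]
    [AddCommGroup A] [Module K A] [FiniteDimensional K A]
    (br : A →ₗ[K] A →ₗ[K] A)
    (leibniz : ∀ a b c : A, br a (br b c) = br (br a b) c + br b (br a c))
    (M : Submodule K A)
    (hM : ∀ x ∈ M, ∀ y ∈ M, br x y ∈ M)
    (a : A) (hE : engel br a ≤ M) :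
    ∀ x : A, x ∈ M ↔ ∀ m ∈ M, br m x ∈ M := by
  intro x
  refine ⟨fun hx m hm => hM m hm x hx, fun h => ?_⟩
  obtain ⟨w, hw, hb⟩ := fitting_aux (br a) (LinearMap.ker br)
    (fun v hv => by
      rw [LinearMap.mem_ker] at hv ⊢
      ext c
      have := leibniz a v c
      simpa [hv] using this.symm) a
    (by
      rw [LinearMap.mem_ker]
      ext c
      simpa using leibniz a a c)
  have hbM : a - w ∈ M := hE hb
  have hba : br (a - w) = br a := by
    rw [map_sub, LinearMap.mem_ker.mp hw, sub_zero]
  obtain ⟨m, hm, hxm⟩ := fitting_aux (br a) M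
    (fun v hv => hba ▸ hM _ hbM v hv) x (hba ▸ h _ hbM)
  have := M.add_mem (hE hxm) hm
  simpa using this
end
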